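/- arXiv:2012.09317 — 3 statements merged into one kernel-verified Lean document; each statement's English description precedes it below -/
import Mathlib

section
/- Fix α∈(0,1), λ>0, μ>0, ξ≥0 and i∈ℕ, and set β(x) = x^{−1} e^{−(λ+μ+ξ)x} for x>0. Define, for t>0, P^α_0(t) = (1/μ) ∫_0^∞ f_α(y,t) β(y) ∑_{n=i}^∞ (n+1) I_{n+1}(2√(λμ)·y) / (√(λ/μ))^{n+1} dy + (ξ/μ) ∫_0^∞ f_α(y,t) [∫_0^y β(u) ∑_{n=1}^∞ n·I_n(2√(λμ)·u)/(√(λ/μ))^n du] dy, and for n≥1, P^α_n(t) = (ξ(√(λ/μ))^{n+1}/√(λμ)) ∫_0^∞ f_α(y,t) [∫_0^y β(u) ∑_{k=0}^∞ (n+k+1) I_{n+k+1}(2√(λμ)·u)/(√(λ/μ))^{k+1} du] dy + ∫_0^∞ e^{−(λ+μ+ξ)y} f_α(y,t) ∑_{m=0}^∞ [I_{m+n+i+1}(2√(λμ)·y)/(√(λ/μ))^{m−n+i+1} − I_{m+n+i+2}(2√(λμ)·y)/(√(λ/μ))^{m−n+i}] dy + ∫_0^∞ (√(λ/μ))^{n−i}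 I_{n−i}(2√(λμ)·y) e^{−(λ+μ+ξ)y} f_α(y,t) dy, with P^α_n(0) = δ_{i,n}. Then the family (P^α_n)_{n≥0} solves the fractional Kolmogorov forward equations of order α of the M/M/1 queue with catastrophes. -/
open MeasureTheory Real

/-- Caputo fractional derivative of order `α` of `f` at `t`. -/
noncomputable def caputoD (α : ℝ) (f : ℝ → ℝ) (t : ℝ) : ℝ :=
  (1 / Real.Gamma (1 - α)) * ∫ u in (0:ℝ)..t, (t - u) ^ (-α) * deriv f u

/-- Wright function `M_α(x) = ∑ (-x)^r / (r! Γ(1 - α(1+r)))`. -/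
noncomputable def wrightM (α x : ℝ) : ℝ :=
  ∑' r : ℕ, (-x) ^ r / (r.factorial * Real.Gamma (1 - α * (1 + r)))

/-- Density `f_α(y,t) = t^(-α) M_α(y t^(-α))` of the inverse α-stable subordinator. -/
noncomputable def subDensity (α y t : ℝ) : ℝ := t ^ (-α) * wrightM α (y * t ^ (-α))

/-- Modified Bessel function of the first kind of integer order
`I_ν(x) = ∑_m (1/(m! Γ(m+ν+1))) (x/2)^(2m+ν)`. -/
noncomputable def besselI (ν : ℤ) (x : ℝ) : ℝ :=
  ∑' m : ℕ, (1 / (m.factorial * Real.Gamma ((m : ℝ) + ν + 1))) * (x / 2) ^ (2 * (m : ℤ) + ν)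


/-- the contour point -/
noncomputable def sg (w : ℂ) (γ s : ℝ) : ℂ := (γ : ℂ) + (s : ℂ) * w

lemma sg_re (w : ℂ) (γ s : ℝ) : (sg w γ s).re = γ + s * w.re := by simp [sg]
lemma sg_im (w : ℂ) (γ s : ℝ) : (sg w γ s).im = s * w.im := by simp [sg]

lemma sg_slit {w : ℂ} (hw : 0 < w.im) {γ s : ℝ} (hγ : 0 < γ) (hs : 0 ≤ s) :
    sg w γ s ∈ Complex.slitPlane := by
  rw [Complex.mem_slitPlane_iff, sg_re, sg_im]
  rcases hs.eq_or_lt with h | h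
  · left; rw [← h]; simpa using hγ
  · right; positivity

lemma sg_slit' {w : ℂ} (hw : 0 < w.im) {γ s : ℝ} (hs : 0 < s) :
    sg w γ s ∈ Complex.slitPlane := by
  rw [Complex.mem_slitPlane_iff, sg_re, sg_im]
  right; positivity

lemma sg_ne {w : ℂ} (hw : 0 < w.im) {γ s : ℝ} (hγ : 0 < γ) (hs : 0 ≤ s) :
    sg w γ s ≠ 0 := Complex.slitPlane_ne_zero (sg_slit hw hγ hs)

lemma sg_low1 {w : ℂ} (hw1 : ‖w‖ = 1) (hw : 0 < w.im) {γ s : ℝ} (hγ : 0 ≤ γ) :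
    γ * w.im ≤ ‖sg w γ s‖ := by
  have h1 : ‖sg w γ s‖ = ‖sg w γ s * (starRingEnd ℂ) w‖ := by
    rw [norm_mul, RCLike.norm_conj, hw1, mul_one]
  have h2 : (sg w γ s * (starRingEnd ℂ) w).im = -(γ * w.im) := by
    simp [sg_re, sg_im, Complex.mul_im]; ring
  have h3 := Complex.abs_im_le_norm (sg w γ s * (starRingEnd ℂ) w)
  rw [h2, abs_neg, abs_of_nonneg (by positivity)] at h3
  rw [h1]; exact h3

lemma sg_low2 {w : ℂ} (hw : 0 < w.im) {γ s : ℝ} (hs : 0 ≤ s) :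
    s * w.im ≤ ‖sg w γ s‖ := by
  have h3 := Complex.abs_im_le_norm (sg w γ s)
  rwa [sg_im, abs_of_nonneg (by positivity)] at h3

lemma sg_up {w : ℂ} (hw1 : ‖w‖ = 1) {γ s : ℝ} (hγ : 0 ≤ γ) (hs : 0 ≤ s) :
    ‖sg w γ s‖ ≤ γ + s := by
  refine (norm_add_le _ _).trans ?_
  rw [norm_mul, hw1, Complex.norm_real, Complex.norm_real, Real.norm_of_nonneg hγ,
    Real.norm_of_nonneg hs, mul_one]

lemma sg_cont (w : ℂ) (γ : ℝ) : Continuous (fun s => sg w γ s) := by unfold sg; fun_prop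

lemma sg_hasDeriv (w : ℂ) (γ s : ℝ) : HasDerivAt (fun s => sg w γ s) w s := by
  unfold sg
  have h := ((Complex.ofRealCLM.hasDerivAt (x := s)).mul_const w).const_add (γ : ℂ)
  simpa using h

lemma sg_hasDeriv_g (w : ℂ) (γ s : ℝ) : HasDerivAt (fun γ => sg w γ s) 1 γ := by
  unfold sg
  have h := ((Complex.ofRealCLM.hasDerivAt (x := γ))).add_const ((s : ℂ) * w)
  simpa using h

lemma norm_exp_sg (w : ℂ) (γ s : ℝ) : ‖Complex.exp (sg w γ s)‖ = rexp (γ + s * w.re) := by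
  rw [Complex.norm_exp, sg_re]

/-- argument bound -/
lemma sg_arg {w : ℂ} (hw1 : ‖w‖ = 1) (hwr : w.re < 0) (hw : 0 < w.im) {γ s : ℝ} (hγ : 0 < γ)
    (hs : 0 ≤ s) : 0 ≤ (sg w γ s).arg ∧ (sg w γ s).arg ≤ w.arg := by
  have hn : 0 < ‖sg w γ s‖ := norm_pos_iff.mpr (sg_ne hw hγ hs)
  have h0 : 0 ≤ (sg w γ s).arg := by
    rw [Complex.arg_nonneg_iff, sg_im]; positivity
  refine ⟨h0, ?_⟩
  by_contra hlt
  push Not at hlt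
  have hw0 : w ≠ 0 := by intro h; simp [h] at hw1
  have hwa : 0 ≤ w.arg := by rw [Complex.arg_nonneg_iff]; exact hw.le
  have hc := Real.strictAntiOn_cos ⟨hwa, Complex.arg_le_pi _⟩ ⟨h0, Complex.arg_le_pi _⟩ hlt
  rw [Complex.cos_arg hw0, Complex.cos_arg (sg_ne hw hγ hs), hw1, div_one, sg_re,
    div_lt_iff₀ hn] at hc
  have h4 : s - γ ≤ ‖sg w γ s‖ := by
    have : ‖(s : ℂ) * w‖ ≤ ‖sg w γ s‖ + ‖(γ : ℂ)‖ := by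
      have := norm_sub_le (sg w γ s) (γ : ℂ)
      simpa [sg] using this
    rw [norm_mul, hw1, Complex.norm_real, Complex.norm_real, Real.norm_of_nonneg hγ.le,
      Real.norm_of_nonneg hs, mul_one] at this
    linarith
  have h5 : -1 ≤ w.re := by
    have := Complex.abs_re_le_norm w
    rw [hw1] at this
    exact (abs_le.mp this).1
  nlinarith

/-- growth bound -/
lemma growth (α : ℝ) (hα : α ∈ Set.Ioo (0:ℝ) 1) (x p m δ : ℝ) (hm : 0 < m) (hδ : 0 < δ) :
    ∃ C : ℝ, 0 ≤ C ∧ ∀ N, m ≤ N → rexp (x * N ^ α) * N ^ p ≤ C * rexp (δ * N) := by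
  have e1 : ∀ᶠ N : ℝ in Filter.atTop, x * N ^ α ≤ δ / 2 * N := by
    have h := (tendsto_rpow_neg_atTop (y := 1 - α) (by linarith [hα.2])).const_mul x
    rw [mul_zero] at h
    filter_upwards [h.eventually (eventually_le_nhds (show (0:ℝ) < δ / 2 by positivity)),
      Filter.eventually_gt_atTop 0] with N hN h0
    have h3 : N ^ α = N ^ (-(1 - α)) * N := by
      rw [← Real.rpow_add_one h0.ne']; ring_nf
    rw [h3, ← mul_assoc]
    gcongr
  have e2 : ∀ᶠ N : ℝ in Filter.atTop, N ^ p ≤ rexp (δ / 2 * N) := by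
    have h := (isLittleO_rpow_exp_pos_mul_atTop p (show 0 < δ / 2 by positivity)).bound
      (show (0:ℝ) < 1 by norm_num)
    filter_upwards [h] with N hN
    rw [one_mul, Real.norm_of_nonneg (Real.exp_pos _).le] at hN
    exact (le_abs_self _).trans hN
  obtain ⟨R, hR⟩ := Filter.eventually_atTop.mp (e1.and e2)
  have hc : ContinuousOn (fun N : ℝ => rexp (x * N ^ α) * N ^ p) (Set.Icc m R) := by
    have h1 : ∀ q : ℝ, ContinuousOn (fun N : ℝ => N ^ q) (Set.Icc m R) := fun q N hN =>
      (Real.continuousAt_rpow_const _ _ (Or.inl (by have := hN.1; linarith))).continuousWithinAt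
    exact ((continuousOn_const.mul (h1 α)).rexp).mul (h1 p)
  obtain ⟨C, hC⟩ := isCompact_Icc.exists_bound_of_continuousOn hc
  refine ⟨max 1 C, by positivity, fun N hN => ?_⟩
  by_cases h : R ≤ N
  · obtain ⟨h1, h2⟩ := hR N h
    have h0 : 0 < N := by linarith
    calc rexp (x * N ^ α) * N ^ p ≤ rexp (δ / 2 * N) * rexp (δ / 2 * N) := by gcongr
      _ = rexp (δ * N) := by rw [← Real.exp_add]; ring_nf
      _ ≤ _ := le_mul_of_one_le_left (Real.exp_pos _).le (le_max_left _ _)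
  · push Not at h
    have h1 := hC N ⟨hN, h.le⟩
    have h2 : C ≤ max 1 C := le_max_right _ _
    have h3 : 1 ≤ rexp (δ * N) := Real.one_le_exp (by nlinarith)
    have h4 : (1:ℝ) ≤ max 1 C := le_max_left _ _
    calc _ ≤ C := (le_abs_self _).trans h1
      _ ≤ max 1 C := h2
      _ ≤ _ := le_mul_of_one_le_right (by linarith) h3

lemma contOn_rpow {w : ℂ} (hw : 0 < w.im) {γ : ℝ} (hγ : 0 < γ) (p : ℝ) :
    ContinuousOn (fun s => ‖sg w γ s‖ ^ p) (Set.Ioi 0) := fun s hs =>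
  ((sg_cont w γ).norm.continuousAt.rpow_const
    (Or.inl (norm_ne_zero_iff.mpr (sg_ne hw hγ (le_of_lt hs))))).continuousWithinAt

lemma contOn_cpow {w : ℂ} (hw : 0 < w.im) (γ : ℝ) (p : ℂ) :
    ContinuousOn (fun s => (sg w γ s) ^ p) (Set.Ioi 0) := fun s hs =>
  ((sg_cont w γ).continuousAt.cpow continuousAt_const (sg_slit' hw hs)).continuousWithinAt

/-- basic integrability -/
lemma int_G (α : ℝ) (hα : α ∈ Set.Ioo (0:ℝ) 1) {w : ℂ} (hw1 : ‖w‖ = 1) (hwr : w.re < 0)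
    (hw : 0 < w.im) {γ : ℝ} (hγ : 0 < γ) (x p : ℝ) :
    IntegrableOn (fun s => rexp (x * ‖sg w γ s‖ ^ α) * ‖sg w γ s‖ ^ p * rexp (γ + s * w.re))
      (Set.Ioi 0) := by
  obtain ⟨C, hC0, hC⟩ := growth α hα x p (γ * w.im) (-w.re / 2) (by positivity) (by linarith)
  have hI : IntegrableOn (fun s : ℝ => C * rexp (-w.re / 2 * γ + γ) * rexp (-(-w.re / 2) * s))
      (Set.Ioi 0) := (exp_neg_integrableOn_Ioi 0 (by linarith)).const_mul _
  refine hI.mono' ?_ ?_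
  · refine ContinuousOn.aestronglyMeasurable ?_ measurableSet_Ioi
    have := contOn_rpow hw hγ
    exact (((continuousOn_const.mul (this α)).rexp).mul (this p)).mul (by fun_prop)
  · refine (ae_restrict_iff' measurableSet_Ioi).mpr (Filter.Eventually.of_forall fun s hs => ?_)
    have hs' : 0 ≤ s := le_of_lt hs
    rw [Real.norm_of_nonneg (by positivity)]
    have h1 := hC _ (sg_low1 (s := s) hw1 hw hγ.le)
    have h2 := sg_up hw1 hγ.le hs'
    calc _ ≤ C * rexp (-w.re / 2 * ‖sg w γ s‖) * rexp (γ + s * w.re) := by gcongr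
      _ ≤ C * rexp (-w.re / 2 * (γ + s)) * rexp (γ + s * w.re) := by
        gcongr; linarith
      _ = _ := by
        rw [mul_assoc, mul_assoc, ← Real.exp_add, ← Real.exp_add]; ring_nf


lemma gInt {a : ℝ} (ha : 0 < a) {r : ℝ} (hr : 0 < r) :
    IntegrableOn (fun s : ℝ => s ^ (a - 1) * rexp (-r * s)) (Set.Ioi 0) := by
  have := integrableOn_rpow_mul_exp_neg_mul_rpow (p := 1) (s := a - 1) (b := r) (by linarith)
    one_pos hr
  simpa using this

lemma gMeas (a : ℝ) (z : ℂ) : AEStronglyMeasurable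
    (fun s : ℝ => ((s ^ (a - 1) : ℝ) : ℂ) * Complex.exp (-z * s))
    (volume.restrict (Set.Ioi 0)) := by
  refine ContinuousOn.aestronglyMeasurable ?_ measurableSet_Ioi
  have h1 : ContinuousOn (fun s : ℝ => ((s ^ (a - 1) : ℝ) : ℂ)) (Set.Ioi 0) := by
    refine Complex.continuous_ofReal.comp_continuousOn fun s hs => ?_
    exact (Real.continuousAt_rpow_const _ _ (Or.inl (ne_of_gt hs))).continuousWithinAt
  exact h1.mul (by fun_prop)

lemma gNorm (a : ℝ) (z : ℂ) {s : ℝ} (hs : 0 < s) :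
    ‖((s ^ (a - 1) : ℝ) : ℂ) * Complex.exp (-z * s)‖ = s ^ (a - 1) * rexp (-z.re * s) := by
  rw [norm_mul, Complex.norm_real, Complex.norm_exp, Real.norm_of_nonneg (by positivity)]
  simp

lemma gIntC {a : ℝ} (ha : 0 < a) {z : ℂ} (hz : 0 < z.re) :
    IntegrableOn (fun s : ℝ => ((s ^ (a - 1) : ℝ) : ℂ) * Complex.exp (-z * s)) (Set.Ioi 0) := by
  refine (gInt ha hz).mono' (gMeas a z) ?_
  refine (ae_restrict_iff' measurableSet_Ioi).mpr (Filter.Eventually.of_forall fun s hs => ?_)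
  exact (gNorm a z hs).le

lemma gIBP {a : ℝ} (ha : 0 < a) {z : ℂ} (hz : 0 < z.re) :
    z * ∫ s in Set.Ioi (0:ℝ), ((s ^ (a + 1 - 1) : ℝ) : ℂ) * Complex.exp (-z * s)
      = a * ∫ s in Set.Ioi (0:ℝ), ((s ^ (a - 1) : ℝ) : ℂ) * Complex.exp (-z * s) := by
  have h1 := (gIntC ha hz).const_mul (a : ℂ)
  have h2 := (gIntC (a := a + 1) (by linarith) hz).const_mul z
  have key := integral_Ioi_of_hasDerivAt_of_tendsto (a := (0:ℝ)) (m := (0:ℂ))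
    (f := fun s : ℝ => ((s ^ a : ℝ) : ℂ) * Complex.exp (-z * s))
    (f' := fun s => a * (((s ^ (a - 1) : ℝ) : ℂ) * Complex.exp (-z * s))
      - z * (((s ^ (a + 1 - 1) : ℝ) : ℂ) * Complex.exp (-z * s))) ?_ ?_ (h1.sub h2) ?_
  · rw [integral_sub h1 h2, integral_const_mul, integral_const_mul] at key
    simp [Real.zero_rpow ha.ne'] at key
    have := sub_eq_zero.mp key
    simpa using this.symm
  · refine Continuous.continuousWithinAt ?_
    have : Continuous (fun s : ℝ => s ^ a) := Real.continuous_rpow_const ha.le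
    fun_prop
  · intro s hs
    have d1 := (Real.hasDerivAt_rpow_const (x := s) (p := a) (Or.inl (ne_of_gt hs))).ofReal_comp
    have d2 : HasDerivAt (fun s : ℝ => Complex.exp (-z * s)) (Complex.exp (-z * s) * (-z * 1)) s :=
      ((Complex.ofRealCLM.hasDerivAt (x := s)).const_mul (-z)).cexp
    have := d1.mul d2
    refine HasDerivAt.congr_deriv this ?_
    push_cast
    simp only [add_sub_cancel_right]
    ring
  · rw [tendsto_zero_iff_norm_tendsto_zero]
    have h := tendsto_rpow_mul_exp_neg_mul_atTop_nhds_zero a z.re hz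
    refine h.congr' ?_
    filter_upwards [Filter.eventually_gt_atTop 0] with s hs
    have := gNorm (a + 1) z hs
    simp only [add_sub_cancel_right] at this
    rw [this]

lemma gDeriv {a : ℝ} (ha : 0 < a) {z : ℂ} (hz : 0 < z.re) :
    HasDerivAt (fun z : ℂ => ∫ s in Set.Ioi (0:ℝ), ((s ^ (a - 1) : ℝ) : ℂ) * Complex.exp (-z * s))
      (-∫ s in Set.Ioi (0:ℝ), ((s ^ (a + 1 - 1) : ℝ) : ℂ) * Complex.exp (-z * s)) z := by
  have hopen : IsOpen {u : ℂ | z.re / 2 < u.re} := isOpen_lt continuous_const Complex.continuous_re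
  have := (hasDerivAt_integral_of_dominated_loc_of_deriv_le (𝕜 := ℂ)
    (μ := volume.restrict (Set.Ioi (0:ℝ))) (x₀ := z) (s := {u : ℂ | z.re / 2 < u.re})
    (F := fun z s => ((s ^ (a - 1) : ℝ) : ℂ) * Complex.exp (-z * s))
    (F' := fun z s => -(((s ^ (a + 1 - 1) : ℝ) : ℂ) * Complex.exp (-z * s)))
    (bound := fun s => s ^ (a + 1 - 1) * rexp (-(z.re / 2) * s))
    (hopen.mem_nhds (by simp; linarith)) (Filter.Eventually.of_forall fun u => gMeas a u)
    (gIntC ha hz) (gMeas (a + 1) z).neg ?_ (gInt (by linarith) (by linarith)) ?_).2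
  · rwa [integral_neg] at this
  · refine (ae_restrict_iff' measurableSet_Ioi).mpr (Filter.Eventually.of_forall fun s hs u hu => ?_)
    have hs' : 0 < s := hs
    rw [norm_neg, gNorm _ _ hs]
    have : z.re / 2 < u.re := hu
    gcongr
  · refine (ae_restrict_iff' measurableSet_Ioi).mpr (Filter.Eventually.of_forall fun s hs u hu => ?_)
    have hs' : 0 < s := hs
    have d2 : HasDerivAt (fun z : ℂ => Complex.exp (-z * s)) (Complex.exp (-u * s) * (-1 * s)) u :=
      ((hasDerivAt_id u).neg.mul_const (s : ℂ)).cexp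
    have := d2.const_mul ((s ^ (a - 1) : ℝ) : ℂ)
    refine HasDerivAt.congr_deriv this ?_
    rw [show a + 1 - 1 = (a - 1) + 1 by ring, Real.rpow_add_one hs'.ne']
    push_cast
    ring

lemma gammaC {a : ℝ} (ha : 0 < a) {z : ℂ} (hz : 0 < z.re) :
    ∫ s in Set.Ioi (0:ℝ), ((s ^ (a - 1) : ℝ) : ℂ) * Complex.exp (-z * s)
      = Real.Gamma a * z ^ (-(a : ℂ)) := by
  have hopen : IsOpen {u : ℂ | 0 < u.re} := isOpen_lt continuous_const Complex.continuous_re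
  set J : ℂ → ℂ := fun z => ∫ s in Set.Ioi (0:ℝ), ((s ^ (a - 1) : ℝ) : ℂ) * Complex.exp (-z * s)
    with hJ
  have hd : ∀ u : ℂ, 0 < u.re → HasDerivAt (fun u => u ^ (a : ℂ) * J u) 0 u := by
    intro u hu
    have hu0 : u ≠ 0 := by rintro rfl; simp at hu
    have d1 := (hasDerivAt_id u).cpow_const (c := (a : ℂ)) (Or.inl hu)
    have := d1.mul (gDeriv ha hu)
    refine HasDerivAt.congr_deriv this ?_
    have h := gIBP ha hu
    have e : u ^ (a : ℂ) = u ^ ((a : ℂ) - 1) * u := by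
      rw [Complex.cpow_sub _ _ hu0, Complex.cpow_one, div_mul_cancel₀ _ hu0]
    simp only [id, mul_one]
    rw [e, mul_neg, mul_assoc _ u, h]
    ring
  have hconst := hopen.is_const_of_deriv_eq_zero (𝕜 := ℂ) (f := fun u => u ^ (a : ℂ) * J u)
    (convex_halfSpace_re_gt 0).isPreconnected
    (fun u hu => (hd u hu).differentiableAt.differentiableWithinAt)
    (fun u hu => (hd u hu).deriv) (x := z) (y := 1) hz (by simp)
  have h1 : J 1 = Real.Gamma a := by
    rw [Real.Gamma_eq_integral ha, hJ]
    simp only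
    rw [← integral_complex_ofReal]
    congr 1; ext s; push_cast; ring_nf
  simp only [Complex.one_cpow, one_mul, h1] at hconst
  have hz0 : z ≠ 0 := by rintro rfl; simp at hz
  rw [← hconst, Complex.cpow_neg, mul_comm, ← mul_assoc,
    inv_mul_cancel₀ (by simp [Complex.cpow_eq_zero_iff, hz0]), one_mul]


/-- contour integral -/
noncomputable def Hp (w : ℂ) (γ p : ℝ) : ℂ :=
  ∫ s in Set.Ioi (0:ℝ), Complex.exp (sg w γ s) * (sg w γ s) ^ (p : ℂ) * w

lemma hMeas {w : ℂ} (hw : 0 < w.im) (γ p : ℝ) : AEStronglyMeasurable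
    (fun s => Complex.exp (sg w γ s) * (sg w γ s) ^ (p : ℂ) * w) (volume.restrict (Set.Ioi 0)) := by
  refine ContinuousOn.aestronglyMeasurable ?_ measurableSet_Ioi
  exact ((sg_cont w γ).cexp.continuousOn.mul (contOn_cpow hw γ p)).mul continuousOn_const

lemma hNorm {w : ℂ} (hw1 : ‖w‖ = 1) (γ s p : ℝ) :
    ‖Complex.exp (sg w γ s) * (sg w γ s) ^ (p : ℂ) * w‖
      = ‖sg w γ s‖ ^ p * rexp (γ + s * w.re) := by
  rw [norm_mul, norm_mul, hw1, norm_exp_sg, Complex.norm_cpow_real]; ring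

lemma hInt {w : ℂ} (hw1 : ‖w‖ = 1) (hwr : w.re < 0) (hw : 0 < w.im) {γ : ℝ} (hγ : 0 < γ) (p : ℝ) :
    IntegrableOn (fun s => Complex.exp (sg w γ s) * (sg w γ s) ^ (p : ℂ) * w) (Set.Ioi 0) := by
  have := int_G (1/2) (by norm_num) hw1 hwr hw hγ 0 p
  simp only [zero_mul, Real.exp_zero, one_mul] at this
  exact this.mono' (hMeas hw γ p) (Filter.Eventually.of_forall fun s => (hNorm hw1 γ s p).le)

lemma hIBP {w : ℂ} (hw1 : ‖w‖ = 1) (hwr : w.re < 0) (hw : 0 < w.im) {γ : ℝ} (hγ : 0 < γ) (p : ℝ) :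
    Hp w γ p + p * Hp w γ (p - 1) = -((rexp γ * γ ^ p : ℝ) : ℂ) := by
  have h1 := hInt hw1 hwr hw hγ p
  have h2 := (hInt hw1 hwr hw hγ (p - 1)).const_mul (p : ℂ)
  have hd : ∀ s ∈ Set.Ici (0:ℝ),
      HasDerivAt (fun s => Complex.exp (sg w γ s) * (sg w γ s) ^ (p : ℂ))
      (Complex.exp (sg w γ s) * (sg w γ s) ^ (p : ℂ) * w
        + p * (Complex.exp (sg w γ s) * (sg w γ s) ^ ((p - 1 : ℝ) : ℂ) * w)) s := by
    intro s hs
    have d0 := sg_hasDeriv w γ s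
    have := d0.cexp.mul ((hasDerivAt_id (sg w γ s)).cpow_const (c := (p : ℂ))
      (sg_slit hw hγ hs) |>.comp s d0)
    refine HasDerivAt.congr_deriv this ?_
    simp only [id, Function.comp]
    push_cast
    ring
  have hi : IntegrableOn (fun s => Complex.exp (sg w γ s) * (sg w γ s) ^ (p : ℂ)) (Set.Ioi 0) := by
    have hw0 : w ≠ 0 := by intro h; simp [h] at hw1
    have := h1.mul_const w⁻¹
    refine this.congr (Filter.Eventually.of_forall fun s => ?_)
    simp only
    field_simp
  have key := integral_Ioi_of_hasDerivAt_of_tendsto' hd (h1.add h2)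
    (tendsto_zero_of_hasDerivAt_of_integrableOn_Ioi
      (fun s hs => hd s (Set.mem_Ici.mpr (le_of_lt hs))) (h1.add h2) hi)
  rw [integral_add h1 h2, integral_const_mul] at key
  unfold Hp
  rw [key]
  simp [sg, Complex.ofReal_cpow hγ.le]

lemma hDeriv {w : ℂ} (hw1 : ‖w‖ = 1) (hwr : w.re < 0) (hw : 0 < w.im) {γ : ℝ} (hγ : 0 < γ)
    {p : ℝ} (hp : p < 0) :
    HasDerivAt (fun γ => Hp w γ p) (-((rexp γ * γ ^ p : ℝ) : ℂ)) γ := by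
  rw [← hIBP hw1 hwr hw hγ p]
  set K := ((γ / 2 * w.im) ^ p + |p| * (γ / 2 * w.im) ^ (p - 1)) with hK
  have := (hasDerivAt_integral_of_dominated_loc_of_deriv_le (𝕜 := ℝ)
    (μ := volume.restrict (Set.Ioi (0:ℝ))) (x₀ := γ) (s := Set.Ioo (γ / 2) (2 * γ))
    (F := fun γ s => Complex.exp (sg w γ s) * (sg w γ s) ^ (p : ℂ) * w)
    (F' := fun γ s => Complex.exp (sg w γ s) * (sg w γ s) ^ (p : ℂ) * w
      + p * (Complex.exp (sg w γ s) * (sg w γ s) ^ ((p - 1 : ℝ) : ℂ) * w))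
    (bound := fun s => K * rexp (2 * γ) * rexp (-(-w.re) * s))
    (isOpen_Ioo.mem_nhds ⟨by linarith, by linarith⟩)
    (Filter.Eventually.of_forall fun u => hMeas hw u p)
    (hInt hw1 hwr hw hγ p) ((hMeas hw γ p).add ((hMeas hw γ (p - 1)).const_mul _)) ?_ ?_ ?_).2
  · rw [integral_add (hInt hw1 hwr hw hγ p) ((hInt hw1 hwr hw hγ (p - 1)).const_mul (p : ℂ)),
      integral_const_mul] at this
    exact this
  · refine (ae_restrict_iff' measurableSet_Ioi).mpr (Filter.Eventually.of_forall fun s hs u hu => ?_)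
    have hs' : 0 < s := hs
    have hu0 : 0 < u := by linarith [hu.1]
    have hlow : γ / 2 * w.im ≤ ‖sg w u s‖ :=
      le_trans (by gcongr; exact hu.1.le) (sg_low1 hw1 hw hu0.le)
    have hpos : 0 < γ / 2 * w.im := by positivity
    have e1 : ‖sg w u s‖ ^ p ≤ (γ / 2 * w.im) ^ p :=
      Real.rpow_le_rpow_of_nonpos hpos hlow hp.le
    have e2 : ‖sg w u s‖ ^ (p - 1) ≤ (γ / 2 * w.im) ^ (p - 1) :=
      Real.rpow_le_rpow_of_nonpos hpos hlow (by linarith)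
    calc _ ≤ ‖sg w u s‖ ^ p * rexp (u + s * w.re)
          + |p| * (‖sg w u s‖ ^ (p - 1) * rexp (u + s * w.re)) := by
            refine (norm_add_le _ _).trans ?_
            rw [norm_mul (p : ℂ), hNorm hw1, hNorm hw1, Complex.norm_real, Real.norm_eq_abs]
      _ = (‖sg w u s‖ ^ p + |p| * ‖sg w u s‖ ^ (p - 1)) * rexp (u + s * w.re) := by ring
      _ ≤ K * rexp (2 * γ + s * w.re) := by
            rw [hK]; gcongr; exact hu.2.le
      _ = _ := by rw [mul_assoc, ← Real.exp_add]; ring_nf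
  · exact (exp_neg_integrableOn_Ioi 0 (by linarith)).const_mul _
  · refine (ae_restrict_iff' measurableSet_Ioi).mpr (Filter.Eventually.of_forall fun s hs u hu => ?_)
    have d0 := sg_hasDeriv_g w u s
    have := (d0.cexp.mul ((hasDerivAt_id (sg w u s)).cpow_const (c := (p : ℂ))
      (sg_slit' hw hs) |>.comp u d0)).mul_const w
    refine HasDerivAt.congr_deriv this ?_
    simp only [id, Function.comp]
    push_cast
    ring

lemma h_zero {w : ℂ} (hw1 : ‖w‖ = 1) (hwr : w.re < 0) (hw : 0 < w.im) {p : ℝ}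
    (hp : p ∈ Set.Ioo (-1:ℝ) 0) :
    (Hp w 0 p).im = Real.Gamma (p + 1) * Real.sin (π * (p + 1)) := by
  have hw0 : w ≠ 0 := by intro h; simp [h] at hw1
  have e : Hp w 0 p = w ^ ((p : ℂ) + 1) *
      ∫ s in Set.Ioi (0:ℝ), ((s ^ ((p + 1) - 1) : ℝ) : ℂ) * Complex.exp (-(-w) * s) := by
    unfold Hp
    rw [← integral_const_mul]
    refine setIntegral_congr_fun measurableSet_Ioi fun s hs => ?_
    have hs' : (0:ℝ) < s := hs
    have hs0 : (s : ℂ) ≠ 0 := by exact_mod_cast hs'.ne'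
    have : ((s : ℂ) * w) ^ (p : ℂ) = ((s ^ p : ℝ) : ℂ) * w ^ (p : ℂ) := by
      rw [Complex.cpow_def_of_ne_zero (mul_ne_zero hs0 hw0), Complex.log_ofReal_mul hs' hw0,
        add_mul, Complex.exp_add, ← Complex.cpow_def_of_ne_zero hw0, Complex.ofReal_log hs'.le,
        ← Complex.cpow_def_of_ne_zero hs0, Complex.ofReal_cpow hs'.le]
    simp only [sg, Complex.ofReal_zero, zero_add, this, add_sub_cancel_right, neg_neg]
    rw [Complex.cpow_add _ _ hw0, Complex.cpow_one, mul_comm (s : ℂ) w]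
    ring
  have hn : (0:ℝ) < (-w).re := by simpa using hwr
  rw [e, gammaC (by linarith [hp.1]) hn]
  have hlog : Complex.log w - Complex.log (-w) = π * Complex.I := by
    rw [Complex.log, Complex.log, Complex.arg_neg_eq_arg_sub_pi_of_im_pos hw, norm_neg]
    push_cast; ring
  have : w ^ ((p : ℂ) + 1) * ((Real.Gamma (p + 1) : ℂ) * (-w) ^ (-((p + 1 : ℝ) : ℂ)))
      = (Real.Gamma (p + 1) : ℂ) * Complex.exp (((π * (p + 1) : ℝ) : ℂ) * Complex.I) := by
    rw [Complex.cpow_def_of_ne_zero hw0, Complex.cpow_def_of_ne_zero (neg_ne_zero.mpr hw0),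
      mul_left_comm, ← Complex.exp_add]
    congr 2
    push_cast
    linear_combination ((p : ℂ) + 1) * hlog
  rw [this, Complex.im_ofReal_mul, Complex.exp_ofReal_mul_I_im]

lemma h_const {w : ℂ} (hw1 : ‖w‖ = 1) (hwr : w.re < 0) (hw : 0 < w.im) {p : ℝ}
    (hp : p < 0) {γ γ' : ℝ} (hγ : 0 < γ) (hγ' : 0 < γ') : (Hp w γ p).im = (Hp w γ' p).im := by
  have hd : ∀ γ ∈ Set.Ioi (0:ℝ), HasDerivAt (fun γ => (Hp w γ p).im) 0 γ := by
    intro γ hγ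
    have := Complex.imCLM.hasFDerivAt.comp_hasDerivAt γ (hDeriv hw1 hwr hw hγ hp)
    refine HasDerivAt.congr_deriv this ?_
    rw [← Complex.ofReal_neg]
    simp only [Complex.imCLM_apply, Complex.ofReal_im]
  exact isOpen_Ioi.is_const_of_deriv_eq_zero (𝕜 := ℝ) isPreconnected_Ioi
    (fun u hu => (hd u hu).differentiableAt.differentiableWithinAt)
    (fun u hu => (hd u hu).deriv) hγ hγ'

lemma h_lim {w : ℂ} (hw1 : ‖w‖ = 1) (hwr : w.re < 0) (hw : 0 < w.im) {p : ℝ}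
    (hp : p ∈ Set.Ioo (-1:ℝ) 0) :
    Filter.Tendsto (fun γ => Hp w γ p) (nhdsWithin 0 (Set.Ioi 0)) (nhds (Hp w 0 p)) := by
  unfold Hp
  refine tendsto_integral_filter_of_dominated_convergence
    (fun s => w.im ^ p * rexp 1 * (s ^ ((p + 1) - 1) * rexp (-(-w.re) * s)))
    (Filter.Eventually.of_forall fun u => hMeas hw u p) ?_
    ((gInt (by linarith [hp.1]) (by linarith)).const_mul _) ?_
  · filter_upwards [Ioo_mem_nhdsGT (show (0:ℝ) < 1 by norm_num)] with u hu
    refine (ae_restrict_iff' measurableSet_Ioi).mpr (Filter.Eventually.of_forall fun s hs => ?_)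
    have hs' : 0 < s := hs
    rw [hNorm hw1]
    have e1 : ‖sg w u s‖ ^ p ≤ (s * w.im) ^ p :=
      Real.rpow_le_rpow_of_nonpos (by positivity) (sg_low2 hw hs'.le) hp.2.le
    calc _ ≤ (s * w.im) ^ p * rexp (1 + s * w.re) := by gcongr; exact hu.2.le
      _ = _ := by
        rw [Real.mul_rpow hs'.le hw.le, Real.exp_add]; ring_nf
  · refine (ae_restrict_iff' measurableSet_Ioi).mpr (Filter.Eventually.of_forall fun s hs => ?_)
    refine Filter.Tendsto.mono_left ?_ nhdsWithin_le_nhds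
    have c : ContinuousAt (fun γ => sg w γ s) 0 := (sg_hasDeriv_g w 0 s).continuousAt
    exact ((c.cexp).mul (c.cpow continuousAt_const (sg_slit' hw hs))).mul continuousAt_const

lemma h_base {w : ℂ} (hw1 : ‖w‖ = 1) (hwr : w.re < 0) (hw : 0 < w.im) {p : ℝ}
    (hp : p ∈ Set.Ioo (-1:ℝ) 0) {γ : ℝ} (hγ : 0 < γ) :
    (Hp w γ p).im = π * (Real.Gamma (-p))⁻¹ := by
  have h1 : (Hp w γ p).im = (Hp w 0 p).im := by
    have h := (Complex.continuous_im.tendsto _).comp (h_lim hw1 hwr hw hp)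
    refine tendsto_nhds_unique (Filter.Tendsto.congr' ?_ tendsto_const_nhds) h
    filter_upwards [self_mem_nhdsWithin] with u hu
    exact h_const hw1 hwr hw hp.2 hγ hu
  rw [h1, h_zero hw1 hwr hw hp]
  have h2 := Real.Gamma_mul_Gamma_one_sub (p + 1)
  rw [show 1 - (p + 1) = -p by ring] at h2
  have h3 : 0 < Real.sin (π * (p + 1)) := by
    apply Real.sin_pos_of_pos_of_lt_pi
    · have := hp.1; have := Real.pi_pos; apply mul_pos this; linarith
    · have := hp.2; have := Real.pi_pos; nlinarith
  have h4 : 0 < Real.Gamma (-p) := Real.Gamma_pos_of_pos (by linarith [hp.2])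
  rw [eq_div_iff h3.ne'] at h2
  rw [eq_mul_inv_iff_mul_eq₀ h4.ne']
  linear_combination h2

lemma h_neg_one {w : ℂ} (hw1 : ‖w‖ = 1) (hwr : w.re < 0) (hw : 0 < w.im) {γ : ℝ} (hγ : 0 < γ) :
    (Hp w γ (-1)).im = π * (Real.Gamma (-(-1)))⁻¹ := by
  have hI : Set.Ioo (-1:ℝ) 0 ∈ nhdsWithin (-1:ℝ) (Set.Ioi (-1)) := Ioo_mem_nhdsGT (by norm_num)
  have hl : Filter.Tendsto (fun p => Hp w γ p) (nhdsWithin (-1) (Set.Ioi (-1)))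
      (nhds (Hp w γ (-1))) := by
    unfold Hp
    refine tendsto_integral_filter_of_dominated_convergence
      (fun s => (1 + (γ * w.im) ^ (-1:ℝ)) * rexp γ * rexp (-(-w.re) * s))
      (Filter.Eventually.of_forall fun u => hMeas hw γ u) ?_
      ((exp_neg_integrableOn_Ioi 0 (by linarith)).const_mul _) ?_
    · filter_upwards [hI] with p hp
      refine (ae_restrict_iff' measurableSet_Ioi).mpr (Filter.Eventually.of_forall fun s hs => ?_)
      have hs' : 0 < s := hs
      have hm : 0 < γ * w.im := by positivity
      rw [hNorm hw1]
      have e1 : ‖sg w γ s‖ ^ p ≤ (γ * w.im) ^ p :=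
        Real.rpow_le_rpow_of_nonpos hm (sg_low1 hw1 hw hγ.le) hp.2.le
      have e2 : (γ * w.im) ^ p ≤ 1 + (γ * w.im) ^ (-1:ℝ) := by
        rcases le_total 1 (γ * w.im) with h | h
        · have := Real.rpow_le_one_of_one_le_of_nonpos h hp.2.le
          have : 0 ≤ (γ * w.im) ^ (-1:ℝ) := by positivity
          linarith
        · have := Real.rpow_le_rpow_of_exponent_ge hm h hp.1.le
          linarith
      calc _ ≤ (1 + (γ * w.im) ^ (-1:ℝ)) * rexp (γ + s * w.re) := by gcongr; exact e1.trans e2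
        _ = _ := by
          rw [Real.exp_add]; ring_nf
    · refine (ae_restrict_iff' measurableSet_Ioi).mpr (Filter.Eventually.of_forall fun s hs => ?_)
      refine Filter.Tendsto.mono_left ?_ nhdsWithin_le_nhds
      have c : ContinuousAt (fun p : ℝ => (sg w γ s) ^ (p : ℂ)) (-1) :=
        (Complex.continuous_ofReal.continuousAt).const_cpow
          (Or.inl (sg_ne hw hγ (le_of_lt hs)))
      exact (continuousAt_const.mul c).mul continuousAt_const
  have h := (Complex.continuous_im.tendsto _).comp hl
  have h2 : Filter.Tendsto (fun p : ℝ => π * (Real.Gamma (-p))⁻¹)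
      (nhdsWithin (-1) (Set.Ioi (-1))) (nhds (π * (Real.Gamma (-(-1)))⁻¹)) := by
    refine Filter.Tendsto.mono_left ?_ nhdsWithin_le_nhds
    have c1 : ContinuousAt Real.Gamma (-(-1)) := by
      refine (Real.differentiableAt_Gamma fun m => ?_).continuousAt
      have : (0:ℝ) ≤ m := Nat.cast_nonneg m
      intro h; linarith
    have c2 : ContinuousAt (fun p : ℝ => Real.Gamma (-p)) (-1) :=
      ContinuousAt.comp (f := fun p : ℝ => -p) (x := -1) c1 continuousAt_neg
    exact continuousAt_const.mul (c2.inv₀ (by norm_num))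
  refine tendsto_nhds_unique h (h2.congr' ?_)
  filter_upwards [hI] with p hp
  exact (h_base hw1 hwr hw hp hγ).symm

lemma rGamma_rec (s : ℝ) : (Real.Gamma s)⁻¹ = s * (Real.Gamma (s + 1))⁻¹ := by
  rcases eq_or_ne s 0 with rfl | h
  · simp
  · rw [Real.Gamma_add_one h, mul_inv, mul_inv_cancel_left₀ h]

lemma h_rec {w : ℂ} (hw1 : ‖w‖ = 1) (hwr : w.re < 0) (hw : 0 < w.im) {γ : ℝ} (hγ : 0 < γ) (p : ℝ) :
    (Hp w γ p).im = -p * (Hp w γ (p - 1)).im := by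
  have := congrArg Complex.im (hIBP hw1 hwr hw hγ p)
  rw [Complex.add_im, Complex.im_ofReal_mul, ← Complex.ofReal_neg, Complex.ofReal_im] at this
  linarith

/-- Hankel formula -/
lemma hankel {w : ℂ} (hw1 : ‖w‖ = 1) (hwr : w.re < 0) (hw : 0 < w.im) {γ : ℝ} (hγ : 0 < γ) (p : ℝ) :
    (Hp w γ p).im = π * (Real.Gamma (-p))⁻¹ := by
  have hbase : ∀ p ∈ Set.Ico (-1:ℝ) 0, (Hp w γ p).im = π * (Real.Gamma (-p))⁻¹ := by
    intro p hp
    rcases hp.1.eq_or_lt with h | h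
    · rw [← h]; exact h_neg_one hw1 hwr hw hγ
    · exact h_base hw1 hwr hw ⟨h, hp.2⟩ hγ
  have hup : ∀ n : ℕ, ∀ p ∈ Set.Ico (-1:ℝ) 0,
      (Hp w γ (p + n)).im = π * (Real.Gamma (-(p + n)))⁻¹ := by
    intro n
    induction n with
    | zero => intro p hp; simpa using hbase p hp
    | succ n ih =>
      intro p hp
      have h1 := h_rec hw1 hwr hw hγ (p + (n + 1 : ℕ))
      have h2 := rGamma_rec (-(p + (n + 1 : ℕ)))
      rw [show p + ((n + 1 : ℕ) : ℝ) - 1 = p + n by push_cast; ring, ih p hp] at h1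
      rw [show -(p + ((n + 1 : ℕ) : ℝ)) + 1 = -(p + n) by push_cast; ring] at h2
      rw [h1, h2]; ring
  have hdown : ∀ n : ℕ, ∀ p ∈ Set.Ico (-1:ℝ) 0,
      (Hp w γ (p - n)).im = π * (Real.Gamma (-(p - n)))⁻¹ := by
    intro n
    induction n with
    | zero => intro p hp; simpa using hbase p hp
    | succ n ih =>
      intro p hp
      have h1 := h_rec hw1 hwr hw hγ (p - n)
      have h2 := rGamma_rec (-(p - n))
      rw [show p - (n : ℝ) - 1 = p - (n + 1 : ℕ) by push_cast; ring, ih p hp, h2] at h1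
      rw [show -(p - (n : ℝ)) + 1 = -(p - (n + 1 : ℕ)) by push_cast; ring] at h1
      have h3 : -(p - (n : ℝ)) ≠ 0 := by
        have : (0:ℝ) ≤ n := Nat.cast_nonneg n
        have := hp.2
        intro h; linarith
      have : -(p - (n : ℝ)) * (Hp w γ (p - (n + 1 : ℕ))).im
        = -(p - (n : ℝ)) * (π * (Real.Gamma (-(p - (n + 1 : ℕ))))⁻¹) := by rw [← h1]; ring
      exact mul_left_cancel₀ h3 this
  have hf : Int.fract p - 1 ∈ Set.Ico (-1:ℝ) 0 :=
    ⟨by linarith [Int.fract_nonneg p], by linarith [Int.fract_lt_one p]⟩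
  have hpe : p = (Int.fract p - 1) + (⌊p⌋ + 1 : ℤ) := by
    push_cast; linarith [Int.fract_add_floor p]
  obtain ⟨n, hn | hn⟩ := Int.eq_nat_or_neg (⌊p⌋ + 1)
  · rw [hpe, hn]; exact_mod_cast hup n _ hf
  · rw [hpe, hn]
    have := hdown n _ hf
    push_cast
    rw [← sub_eq_add_neg]
    exact this


/-- admissible direction -/
structure Dir (α : ℝ) (w : ℂ) : Prop where
  ha : α ∈ Set.Ioo (0:ℝ) 1
  n1 : ‖w‖ = 1
  re : w.re < 0
  im : 0 < w.im
  arg : α * w.arg < π / 2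

lemma exists_dir {α : ℝ} (hα : α ∈ Set.Ioo (0:ℝ) 1) : ∃ w, Dir α w := by
  have h0 := hα.1
  have h1 := hα.2
  have hpi := Real.pi_pos
  set φ := π / (1 + α) with hφ
  have e : φ * (1 + α) = π := by rw [hφ]; field_simp
  have p0 : 0 < φ := by positivity
  have p1 : φ < π := by nlinarith
  have p2 : π / 2 < φ := by nlinarith
  refine ⟨Complex.exp (φ * Complex.I), hα, Complex.norm_exp_ofReal_mul_I φ, ?_, ?_, ?_⟩
  · rw [Complex.exp_ofReal_mul_I_re]
    exact Real.cos_neg_of_pi_div_two_lt_of_lt p2 (by linarith)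
  · rw [Complex.exp_ofReal_mul_I_im]
    exact Real.sin_pos_of_pos_of_lt_pi p0 p1
  · rw [Complex.arg_exp_mul_I, (toIocMod_eq_self _).mpr ⟨by linarith, by linarith⟩]
    linarith

/-- decay rate -/
noncomputable def kap (α : ℝ) (w : ℂ) (γ : ℝ) : ℝ := (γ * w.im) ^ α * Real.cos (α * w.arg)

lemma Dir.cos_pos {α : ℝ} {w : ℂ} (h : Dir α w) : 0 < Real.cos (α * w.arg) := by
  have : 0 ≤ w.arg := by rw [Complex.arg_nonneg_iff]; exact h.im.le
  have := h.ha.1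
  exact Real.cos_pos_of_mem_Ioo ⟨by have := Real.pi_pos; nlinarith [mul_nonneg this.le ‹0 ≤ w.arg›], h.arg⟩

lemma Dir.kap_pos {α : ℝ} {w : ℂ} (h : Dir α w) {γ : ℝ} (hγ : 0 < γ) : 0 < kap α w γ := by
  have := h.cos_pos
  have := h.im
  unfold kap; positivity

lemma Dir.kap_le {α : ℝ} {w : ℂ} (h : Dir α w) {γ s : ℝ} (hγ : 0 < γ) (hs : 0 ≤ s) :
    kap α w γ ≤ ((sg w γ s) ^ (α : ℂ)).re := by
  rw [Complex.cpow_ofReal_re]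
  have h1 := h.cos_pos
  have h2 := h.im
  have h3 := h.ha.1
  obtain ⟨a0, a1⟩ := sg_arg h.n1 h.re h.im hγ hs
  have hc : Real.cos (α * w.arg) ≤ Real.cos ((sg w γ s).arg * α) := by
    apply Real.cos_le_cos_of_nonneg_of_le_pi (by positivity)
    · have := h.arg; have := Real.pi_pos; linarith
    · rw [mul_comm]; gcongr
  unfold kap
  have := sg_low1 (s := s) h.n1 h.im hγ.le
  gcongr

/-- contour integral for the Wright function -/
noncomputable def Wc (α : ℝ) (w : ℂ) (γ x : ℝ) : ℂ :=
  ∫ s in Set.Ioi (0:ℝ), (Complex.exp (sg w γ s) * (sg w γ s) ^ ((α - 1 : ℝ) : ℂ) * w)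
    * Complex.exp (-(sg w γ s) ^ (α : ℂ) * x)

lemma cpow_comb {z : ℂ} (hz : z ≠ 0) (p q : ℝ) (r : ℕ) :
    z ^ (p : ℂ) * (z ^ (q : ℂ)) ^ r = z ^ ((p + q * r : ℝ) : ℂ) := by
  rw [← Complex.cpow_mul_nat, ← Complex.cpow_add _ _ hz]
  push_cast; rfl

lemma wright_hasSum {α : ℝ} {w : ℂ} (h : Dir α w) {γ : ℝ} (hγ : 0 < γ) (x : ℝ) :
    HasSum (fun r : ℕ => (-x) ^ r / (r.factorial * Real.Gamma (1 - α * (1 + r))))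
      ((Wc α w γ x).im / π) := by
  have key : HasSum (fun r : ℕ => ∫ s in Set.Ioi (0:ℝ), (((-x) ^ r / r.factorial : ℝ) : ℂ) *
      (Complex.exp (sg w γ s) * (sg w γ s) ^ ((α - 1 + α * r : ℝ) : ℂ) * w)) (Wc α w γ x) := by
    have hbs : ∀ s : ℝ, HasSum (fun r : ℕ => (|x| * ‖sg w γ s‖ ^ α) ^ r / r.factorial
        * (‖sg w γ s‖ ^ (α - 1) * rexp (γ + s * w.re)))
        (rexp (|x| * ‖sg w γ s‖ ^ α) * (‖sg w γ s‖ ^ (α - 1) * rexp (γ + s * w.re))) := by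
      intro s
      refine HasSum.mul_right _ ?_
      rw [Real.exp_eq_exp_ℝ]
      exact NormedSpace.expSeries_div_hasSum_exp _
    refine hasSum_integral_of_dominated_convergence
      (fun r s => (|x| * ‖sg w γ s‖ ^ α) ^ r / r.factorial
        * (‖sg w γ s‖ ^ (α - 1) * rexp (γ + s * w.re)))
      (fun r => (hMeas h.im γ _).const_mul _) ?_ ?_ ?_ ?_
    · intro r
      refine (ae_restrict_iff' measurableSet_Ioi).mpr (Filter.Eventually.of_forall fun s hs => ?_)
      have hs0 : 0 ≤ s := le_of_lt hs
      have hn : 0 < ‖sg w γ s‖ := norm_pos_iff.mpr (sg_ne h.im hγ hs0)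
      rw [norm_mul, hNorm h.n1, Complex.norm_real, Real.rpow_add hn, Real.rpow_mul hn.le,
        Real.rpow_natCast, norm_div, norm_pow, norm_neg, Real.norm_eq_abs, Real.norm_eq_abs,
        Nat.abs_cast, mul_pow]
      apply le_of_eq
      ring
    · exact Filter.Eventually.of_forall fun s => (hbs s).summable
    · simp_rw [fun s => (hbs s).tsum_eq]
      have := int_G α h.ha h.n1 h.re h.im hγ |x| (α - 1)
      simp only [mul_assoc] at this ⊢
      exact this
    · refine (ae_restrict_iff' measurableSet_Ioi).mpr (Filter.Eventually.of_forall fun s hs => ?_)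
      have hs0 : 0 ≤ s := le_of_lt hs
      have hn := sg_ne h.im hγ hs0
      have := NormedSpace.expSeries_div_hasSum_exp (-(sg w γ s) ^ (α : ℂ) * x)
      rw [← Complex.exp_eq_exp_ℂ] at this
      refine (this.mul_left (Complex.exp (sg w γ s) * (sg w γ s) ^ ((α - 1 : ℝ) : ℂ) * w)).congr_fun ?_
      intro r
      rw [← cpow_comb hn (α - 1) α r]
      push_cast
      rw [show -(sg w γ s) ^ (α : ℂ) * x = (-x) * (sg w γ s) ^ (α : ℂ) by ring, mul_pow]
      ring
  have k2 := (Complex.imCLM.hasSum key).div_const π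
  refine k2.congr_fun ?_
  intro r
  simp only [Complex.imCLM_apply]
  rw [integral_const_mul, Complex.im_ofReal_mul]
  have := hankel h.n1 h.re h.im hγ (α - 1 + α * r)
  unfold Hp at this
  rw [this, show -(α - 1 + α * r) = 1 - α * (1 + r) by ring]
  have := Real.pi_pos
  rw [div_mul_eq_div_div]
  field_simp

lemma wright_eq {α : ℝ} {w : ℂ} (h : Dir α w) {γ : ℝ} (hγ : 0 < γ) (x : ℝ) :
    wrightM α x = (Wc α w γ x).im / π := (wright_hasSum h hγ x).tsum_eq

lemma wc_norm_le {α : ℝ} {w : ℂ} (h : Dir α w) {γ : ℝ} (hγ : 0 < γ) {s x : ℝ} (hs : 0 ≤ s)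
    (hx : 0 ≤ x) :
    ‖(Complex.exp (sg w γ s) * (sg w γ s) ^ ((α - 1 : ℝ) : ℂ) * w)
    * Complex.exp (-(sg w γ s) ^ (α : ℂ) * x)‖ ≤
    ‖sg w γ s‖ ^ (α - 1) * rexp (γ + s * w.re) * rexp (-kap α w γ * x) := by
  rw [norm_mul, hNorm h.n1, Complex.norm_exp]
  have := h.kap_le hγ hs
  gcongr
  rw [Complex.re_mul_ofReal, Complex.neg_re]
  gcongr

lemma int_G0 {α : ℝ} {w : ℂ} (h : Dir α w) {γ : ℝ} (hγ : 0 < γ) :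
    IntegrableOn (fun s => ‖sg w γ s‖ ^ (α - 1) * rexp (γ + s * w.re)) (Set.Ioi 0) := by
  simpa using int_G α h.ha h.n1 h.re h.im hγ 0 (α - 1)

/-- decay -/
lemma wright_bound {α : ℝ} (hα : α ∈ Set.Ioo (0:ℝ) 1) (K : ℝ) :
    ∃ C : ℝ, 0 ≤ C ∧ ∀ x, 0 ≤ x → |wrightM α x| ≤ C * rexp (-K * x) := by
  obtain ⟨w, h⟩ := exists_dir hα
  have hc := h.cos_pos
  have hi := h.im
  have ha := hα.1
  set K' := max K 1 with hK'
  have hK0 : 0 < K' := by positivity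
  set γ := (K' / Real.cos (α * w.arg)) ^ (1 / α) / w.im with hγd
  have hγ : 0 < γ := by positivity
  have hk : kap α w γ = K' := by
    unfold kap
    rw [hγd, div_mul_cancel₀ _ hi.ne', ← Real.rpow_mul (by positivity), one_div,
      inv_mul_cancel₀ ha.ne', Real.rpow_one, div_mul_cancel₀ _ hc.ne']
  set C0 := ∫ s in Set.Ioi (0:ℝ), ‖sg w γ s‖ ^ (α - 1) * rexp (γ + s * w.re) with hC0
  have hC00 : 0 ≤ C0 := setIntegral_nonneg measurableSet_Ioi fun s _ => by positivity
  refine ⟨C0 / π, by have := Real.pi_pos; positivity, fun x hx => ?_⟩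
  rw [wright_eq h hγ x, abs_div, abs_of_pos Real.pi_pos, div_mul_eq_mul_div]
  gcongr
  refine (Complex.abs_im_le_norm _).trans ?_
  calc ‖Wc α w γ x‖ ≤ ∫ s in Set.Ioi (0:ℝ),
        ‖sg w γ s‖ ^ (α - 1) * rexp (γ + s * w.re) * rexp (-kap α w γ * x) := by
        refine norm_integral_le_of_norm_le ((int_G0 h hγ).mul_const _) ?_
        exact (ae_restrict_iff' measurableSet_Ioi).mpr
          (Filter.Eventually.of_forall fun s hs => wc_norm_le h hγ (le_of_lt hs) hx)
    _ = C0 * rexp (-K' * x) := by rw [integral_mul_const, hk]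
    _ ≤ _ := by gcongr; exact le_max_left _ _

lemma prod_int {α : ℝ} {w : ℂ} (h : Dir α w) {γ : ℝ} (hγ : 0 < γ) (k : ℕ) :
    Integrable (fun z : ℝ × ℝ => ((z.1 ^ k : ℝ) : ℂ) *
      ((Complex.exp (sg w γ z.2) * (sg w γ z.2) ^ ((α - 1 : ℝ) : ℂ) * w)
        * Complex.exp (-(sg w γ z.2) ^ (α : ℂ) * z.1)))
      ((volume.restrict (Set.Ioi (0:ℝ))).prod (volume.restrict (Set.Ioi (0:ℝ)))) := by
  have hI : IntegrableOn (fun x : ℝ => x ^ k * rexp (-kap α w γ * x)) (Set.Ioi 0) := by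
    have := gInt (a := k + 1) (by positivity) (h.kap_pos hγ)
    refine this.congr_fun (fun x _ => ?_) measurableSet_Ioi
    simp only [add_sub_cancel_right, Real.rpow_natCast]
  have hP := Integrable.mul_prod hI (int_G0 h hγ)
  refine hP.mono' ?_ ?_
  · rw [Measure.prod_restrict]
    refine ContinuousOn.aestronglyMeasurable ?_ (measurableSet_Ioi.prod measurableSet_Ioi)
    have c1 : ∀ p : ℂ, ContinuousOn (fun z : ℝ × ℝ => (sg w γ z.2) ^ p)
        (Set.Ioi 0 ×ˢ Set.Ioi 0) := fun p =>
      (contOn_cpow h.im γ p).comp continuousOn_snd (fun z hz => hz.2)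
    have c2 : Continuous (fun z : ℝ × ℝ => sg w γ z.2) := (sg_cont w γ).comp continuous_snd
    have c3 : Continuous (fun z : ℝ × ℝ => ((z.1 : ℝ) : ℂ)) := by fun_prop
    have c4 : Continuous (fun z : ℝ × ℝ => ((z.1 ^ k : ℝ) : ℂ)) := by fun_prop
    exact c4.continuousOn.mul (((c2.cexp.continuousOn.mul (c1 _)).mul continuousOn_const).mul
      (((c1 _).neg.mul c3.continuousOn).cexp))
  · rw [Measure.prod_restrict]
    refine (ae_restrict_iff' (measurableSet_Ioi.prod measurableSet_Ioi)).mpr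
      (Filter.Eventually.of_forall fun z hz => ?_)
    have h1 : 0 < z.1 := hz.1
    have h2 : 0 < z.2 := hz.2
    have := wc_norm_le h hγ h2.le h1.le
    rw [norm_mul, Complex.norm_real, Real.norm_of_nonneg (by positivity), mul_assoc (z.1 ^ k),
      mul_comm (rexp _) (_ * _)]
    gcongr

/-- moments -/
lemma wright_moment {α : ℝ} (hα : α ∈ Set.Ioo (0:ℝ) 1) (k : ℕ) :
    IntegrableOn (fun x => x ^ k * wrightM α x) (Set.Ioi 0) ∧
    ∫ x in Set.Ioi (0:ℝ), x ^ k * wrightM α x = k.factorial / Real.Gamma (α * k + 1) := by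
  obtain ⟨w, h⟩ := exists_dir hα
  have hP := prod_int h one_pos k
  have hI := hP.integral_prod_left
  simp only [integral_const_mul] at hI
  have hfun : (fun x => x ^ k * wrightM α x)
      = fun x : ℝ => ((((x ^ k : ℝ) : ℂ) * Wc α w 1 x).im) / π := by
    ext x
    rw [wright_eq h one_pos x, Complex.im_ofReal_mul]; ring
  rw [hfun]
  have hI' : Integrable (fun x : ℝ => ((x ^ k : ℝ) : ℂ) * Wc α w 1 x)
    (volume.restrict (Set.Ioi 0)) := hI
  refine ⟨hI'.im.div_const π, ?_⟩
  rw [integral_div]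
  have e1 := integral_im hI'
  simp only [RCLike.im_to_complex] at e1
  rw [e1]
  have e2 : ∫ x in Set.Ioi (0:ℝ), ((x ^ k : ℝ) : ℂ) * Wc α w 1 x
      = k.factorial * Hp w 1 (-1 - α * k) := by
    have sw := integral_integral_swap (f := fun x s : ℝ => ((x ^ k : ℝ) : ℂ) *
      ((Complex.exp (sg w 1 s) * (sg w 1 s) ^ ((α - 1 : ℝ) : ℂ) * w)
        * Complex.exp (-(sg w 1 s) ^ (α : ℂ) * x))) hP
    simp only [integral_const_mul] at sw
    unfold Wc
    rw [sw]
    unfold Hp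
    rw [← integral_const_mul]
    refine setIntegral_congr_fun measurableSet_Ioi fun s hs => ?_
    have hs0 : (0:ℝ) ≤ s := le_of_lt hs
    have hn := sg_ne h.im one_pos hs0
    have hre : 0 < ((sg w 1 s) ^ (α : ℂ)).re := (h.kap_pos one_pos).trans_le (h.kap_le one_pos hs0)
    have g := gammaC (a := k + 1) (by positivity) hre
    simp only [add_sub_cancel_right, Real.rpow_natCast] at g
    rw [Real.Gamma_nat_eq_factorial] at g
    simp only [mul_left_comm _ (_ * w)]
    rw [integral_const_mul, g]
    have e3 : ((sg w 1 s) ^ (α : ℂ)) ^ (-((k + 1 : ℝ) : ℂ)) = (sg w 1 s) ^ ((-(α * (k + 1)) : ℝ) : ℂ) := by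
      rw [show (-((k + 1 : ℝ) : ℂ)) = ((-(k + 1 : ℕ) : ℤ) : ℂ) by push_cast; ring,
        Complex.cpow_intCast, ← Complex.cpow_mul_int]
      push_cast; ring_nf
    rw [e3]
    have e4 : (sg w 1 s) ^ ((-1 - α * k : ℝ) : ℂ)
      = (sg w 1 s) ^ ((α - 1 : ℝ) : ℂ) * (sg w 1 s) ^ ((-(α * (k + 1)) : ℝ) : ℂ) := by
      rw [← Complex.cpow_add _ _ hn]; push_cast; ring_nf
    rw [e4]
    push_cast
    ring
  rw [e2, show ((k.factorial : ℂ)) = ((k.factorial : ℝ) : ℂ) by push_cast; rfl,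
    Complex.im_ofReal_mul, hankel h.n1 h.re h.im one_pos,
    show -(-1 - α * k) = α * k + 1 by ring]
  have := Real.pi_pos
  field_simp


lemma beta_real {a b t : ℝ} (ha : 0 < a) (hb : 0 < b) (ht : 0 < t) :
    IntervalIntegrable (fun u => (t - u) ^ (b - 1) * u ^ (a - 1)) volume 0 t ∧
    ∫ u in (0:ℝ)..t, (t - u) ^ (b - 1) * u ^ (a - 1)
      = t ^ (a + b - 1) * (Real.Gamma a * Real.Gamma b / Real.Gamma (a + b)) := by
  have e : ∫ u in (0:ℝ)..t, (t - u) ^ (b - 1) * u ^ (a - 1)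
      = t ^ (a + b - 1) * (Real.Gamma a * Real.Gamma b / Real.Gamma (a + b)) := by
    have h1 := Complex.betaIntegral_scaled a b ht
    rw [Complex.betaIntegral_eq_Gamma_mul_div _ _ (by simpa) (by simpa)] at h1
    have h2 : (∫ u in (0:ℝ)..t, (((t - u) ^ (b - 1) * u ^ (a - 1) : ℝ) : ℂ))
      = ((t ^ (a + b - 1) * (Real.Gamma a * Real.Gamma b / Real.Gamma (a + b)) : ℝ) : ℂ) := by
      push_cast
      rw [Complex.ofReal_cpow ht.le, ← Complex.Gamma_ofReal, ← Complex.Gamma_ofReal,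
        ← Complex.Gamma_ofReal]
      push_cast
      rw [← h1]
      refine intervalIntegral.integral_congr fun u hu => ?_
      rw [Set.uIcc_of_le ht.le] at hu
      rw [Complex.ofReal_cpow (by linarith [hu.2]), Complex.ofReal_cpow hu.1]
      push_cast
      ring
    rw [intervalIntegral.integral_ofReal] at h2
    exact_mod_cast h2
  refine ⟨?_, e⟩
  by_contra hn
  rw [intervalIntegral.integral_undef hn] at e
  have := Real.Gamma_pos_of_pos ha
  have := Real.Gamma_pos_of_pos hb
  have := Real.Gamma_pos_of_pos (add_pos ha hb)
  have : 0 < t ^ (a + b - 1) * (Real.Gamma a * Real.Gamma b / Real.Gamma (a + b)) := by positivity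
  linarith

/-- geometric growth -/
def Bd (b : ℕ → ℝ) : Prop := ∃ C K : ℝ, 0 ≤ C ∧ 0 ≤ K ∧ ∀ k, |b k| ≤ C * K ^ k

/-- exponential generating function -/
noncomputable def EG (b : ℕ → ℝ) (y : ℝ) : ℝ := ∑' k : ℕ, b k * y ^ k / k.factorial

/-- Mittag-Leffler type series -/
noncomputable def ML (α : ℝ) (b : ℕ → ℝ) (t : ℝ) : ℝ :=
  ∑' k : ℕ, b k * t ^ (α * k) / Real.Gamma (α * k + 1)

lemma Bd.abs {b : ℕ → ℝ} (h : Bd b) : Bd (fun k => |b k|) := by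
  obtain ⟨C, K, hC, hK, h⟩ := h
  exact ⟨C, K, hC, hK, fun k => by rw [abs_abs]; exact h k⟩

lemma Bd.add {a b : ℕ → ℝ} (ha : Bd a) (hb : Bd b) : Bd (fun k => a k + b k) := by
  obtain ⟨C, K, hC, hK, ha⟩ := ha
  obtain ⟨C', K', hC', hK', hb⟩ := hb
  refine ⟨C + C', K + K', by positivity, by positivity, fun k => (abs_add_le _ _).trans ?_⟩
  have h1 : K ^ k ≤ (K + K') ^ k := by gcongr; linarith
  have h2 : K' ^ k ≤ (K + K') ^ k := by gcongr; linarith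
  rw [add_mul]
  exact add_le_add ((ha k).trans (by gcongr)) ((hb k).trans (by gcongr))

lemma Bd.mul {a b : ℕ → ℝ} (ha : Bd a) (hb : Bd b) : Bd (fun k => a k * b k) := by
  obtain ⟨C, K, hC, hK, ha⟩ := ha
  obtain ⟨C', K', hC', hK', hb⟩ := hb
  refine ⟨C * C', K * K', by positivity, by positivity, fun k => ?_⟩
  rw [abs_mul, mul_pow, mul_mul_mul_comm]
  exact mul_le_mul (ha k) (hb k) (abs_nonneg _) (by positivity)

lemma Bd.const (c : ℝ) : Bd (fun _ => c) :=
  ⟨|c|, 1, abs_nonneg _, zero_le_one, fun k => by simp⟩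

lemma Bd.nat : Bd (fun k => (k : ℝ)) :=
  ⟨1, 2, by norm_num, by norm_num, fun k => by
    rw [Nat.abs_cast, one_mul]; exact_mod_cast (Nat.lt_two_pow_self).le⟩

lemma Bd.smul {b : ℕ → ℝ} (c : ℝ) (hb : Bd b) : Bd (fun k => c * b k) := (Bd.const c).mul hb

lemma Bd.sub {a b : ℕ → ℝ} (ha : Bd a) (hb : Bd b) : Bd (fun k => a k - b k) := by
  have := ha.add (hb.smul (-1))
  simpa [sub_eq_add_neg] using this

lemma Bd.shift {b : ℕ → ℝ} (hb : Bd b) : Bd (fun k => b (k + 1)) := by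
  obtain ⟨C, K, hC, hK, hb⟩ := hb
  exact ⟨C * K, K, by positivity, hK, fun k => (hb (k + 1)).trans (by rw [pow_succ]; apply le_of_eq; ring)⟩

lemma exp_hs (x : ℝ) : HasSum (fun k : ℕ => x ^ k / k.factorial) (rexp x) := by
  rw [Real.exp_eq_exp_ℝ]
  exact NormedSpace.expSeries_div_hasSum_exp _

lemma eg_summable {b : ℕ → ℝ} (hb : Bd b) (y : ℝ) :
    Summable (fun k : ℕ => b k * y ^ k / k.factorial) := by
  obtain ⟨C, K, hC, hK, hb⟩ := hb
  refine Summable.of_norm_bounded ((exp_hs (K * |y|)).summable.mul_left C) fun k => ?_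
  rw [norm_div, norm_mul, norm_pow, Real.norm_eq_abs, Real.norm_eq_abs, Real.norm_eq_abs, Nat.abs_cast,
    mul_pow, mul_div_assoc, mul_div_assoc, ← mul_assoc]
  gcongr
  exact hb k

lemma eg_hasSum {b : ℕ → ℝ} (hb : Bd b) (y : ℝ) :
    HasSum (fun k : ℕ => b k * y ^ k / k.factorial) (EG b y) := (eg_summable hb y).hasSum

lemma key_int {α : ℝ} (hα : α ∈ Set.Ioo (0:ℝ) 1) {b : ℕ → ℝ} (hb : Bd b) {T : ℝ} (hT : 0 < T) :
    HasSum (fun k : ℕ => b k * T ^ k / Real.Gamma (α * k + 1))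
      (∫ x in Set.Ioi (0:ℝ), wrightM α x * EG b (x * T)) := by
  have hb' := hb
  obtain ⟨C, K, hC, hK, hb⟩ := hb
  have hmeas : AEStronglyMeasurable (wrightM α) (volume.restrict (Set.Ioi 0)) := by
    have := (wright_moment hα 0).1.aestronglyMeasurable
    simpa using this
  have hs : ∀ x, HasSum (fun k : ℕ => C * ((K * T * x) ^ k / k.factorial) * |wrightM α x|)
    (C * rexp (K * T * x) * |wrightM α x|) := fun x => ((exp_hs _).mul_left C).mul_right _
  have := hasSum_integral_of_dominated_convergence (μ := volume.restrict (Set.Ioi (0:ℝ)))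
    (F := fun (k : ℕ) x => b k * T ^ k / k.factorial * (x ^ k * wrightM α x))
    (f := fun x => wrightM α x * EG b (x * T))
    (fun (k : ℕ) x => C * ((K * T * x) ^ k / k.factorial) * |wrightM α x|)
    (fun k => ((wright_moment hα k).1.aestronglyMeasurable).const_mul _) ?_ ?_ ?_ ?_
  · refine this.congr_fun fun k => ?_
    rw [integral_const_mul, (wright_moment hα k).2]
    have : (k.factorial : ℝ) ≠ 0 := by positivity
    field_simp
  · intro k
    refine (ae_restrict_iff' measurableSet_Ioi).mpr (Filter.Eventually.of_forall fun x hx => ?_)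
    have hx0 : 0 < x := hx
    rw [norm_mul, norm_div, norm_mul, norm_mul, Real.norm_eq_abs, Real.norm_eq_abs, Real.norm_eq_abs,
      Real.norm_eq_abs, Real.norm_eq_abs, Nat.abs_cast, abs_of_pos (pow_pos hT k), abs_of_pos (pow_pos hx0 k)]
    calc |b k| * T ^ k / k.factorial * (x ^ k * |wrightM α x|)
        ≤ C * K ^ k * T ^ k / k.factorial * (x ^ k * |wrightM α x|) := by gcongr; exact hb k
      _ = _ := by rw [mul_pow, mul_pow]; ring
  · exact Filter.Eventually.of_forall fun x => (hs x).summable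
  · simp_rw [fun x => (hs x).tsum_eq]
    obtain ⟨D, hD, hbd⟩ := wright_bound hα (K * T + 1)
    have hexp : IntegrableOn (fun x => C * D * rexp (-x)) (Set.Ioi 0) :=
      (integrableOn_exp_neg_Ioi 0).const_mul _
    refine hexp.mono' (by
      refine AEStronglyMeasurable.mul ?_ hmeas.norm
      exact (by fun_prop : Continuous fun x : ℝ => C * rexp (K * T * x)).aestronglyMeasurable) ?_
    refine (ae_restrict_iff' measurableSet_Ioi).mpr (Filter.Eventually.of_forall fun x hx => ?_)
    have hx0 : 0 < x := hx
    rw [Real.norm_of_nonneg (by positivity)]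
    calc C * rexp (K * T * x) * |wrightM α x| ≤ C * rexp (K * T * x) * (D * rexp (-(K * T + 1) * x)) := by
          gcongr; exact hbd x hx0.le
      _ = C * D * (rexp (K * T * x) * rexp (-(K * T + 1) * x)) := by ring
      _ = _ := by rw [← Real.exp_add]; congr 2; ring
  · refine Filter.Eventually.of_forall fun x => ?_
    refine ((eg_hasSum hb' (x * T)).mul_left (wrightM α x)).congr_fun fun k => ?_
    rw [mul_pow]; ring

lemma rpow_aux {α t : ℝ} (ht : 0 < t) (k : ℕ) : t ^ (α * k) = (t ^ α) ^ k := by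
  rw [Real.rpow_mul ht.le, Real.rpow_natCast]

lemma ml_summable {α : ℝ} (hα : α ∈ Set.Ioo (0:ℝ) 1) {b : ℕ → ℝ} (hb : Bd b) {t : ℝ} (ht : 0 < t) :
    Summable (fun k : ℕ => b k * t ^ (α * k) / Real.Gamma (α * k + 1)) := by
  simp only [rpow_aux ht]
  exact (key_int hα hb (Real.rpow_pos_of_pos ht α)).summable

lemma ml_int {α : ℝ} (hα : α ∈ Set.Ioo (0:ℝ) 1) {b : ℕ → ℝ} (hb : Bd b) {t : ℝ} (ht : 0 < t)
    (g : ℝ → ℝ) (hg : ∀ y, 0 < y → g y = subDensity α y t * EG b y) :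
    ∫ y in Set.Ioi (0:ℝ), g y = ML α b t := by
  have hT := Real.rpow_pos_of_pos ht α
  have h1 := (key_int hα hb hT).tsum_eq
  unfold ML
  simp only [rpow_aux ht]
  rw [h1]
  have h2 := integral_comp_mul_right_Ioi (fun x => wrightM α x * EG b (x * t ^ α)) 0 (inv_pos.mpr hT)
  rw [zero_mul, inv_inv, smul_eq_mul] at h2
  have h3 : ∀ A B : ℝ, A = t ^ α * B → B = (t ^ α)⁻¹ * A := by
    intro A B h; rw [h]; field_simp
  rw [h3 _ _ h2, ← integral_const_mul]
  refine setIntegral_congr_fun measurableSet_Ioi fun y hy => ?_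
  rw [hg y hy, inv_mul_cancel_right₀ hT.ne']
  unfold subDensity
  rw [Real.rpow_neg ht.le]
  ring

lemma ml_add {α : ℝ} (hα : α ∈ Set.Ioo (0:ℝ) 1) {a b : ℕ → ℝ} (ha : Bd a) (hb : Bd b) {t : ℝ} (ht : 0 < t) :
    ML α (fun k => a k + b k) t = ML α a t + ML α b t := by
  unfold ML
  rw [← (ml_summable hα ha ht).tsum_add (ml_summable hα hb ht)]
  congr 1; ext k; ring

lemma ml_smul {α : ℝ} (c : ℝ) (a : ℕ → ℝ) (t : ℝ) :
    ML α (fun k => c * a k) t = c * ML α a t := by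
  unfold ML
  rw [← tsum_mul_left]
  congr 1; ext k; ring

lemma ml_one (α t : ℝ) : ML α (fun k => if k = 0 then 1 else 0) t = 1 := by
  unfold ML
  rw [tsum_eq_single 0]
  · simp
  · intro k hk; simp [hk]

lemma ml_deriv {α : ℝ} (hα : α ∈ Set.Ioo (0:ℝ) 1) {b : ℕ → ℝ} (hb : Bd b) {u : ℝ} (hu : 0 < u) :
    HasDerivAt (ML α b) (∑' k : ℕ, b (k + 1) * u ^ (α * (k + 1) - 1) / Real.Gamma (α * (k + 1))) u := by
  have ha := hα.1
  have hsum := (ml_summable hα ((hb.mul Bd.nat).smul α) (show 0 < 2 * u by linarith)).abs.mul_left (u / 2)⁻¹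
  have key := hasDerivAt_tsum_of_isPreconnected (y := u) (y₀ := u) hsum (t := Set.Ioo (u / 2) (2 * u)) isOpen_Ioo
    isPreconnected_Ioo (g := fun k v => b k * v ^ (α * k) / Real.Gamma (α * k + 1))
    (g' := fun k v => b k * (α * k * v ^ (α * k - 1)) / Real.Gamma (α * k + 1)) ?_ ?_ ⟨by linarith, by linarith⟩
    (ml_summable hα hb hu) ⟨by linarith, by linarith⟩
  · have hsm : Summable fun k : ℕ => b k * (α * k * u ^ (α * k - 1)) / Real.Gamma (α * k + 1) := by
      have := (ml_summable hα ((hb.mul Bd.nat).smul α) hu).mul_left u⁻¹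
      refine this.congr fun k => ?_
      rw [Real.rpow_sub_one hu.ne']
      ring
    rw [hsm.tsum_eq_zero_add] at key
    simp only [Nat.cast_zero, mul_zero, zero_mul, zero_div, zero_add] at key
    refine key.congr_deriv (tsum_congr fun k => ?_)
    have hp : 0 < α * (k + 1) := by positivity
    push_cast
    rw [Real.Gamma_add_one hp.ne']
    have := Real.Gamma_pos_of_pos hp
    field_simp
  · intro k v hv
    have hv0 : 0 < v := by linarith [hv.1]
    exact ((Real.hasDerivAt_rpow_const (Or.inl hv0.ne')).const_mul _).div_const _
  · intro k v hv
    have hv0 : 0 < v := by linarith [hv.1]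
    have hG : 0 < Real.Gamma (α * k + 1) := Real.Gamma_pos_of_pos (by positivity)
    rw [Real.rpow_sub_one hv0.ne', Real.norm_eq_abs]
    have e : b k * (α * k * (v ^ (α * k) / v)) / Real.Gamma (α * k + 1)
      = v⁻¹ * (α * (b k * k) / Real.Gamma (α * k + 1) * v ^ (α * k)) := by field_simp
    have e2 : α * (b k * k) * (2 * u) ^ (α * k) / Real.Gamma (α * k + 1)
      = (α * (b k * k) / Real.Gamma (α * k + 1) * (2 * u) ^ (α * k)) := by ring
    rw [e, e2, abs_mul, abs_of_pos (inv_pos.mpr hv0), abs_mul, abs_mul, abs_of_pos (Real.rpow_pos_of_pos hv0 _),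
      abs_of_pos (Real.rpow_pos_of_pos (by linarith : 0 < 2 * u) _)]
    have h1 := hv.1
    have h2 := hv.2
    gcongr

lemma caputo_ml {α : ℝ} (hα : α ∈ Set.Ioo (0:ℝ) 1) {b : ℕ → ℝ} (hb : Bd b) {f : ℝ → ℝ}
    (hf : ∀ u, 0 < u → f u = ML α b u) {t : ℝ} (ht : 0 < t) :
    caputoD α f t = ML α (fun k => b (k + 1)) t := by
  have ha := hα.1
  have ha1 : 0 < 1 - α := by linarith [hα.2]
  have hG1 := Real.Gamma_pos_of_pos ha1
  have hd : ∀ u, 0 < u → deriv f u = ∑' k : ℕ, b (k + 1) * u ^ (α * (k + 1) - 1) / Real.Gamma (α * (k + 1)) := by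
    intro u hu
    refine HasDerivAt.deriv ((ml_deriv hα hb hu).congr_of_eventuallyEq ?_)
    filter_upwards [lt_mem_nhds hu] with v hv using hf v hv
  unfold caputoD
  rw [intervalIntegral.integral_of_le ht.le]
  have e1 : ∫ u in Set.Ioc 0 t, (t - u) ^ (-α) * deriv f u
    = ∫ u in Set.Ioc 0 t, ∑' k : ℕ, b (k + 1) / Real.Gamma (α * (k + 1)) * ((t - u) ^ ((1 - α) - 1) * u ^ (α * (k + 1) - 1)) := by
    refine setIntegral_congr_fun measurableSet_Ioc fun u hu => ?_
    rw [hd u hu.1, ← tsum_mul_left]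
    congr 1; ext k
    rw [show 1 - α - 1 = -α by ring]
    ring
  rw [e1]
  have hbeta := fun k : ℕ => beta_real (a := α * (k + 1)) (b := 1 - α) (by positivity) ha1 ht
  have hval : ∀ k : ℕ, ∫ u in Set.Ioc 0 t, (t - u) ^ ((1 - α) - 1) * u ^ (α * (k + 1) - 1)
     = t ^ (α * k) * (Real.Gamma (α * (k + 1)) * Real.Gamma (1 - α) / Real.Gamma (α * k + 1)) := by
    intro k
    have := (hbeta k).2
    rw [intervalIntegral.integral_of_le ht.le] at this
    rw [this, show α * (k + 1) + (1 - α) - 1 = α * k by ring, show α * (k + 1) + (1 - α) = α * k + 1 by ring]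
  have hs := hasSum_integral_of_summable_integral_norm (μ := volume.restrict (Set.Ioc 0 t))
    (F := fun (k : ℕ) u => b (k + 1) / Real.Gamma (α * (k + 1)) * ((t - u) ^ ((1 - α) - 1) * u ^ (α * (k + 1) - 1)))
    (fun k => ((intervalIntegrable_iff_integrableOn_Ioc_of_le ht.le).mp (hbeta k).1).const_mul _) ?_
  · rw [← hs.tsum_eq, ← tsum_mul_left]
    unfold ML
    congr 1; ext k
    rw [integral_const_mul, hval]
    have : 0 < Real.Gamma (α * (k + 1)) := Real.Gamma_pos_of_pos (by positivity)
    field_simp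
  · have := (ml_summable hα hb.shift ht).abs.mul_left (Real.Gamma (1 - α))
    refine this.congr fun k => ?_
    have hG : 0 < Real.Gamma (α * (k + 1)) := Real.Gamma_pos_of_pos (by positivity)
    have hG2 : 0 < Real.Gamma (α * k + 1) := Real.Gamma_pos_of_pos (by positivity)
    have : ∫ u in Set.Ioc 0 t, ‖b (k + 1) / Real.Gamma (α * (k + 1)) * ((t - u) ^ ((1 - α) - 1) * u ^ (α * (k + 1) - 1))‖
      = ∫ u in Set.Ioc 0 t, |b (k + 1)| / Real.Gamma (α * (k + 1)) * ((t - u) ^ ((1 - α) - 1) * u ^ (α * (k + 1) - 1)) := by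
      refine setIntegral_congr_fun measurableSet_Ioc fun u hu => ?_
      have h1 : 0 ≤ t - u := by linarith [hu.2]
      have h2 : 0 ≤ u := hu.1.le
      rw [Real.norm_eq_abs, abs_mul, abs_div, abs_of_pos hG, abs_of_nonneg (a := _ * _) (by positivity)]
    rw [this, integral_const_mul, hval, abs_div, abs_mul, abs_of_pos hG2, abs_of_pos (Real.rpow_pos_of_pos ht _)]
    field_simp


/-- tail sums of the lattice path weights -/
noncomputable def sC (lam mu : ℝ) : ℕ → ℤ → ℝ
  | 0, l => if l ≤ 0 then 1 else 0
  | k + 1, l => lam * sC lam mu k (l + 1) + mu * sC lam mu k (l - 1)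

/-- lattice path weights: coefficient of `s^n` in `(lam s + mu/s)^k` -/
noncomputable def bC (lam mu : ℝ) (k : ℕ) (n : ℤ) : ℝ := sC lam mu k (-n) - sC lam mu k (-n + 1)

lemma sC_succ (lam mu : ℝ) (k : ℕ) (l : ℤ) :
    sC lam mu (k + 1) l = lam * sC lam mu k (l + 1) + mu * sC lam mu k (l - 1) := rfl

lemma bC_zero (lam mu : ℝ) (n : ℤ) : bC lam mu 0 n = if n = 0 then 1 else 0 := by
  unfold bC sC
  rcases lt_trichotomy n 0 with h | h | h
  · rw [if_neg (by omega), if_neg (by omega), if_neg (by omega)]; norm_num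
  · rw [if_pos (by omega), if_neg (by omega), if_pos (by omega)]; norm_num
  · rw [if_pos (by omega), if_pos (by omega), if_neg (by omega)]; norm_num

lemma bC_succ (lam mu : ℝ) (k : ℕ) (n : ℤ) :
    bC lam mu (k + 1) n = lam * bC lam mu k (n - 1) + mu * bC lam mu k (n + 1) := by
  unfold bC
  rw [sC_succ, sC_succ, show -(n - 1) = -n + 1 by ring, show -(n + 1) = -n - 1 by ring,
    show -n - 1 + 1 = -n by ring, show -n + 1 - 1 = -n by ring]
  ring

lemma bC_ident (lam mu : ℝ) (k : ℕ) : ∀ n : ℤ,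
    (n : ℝ) * bC lam mu (k + 1) n = (k + 1) * (lam * bC lam mu k (n - 1) - mu * bC lam mu k (n + 1)) := by
  induction k with
  | zero =>
    intro n
    rw [bC_succ]
    simp only [bC_zero]
    by_cases h1 : n = 1
    · subst h1; norm_num
    by_cases h2 : n = -1
    · subst h2; norm_num
    rw [if_neg (by omega), if_neg (by omega)]; norm_num
  | succ k ih =>
    intro n
    have a1 := ih (n - 1)
    have a2 := ih (n + 1)
    rw [bC_succ lam mu (k + 1) n]
    push_cast at a1 a2 ⊢
    have e1 := bC_succ lam mu k (n - 1)
    have e2 := bC_succ lam mu k (n + 1)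
    rw [show n + 1 - 1 = n by ring] at e2 a2
    rw [show n - 1 + 1 = n by ring] at e1 a1
    linear_combination lam * a1 + mu * a2 - (k + 1) * lam * e1 + (k + 1) * mu * e2

lemma sC_bd {lam mu : ℝ} (hl : 0 < lam) (hm : 0 < mu) (k : ℕ) :
    ∀ l : ℤ, 0 ≤ sC lam mu k l ∧ sC lam mu k l ≤ (lam + mu) ^ k := by
  induction k with
  | zero => intro l; unfold sC; split_ifs <;> simp
  | succ k ih =>
    intro l
    rw [sC_succ, pow_succ]
    have h1 := ih (l + 1)
    have h2 := ih (l - 1)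
    constructor
    · have := h1.1; have := h2.1; positivity
    · nlinarith

lemma Bd_sC {lam mu : ℝ} (hl : 0 < lam) (hm : 0 < mu) (l : ℤ) : Bd (fun k => sC lam mu k l) :=
  ⟨1, lam + mu, zero_le_one, by positivity, fun k => by
    rw [abs_of_nonneg (sC_bd hl hm k l).1, one_mul]; exact (sC_bd hl hm k l).2⟩

lemma Bd_bC {lam mu : ℝ} (hl : 0 < lam) (hm : 0 < mu) (n : ℤ) : Bd (fun k => bC lam mu k n) :=
  (Bd_sC hl hm (-n)).sub (Bd_sC hl hm (-n + 1))

lemma bC_nonneg {lam mu : ℝ} (hl : 0 < lam) (hm : 0 < mu) (k : ℕ) :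
    ∀ n : ℤ, 0 ≤ bC lam mu k n := by
  induction k with
  | zero => intro n; rw [bC_zero]; split_ifs <;> simp
  | succ k ih =>
    intro n
    rw [bC_succ]
    have h1 := ih (n - 1)
    have h2 := ih (n + 1)
    positivity

lemma sC_eq_zero (lam mu : ℝ) (k : ℕ) : ∀ l : ℤ, (k : ℤ) < l → sC lam mu k l = 0 := by
  induction k with
  | zero => intro l h; unfold sC; rw [if_neg (by simpa using h)]
  | succ k ih =>
    intro l h
    push_cast at h
    rw [sC_succ, ih _ (by omega), ih _ (by omega)]; ring

/-- closed form, vanishing part -/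
lemma bC_support (lam mu : ℝ) (k : ℕ) : ∀ n : ℤ, bC lam mu k n ≠ 0 →
    ∃ u d : ℕ, k = u + d ∧ n = u - d := by
  induction k with
  | zero =>
    intro n h
    rw [bC_zero] at h
    have : n = 0 := by by_contra h'; simp [h'] at h
    exact ⟨0, 0, rfl, by simp [this]⟩
  | succ k ih =>
    intro n h
    rw [bC_succ] at h
    by_cases h1 : bC lam mu k (n - 1) = 0
    · by_cases h2 : bC lam mu k (n + 1) = 0
      · simp [h1, h2] at h
      · obtain ⟨u, d, e1, e2⟩ := ih _ h2
        exact ⟨u, d + 1, by omega, by push_cast; omega⟩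
    · obtain ⟨u, d, e1, e2⟩ := ih _ h1
      exact ⟨u + 1, d, by omega, by push_cast; omega⟩

lemma bC_far (lam mu : ℝ) (k : ℕ) (n : ℤ) (h : (k : ℤ) < |n|) : bC lam mu k n = 0 := by
  by_contra h'
  obtain ⟨u, d, e1, e2⟩ := bC_support lam mu k n h'
  rw [lt_abs] at h
  omega

lemma bC_closed (lam mu : ℝ) (k : ℕ) : ∀ u d : ℕ, k = u + d →
    bC lam mu k ((u : ℤ) - d) = ((u + d).choose u) * lam ^ u * mu ^ d := by
  induction k with
  | zero =>
    intro u d h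
    have : u = 0 := by omega
    have : d = 0 := by omega
    subst_vars
    simp [bC_zero]
  | succ k ih =>
    intro u d h
    rw [bC_succ]
    rcases u with _ | u
    · rcases d with _ | d
      · omega
      · rw [bC_far _ _ _ _ (by rw [lt_abs]; push_cast; omega)]
        have := ih 0 d (by omega)
        rw [show ((0 : ℕ) : ℤ) - (d + 1 : ℕ) + 1 = ((0 : ℕ) : ℤ) - d by push_cast; ring, this]
        simp
        ring
    · rcases d with _ | d
      · rw [bC_far lam mu k (_ + 1) (by rw [lt_abs]; push_cast; omega)]
        have := ih u 0 (by omega)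
        rw [show ((u + 1 : ℕ) : ℤ) - (0 : ℕ) - 1 = (u : ℤ) - (0 : ℕ) by push_cast; ring, this]
        simp
        ring
      · have h1 := ih u (d + 1) (by omega)
        have h2 := ih (u + 1) d (by omega)
        rw [show ((u + 1 : ℕ) : ℤ) - (d + 1 : ℕ) - 1 = (u : ℤ) - (d + 1 : ℕ) by push_cast; ring, h1,
          show ((u + 1 : ℕ) : ℤ) - (d + 1 : ℕ) + 1 = ((u + 1 : ℕ) : ℤ) - d by push_cast; ring, h2,
          show u + 1 + (d + 1) = (u + (d + 1)) + 1 by ring, Nat.choose_succ_succ,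
          show u + 1 + d = u + (d + 1) by ring]
        push_cast
        ring

lemma EG_bC_pos (lam mu : ℝ) (n : ℕ) (y : ℝ) : EG (fun k => bC lam mu k n) y
    = ∑' m : ℕ, lam ^ (m + n) * mu ^ m * y ^ (2 * m + n) / (m.factorial * (m + n).factorial) := by
  unfold EG
  have hinj : Function.Injective (fun m : ℕ => 2 * m + n) := fun a b h => by simp at h; exact h
  rw [← hinj.tsum_eq]
  · refine tsum_congr fun m => ?_
    beta_reduce
    have := bC_closed lam mu (2 * m + n) (m + n) m (by ring)
    rw [show ((m + n : ℕ) : ℤ) - m = n by push_cast; ring] at this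
    rw [this, show m + n + m = m + (m + n) by ring]
    have h2 := Nat.choose_symm_add (a := m) (b := m + n)
    have h3 := Nat.add_choose_mul_factorial_mul_factorial m (m + n)
    rw [show 2 * m + n = m + (m + n) by ring, ← h3, ← h2]
    have c0 : 0 < ((m + (m + n)).choose m) := Nat.choose_pos (by omega)
    push_cast
    have c1 : (((m + (m + n)).choose m : ℕ) : ℝ) ≠ 0 := by positivity
    field_simp
  · intro k hk
    have : bC lam mu k n ≠ 0 := by
      intro h; simp [h] at hk
    obtain ⟨u, d, e1, e2⟩ := bC_support _ _ _ _ this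
    exact ⟨d, by simp only; omega⟩

lemma EG_bC_neg (lam mu : ℝ) (n : ℕ) (y : ℝ) : EG (fun k => bC lam mu k (-n)) y
    = ∑' m : ℕ, lam ^ m * mu ^ (m + n) * y ^ (2 * m + n) / (m.factorial * (m + n).factorial) := by
  unfold EG
  have hinj : Function.Injective (fun m : ℕ => 2 * m + n) := fun a b h => by simp at h; exact h
  rw [← hinj.tsum_eq]
  · refine tsum_congr fun m => ?_
    beta_reduce
    have := bC_closed lam mu (2 * m + n) m (m + n) (by ring)
    rw [show (m : ℤ) - (m + n : ℕ) = -n by push_cast; ring] at this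
    rw [this]
    have h3 := Nat.add_choose_mul_factorial_mul_factorial m (m + n)
    rw [← Nat.choose_symm_add (a := m) (b := m + n)] at h3
    rw [show 2 * m + n = m + (m + n) by ring, ← h3]
    have c0 : 0 < ((m + (m + n)).choose m) := Nat.choose_pos (by omega)
    push_cast
    have c1 : (((m + (m + n)).choose m : ℕ) : ℝ) ≠ 0 := by positivity
    field_simp
  · intro k hk
    have : bC lam mu k (-n) ≠ 0 := by
      intro h; simp [h] at hk
    obtain ⟨u, d, e1, e2⟩ := bC_support _ _ _ _ this
    exact ⟨u, by simp only; omega⟩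

lemma bessel_pos (n : ℕ) (x : ℝ) : besselI n (2 * x)
    = ∑' m : ℕ, x ^ (2 * m + n) / (m.factorial * (m + n).factorial) := by
  unfold besselI
  refine tsum_congr fun m => ?_
  rw [show (m : ℝ) + ((n : ℤ) : ℝ) + 1 = ((m + n : ℕ) : ℝ) + 1 by push_cast; ring,
    Real.Gamma_nat_eq_factorial, show 2 * (m : ℤ) + n = ((2 * m + n : ℕ) : ℤ) by push_cast; ring,
    zpow_natCast, mul_div_cancel_left₀ _ (two_ne_zero)]
  ring

lemma bessel_neg (n : ℕ) (x : ℝ) : besselI (-n) (2 * x)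
    = ∑' m : ℕ, x ^ (2 * m + n) / (m.factorial * (m + n).factorial) := by
  unfold besselI
  have hinj : Function.Injective (fun m : ℕ => m + n) := fun a b h => by simp at h; exact h
  rw [← hinj.tsum_eq]
  · refine tsum_congr fun m => ?_
    rw [show ((m + n : ℕ) : ℝ) + ((-n : ℤ) : ℝ) + 1 = (m : ℝ) + 1 by push_cast; ring,
      Real.Gamma_nat_eq_factorial, show 2 * ((m + n : ℕ) : ℤ) + -n = ((2 * m + n : ℕ) : ℤ) by push_cast; ring,
      zpow_natCast, mul_div_cancel_left₀ _ (two_ne_zero)]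
    ring
  · intro m hm
    by_contra hc
    have hlt : m < n := by
      by_contra h'
      exact hc ⟨m - n, by simp only; omega⟩
    apply hm
    have : Real.Gamma ((m : ℝ) + ((-n : ℤ) : ℝ) + 1) = 0 := by
      rw [Real.Gamma_eq_zero_iff]
      refine ⟨n - 1 - m, ?_⟩
      rw [Nat.sub_sub, Nat.cast_sub (by omega)]
      push_cast; ring
    beta_reduce
    rw [this]; simp

lemma sqrt_facts {lam mu : ℝ} (hl : 0 < lam) (hm : 0 < mu) : ∃ x z : ℝ, 0 < x ∧ 0 < z ∧ lam = x ^ 2 ∧ mu = z ^ 2 ∧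
    Real.sqrt (lam * mu) = x * z ∧ Real.sqrt (lam / mu) = x / z :=
  ⟨√lam, √mu, by positivity, by positivity, (Real.sq_sqrt hl.le).symm, (Real.sq_sqrt hm.le).symm,
    Real.sqrt_mul hl.le _, Real.sqrt_div hl.le _⟩

lemma bessel_q_neg {lam mu : ℝ} (hl : 0 < lam) (hm : 0 < mu) (n : ℕ) (y : ℝ) :
    besselI n (2 * Real.sqrt (lam * mu) * y) / Real.sqrt (lam / mu) ^ n = EG (fun k => bC lam mu k (-n)) y := by
  obtain ⟨x, z, hx, hz, rfl, rfl, e1, e2⟩ := sqrt_facts hl hm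
  rw [e1, e2, EG_bC_neg, mul_assoc, bessel_pos, ← tsum_div_const]
  refine tsum_congr fun m => ?_
  rw [div_pow]
  field_simp
  ring

lemma bessel_q_pos {lam mu : ℝ} (hl : 0 < lam) (hm : 0 < mu) (ν : ℤ) (y : ℝ) :
    Real.sqrt (lam / mu) ^ ν * besselI ν (2 * Real.sqrt (lam * mu) * y) = EG (fun k => bC lam mu k ν) y := by
  rcases Int.eq_nat_or_neg ν with ⟨n, rfl | rfl⟩
  · obtain ⟨x, z, hx, hz, rfl, rfl, e1, e2⟩ := sqrt_facts hl hm
    rw [e1, e2, EG_bC_pos, mul_assoc, bessel_pos, ← tsum_mul_left]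
    refine tsum_congr fun m => ?_
    rw [zpow_natCast, div_pow]
    field_simp
    ring
  · rw [← bessel_q_neg hl hm, mul_assoc, bessel_neg, bessel_pos, zpow_neg, zpow_natCast]
    ring

lemma q_ident {lam mu : ℝ} (hl : 0 < lam) (hm : 0 < mu) (n : ℤ) (y : ℝ) :
    (n : ℝ) * EG (fun k => bC lam mu k n) y
      = y * (lam * EG (fun k => bC lam mu k (n - 1)) y - mu * EG (fun k => bC lam mu k (n + 1)) y) := by
  have h1 := (eg_hasSum (Bd_bC hl hm (n - 1)) y).mul_left lam
  have h2 := (eg_hasSum (Bd_bC hl hm (n + 1)) y).mul_left mu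
  have h3 := (h1.sub h2).mul_left y
  rw [← h3.tsum_eq]
  unfold EG
  rw [← tsum_mul_left, ((eg_summable (Bd_bC hl hm n) y).mul_left (n : ℝ)).tsum_eq_zero_add]
  have : (n : ℝ) * (bC lam mu 0 n * y ^ 0 / (Nat.factorial 0 : ℕ)) = 0 := by
    rw [bC_zero]; split_ifs with h <;> simp [h]
  rw [this, zero_add]
  refine tsum_congr fun k => ?_
  have := bC_ident lam mu k n
  rw [Nat.factorial_succ]
  push_cast
  field_simp
  rw [this]
  ring

lemma q_sum {lam mu : ℝ} (hl : 0 < lam) (hm : 0 < mu) (l : ℤ) {y : ℝ} (hy : 0 < y) :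
    HasSum (fun j : ℕ => EG (fun k => bC lam mu k (-(l + j))) y) (EG (fun k => sC lam mu k l) y) := by
  have hrow : ∀ k : ℕ, HasSum (fun j : ℕ => bC lam mu k (-(l + j))) (sC lam mu k l) := by
    intro k
    rw [hasSum_iff_tendsto_nat_of_nonneg (fun j => bC_nonneg hl hm k _)]
    have e : ∀ N : ℕ, ∑ j ∈ Finset.range N, bC lam mu k (-(l + j)) = sC lam mu k l - sC lam mu k (l + N) := by
      intro N
      have := Finset.sum_range_sub' (fun j : ℕ => sC lam mu k (l + j)) N
      simp only [Nat.cast_zero, add_zero] at this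
      rw [← this]
      refine Finset.sum_congr rfl fun j _ => ?_
      unfold bC
      push_cast
      rw [neg_neg, add_assoc]
    simp only [e]
    refine tendsto_const_nhds.congr' ?_
    filter_upwards [Filter.eventually_gt_atTop ((k - l).toNat)] with N hN
    rw [sC_eq_zero _ _ _ (l + N) (by omega), sub_zero]
  have hrow' : ∀ k : ℕ, HasSum (fun j : ℕ => bC lam mu k (-(l + j)) * y ^ k / k.factorial)
      (sC lam mu k l * y ^ k / k.factorial) := fun k => ((hrow k).mul_right _).div_const _
  have hS : Summable (fun z : ℕ × ℕ => bC lam mu z.1 (-(l + z.2)) * y ^ z.1 / z.1.factorial) := by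
    rw [summable_prod_of_nonneg]
    · refine ⟨fun k => (hrow' k).summable, ?_⟩
      simp only [fun k => (hrow' k).tsum_eq]
      exact eg_summable (Bd_sC hl hm l) y
    · intro z
      have := bC_nonneg hl hm z.1 (-(l + z.2))
      simp only [Pi.zero_apply]
      positivity
  have hS' : Summable (fun z : ℕ × ℕ => bC lam mu z.2 (-(l + z.1)) * y ^ z.2 / z.2.factorial) := hS.prod_symm
  have h1 := hS'.prod.hasSum
  have h2 := hS'.tsum_comm (f := fun (j k : ℕ) => bC lam mu k (-(l + j)) * y ^ k / k.factorial)
  unfold EG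
  simp only [fun k => (hrow' k).tsum_eq] at h2
  rw [h2]
  exact h1


lemma eg_add {a b : ℕ → ℝ} (ha : Bd a) (hb : Bd b) (y : ℝ) :
    EG (fun k => a k + b k) y = EG a y + EG b y := by
  rw [← ((eg_hasSum ha y).add (eg_hasSum hb y)).tsum_eq]
  exact tsum_congr fun k => by ring

lemma eg_smul (c : ℝ) (a : ℕ → ℝ) (y : ℝ) : EG (fun k => c * a k) y = c * EG a y := by
  unfold EG
  rw [← tsum_mul_left]
  exact tsum_congr fun k => by ring

lemma eg_sub {a b : ℕ → ℝ} (ha : Bd a) (hb : Bd b) (y : ℝ) :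
    EG (fun k => a k - b k) y = EG a y - EG b y := by
  rw [← ((eg_hasSum ha y).sub (eg_hasSum hb y)).tsum_eq]
  exact tsum_congr fun k => by ring

/-- exponential twist -/
noncomputable def tw (c : ℝ) (b : ℕ → ℝ) (k : ℕ) : ℝ :=
  ∑ p ∈ Finset.HasAntidiagonal.antidiagonal k, (k.choose p.1 : ℝ) * ((-c) ^ p.1 * b p.2)

lemma tw_zero (c : ℝ) (b : ℕ → ℝ) : tw c b 0 = b 0 := by simp [tw]

lemma tw_succ (c : ℝ) (b : ℕ → ℝ) (k : ℕ) :
    tw c b (k + 1) = tw c (fun k => b (k + 1)) k - c * tw c b k := by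
  unfold tw
  rw [Finset.sum_antidiagonal_choose_succ_mul (fun i j => (-c) ^ i * b j) k, sub_eq_add_neg,
    Finset.mul_sum, ← Finset.sum_neg_distrib]
  congr 1
  refine Finset.sum_congr rfl fun p hp => ?_
  rw [Finset.HasAntidiagonal.mem_antidiagonal] at hp
  rw [Nat.choose_symm_of_eq_add (by omega : k = p.2 + p.1), pow_succ]
  ring

lemma tw_lin (c p q : ℝ) (a b : ℕ → ℝ) (k : ℕ) :
    tw c (fun k => p * a k + q * b k) k = p * tw c a k + q * tw c b k := by
  unfold tw
  rw [Finset.mul_sum, Finset.mul_sum, ← Finset.sum_add_distrib]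
  exact Finset.sum_congr rfl fun _ _ => by ring

lemma tw_smul (c p : ℝ) (a : ℕ → ℝ) (k : ℕ) : tw c (fun k => p * a k) k = p * tw c a k := by
  unfold tw
  rw [Finset.mul_sum]
  exact Finset.sum_congr rfl fun _ _ => by ring

lemma tw_add (c : ℝ) (a b : ℕ → ℝ) (k : ℕ) :
    tw c (fun k => a k + b k) k = tw c a k + tw c b k := by
  simpa using tw_lin c 1 1 a b k

lemma Bd.tw {b : ℕ → ℝ} (hb : Bd b) (c : ℝ) : Bd (tw c b) := by
  obtain ⟨C, K, hC, hK, hb⟩ := hb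
  refine ⟨C, |c| + K, hC, by positivity, fun k => ?_⟩
  rw [(Commute.all _ _).add_pow', Finset.mul_sum]
  refine (Finset.abs_sum_le_sum_abs _ _).trans (Finset.sum_le_sum fun p _ => ?_)
  rw [abs_mul, abs_mul, abs_pow, abs_neg, Nat.abs_cast, nsmul_eq_mul]
  calc (k.choose p.1 : ℝ) * (|c| ^ p.1 * |b p.2|) ≤ (k.choose p.1 : ℝ) * (|c| ^ p.1 * (C * K ^ p.2)) := by
        gcongr; exact hb _
    _ = _ := by ring

lemma eg_tw {b : ℕ → ℝ} (hb : Bd b) (c y : ℝ) : rexp (-c * y) * EG b y = EG (tw c b) y := by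
  rw [← (exp_hs (-c * y)).tsum_eq]
  unfold EG
  rw [tsum_mul_tsum_eq_tsum_sum_antidiagonal_of_summable_norm (exp_hs (-c * y)).summable.norm
    (eg_summable hb y).norm]
  refine tsum_congr fun k => ?_
  unfold tw
  rw [Finset.sum_mul, Finset.sum_div]
  refine Finset.sum_congr rfl fun p hp => ?_
  rw [Finset.HasAntidiagonal.mem_antidiagonal] at hp
  subst hp
  rw [← Nat.add_choose_mul_factorial_mul_factorial p.1 p.2]
  have h2 := Nat.choose_symm_add (a := p.1) (b := p.2)
  rw [h2]
  have c0 : 0 < ((p.1 + p.2).choose p.2) := Nat.choose_pos (by omega)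
  push_cast
  rw [mul_pow, pow_add]
  field_simp

/-- shift right -/
def itg (b : ℕ → ℝ) : ℕ → ℝ
  | 0 => 0
  | k + 1 => b k

lemma Bd.itg {b : ℕ → ℝ} (hb : Bd b) : Bd (itg b) := by
  obtain ⟨C, K, hC, hK, hb⟩ := hb
  refine ⟨C, K + 1, hC, by positivity, fun k => ?_⟩
  rcases k with _ | k
  · simpa [_root_.itg] using hC
  · refine (hb k).trans ?_
    gcongr
    calc K ^ k ≤ (K + 1) ^ k := by gcongr; linarith
      _ ≤ (K + 1) ^ (k + 1) := pow_le_pow_right₀ (by linarith) (by omega)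

lemma eg_itg {b : ℕ → ℝ} (hb : Bd b) {y : ℝ} (hy : 0 < y) (g : ℝ → ℝ) (hg : ∀ u, 0 < u → g u = EG b u) :
    ∫ u in (0:ℝ)..y, g u = EG (itg b) y := by
  rw [intervalIntegral.integral_of_le hy.le]
  have e1 : ∫ u in Set.Ioc 0 y, g u = ∫ u in Set.Ioc 0 y, ∑' k : ℕ, b k / k.factorial * u ^ k := by
    refine setIntegral_congr_fun measurableSet_Ioc fun u hu => ?_
    beta_reduce
    rw [hg u hu.1]
    exact tsum_congr fun k => by ring
  have hv : ∀ k : ℕ, ∫ u in Set.Ioc 0 y, u ^ k = y ^ (k + 1) / (k + 1) := by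
    intro k
    rw [← intervalIntegral.integral_of_le hy.le, integral_pow]
    simp
  have hs := hasSum_integral_of_summable_integral_norm (μ := volume.restrict (Set.Ioc 0 y))
    (F := fun (k : ℕ) u => b k / k.factorial * u ^ k) (fun k => by
      refine Integrable.const_mul ?_ _
      exact (continuous_pow k).integrableOn_Ioc) ?_
  · rw [e1, ← hs.tsum_eq]
    unfold EG
    rw [(eg_summable hb.itg y).tsum_eq_zero_add]
    simp only [itg, zero_mul, zero_div, zero_add]
    refine tsum_congr fun k => ?_
    rw [integral_const_mul, hv, Nat.factorial_succ]
    push_cast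
    field_simp
  · have := (summable_nat_add_iff 1).mpr (eg_summable hb.itg y).abs
    refine this.congr fun k => ?_
    have : ∫ u in Set.Ioc 0 y, ‖b k / k.factorial * u ^ k‖ = ∫ u in Set.Ioc 0 y, |b k| / k.factorial * u ^ k := by
      refine setIntegral_congr_fun measurableSet_Ioc fun u hu => ?_
      have : 0 < u := hu.1
      beta_reduce
      rw [Real.norm_eq_abs, abs_mul, abs_div, Nat.abs_cast, abs_of_pos (pow_pos this k)]
    rw [this, integral_const_mul, hv, Nat.factorial_succ, abs_div, abs_mul, Nat.abs_cast,
      abs_of_pos (pow_pos hy _)]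
    simp only [itg]
    push_cast
    field_simp

/-- coefficients of the solution -/
noncomputable def cf (c xi : ℝ) (V W : ℕ → ℝ) (k : ℕ) : ℝ := xi * itg (tw c V) k + tw c W k

lemma Bd.cf {V W : ℕ → ℝ} (hV : Bd V) (hW : Bd W) (c xi : ℝ) : Bd (cf c xi V W) :=
  ((hV.tw c).itg.smul xi).add (hW.tw c)

lemma cf_succ (c xi p q : ℝ) {V W V1 W1 V2 W2 : ℕ → ℝ} (hV : ∀ k, V (k + 1) = p * V1 k + q * V2 k)
    (hW : ∀ k, W (k + 1) = p * W1 k + q * W2 k) (k : ℕ) :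
    cf c xi V W (k + 1) = -c * cf c xi V W k + p * cf c xi V1 W1 k + q * cf c xi V2 W2 k
      + (xi * V 0) * (if k = 0 then 1 else 0) := by
  unfold cf
  simp only [itg]
  rw [tw_succ c W]
  simp only [hW]
  rw [tw_lin]
  rcases k with _ | k
  · simp only [itg, tw_zero, if_true]
    ring
  · simp only [itg]
    rw [tw_succ c V]
    simp only [hV]
    rw [tw_lin]
    simp
    ring

/-- V coefficients -/
noncomputable def Vc (lam mu : ℝ) (n k : ℕ) : ℝ :=
  (lam / mu) ^ n * (sC lam mu k n - lam / mu * sC lam mu k (n + 2))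

/-- W coefficients -/
noncomputable def Wf (lam mu : ℝ) (i n k : ℕ) : ℝ :=
  bC lam mu k (n - i) + ((lam / mu) ^ n * sC lam mu k (n + i + 1) - (lam / mu) ^ (n + 1) * sC lam mu k (n + i + 2))

lemma Bd_Vc {lam mu : ℝ} (hl : 0 < lam) (hm : 0 < mu) (n : ℕ) : Bd (Vc lam mu n) :=
  ((Bd_sC hl hm _).sub ((Bd_sC hl hm _).smul _)).smul _

lemma Bd_Wf {lam mu : ℝ} (hl : 0 < lam) (hm : 0 < mu) (i n : ℕ) : Bd (Wf lam mu i n) :=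
  (Bd_bC hl hm _).add (((Bd_sC hl hm _).smul _).sub ((Bd_sC hl hm _).smul _))

lemma ratio_ex {lam mu : ℝ} (hm : 0 < mu) : ∃ r, lam = r * mu := ⟨lam / mu, by field_simp⟩

lemma Vc_rec {lam mu : ℝ} (hm : 0 < mu) (n k : ℕ) :
    Vc lam mu (n + 1) (k + 1) = lam * Vc lam mu n k + mu * Vc lam mu (n + 2) k := by
  unfold Vc
  rw [sC_succ, sC_succ]
  push_cast
  rw [show (n : ℤ) + 1 - 1 = n by ring, show (n : ℤ) + 1 + 2 - 1 = n + 2 by ring,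
    show (n : ℤ) + 1 + 1 = n + 2 by ring, show (n : ℤ) + 1 + 2 + 1 = n + 4 by ring,
    show (n : ℤ) + 2 + 2 = n + 4 by ring]
  obtain ⟨r, rfl⟩ := ratio_ex (lam := lam) hm
  rw [mul_div_cancel_right₀ _ hm.ne']
  ring

lemma Vc_rec0 {lam mu : ℝ} (hm : 0 < mu) (k : ℕ) :
    Vc lam mu 0 (k + 1) = mu * Vc lam mu 0 k + mu * Vc lam mu 1 k := by
  have h := bC_ident lam mu k 0
  have hk : (k : ℝ) + 1 ≠ 0 := by positivity
  have h' : lam * bC lam mu k (-1) - mu * bC lam mu k 1 = 0 := by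
    simpa [hk] using h.symm
  unfold bC at h'
  norm_num at h'
  unfold Vc
  rw [sC_succ, sC_succ]
  norm_num
  field_simp
  linear_combination (-mu) * h'

lemma Wf_rec {lam mu : ℝ} (hm : 0 < mu) (i n k : ℕ) :
    Wf lam mu i (n + 1) (k + 1) = lam * Wf lam mu i n k + mu * Wf lam mu i (n + 2) k := by
  unfold Wf
  rw [sC_succ, sC_succ, bC_succ]
  push_cast
  rw [show (n : ℤ) + 1 - i - 1 = n - i by ring, show (n : ℤ) + 1 - i + 1 = n + 2 - i by ring,
    show (n : ℤ) + 1 + i + 1 + 1 = n + i + 3 by ring, show (n : ℤ) + 1 + i + 1 - 1 = n + i + 1 by ring,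
    show (n : ℤ) + 1 + i + 2 + 1 = n + i + 4 by ring, show (n : ℤ) + 1 + i + 2 - 1 = n + i + 2 by ring,
    show (n : ℤ) + 2 + i + 1 = n + i + 3 by ring, show (n : ℤ) + 2 + i + 2 = n + i + 4 by ring,
    pow_succ]
  obtain ⟨r, rfl⟩ := ratio_ex (lam := lam) hm
  rw [mul_div_cancel_right₀ _ hm.ne']
  ring

lemma Wf_zero (lam mu : ℝ) (i k : ℕ) :
    Wf lam mu i 0 k = sC lam mu k i - lam / mu * sC lam mu k (i + 2) := by
  unfold Wf bC
  simp

lemma Wf_rec0 {lam mu : ℝ} (hm : 0 < mu) (i k : ℕ) :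
    Wf lam mu i 0 (k + 1) = mu * Wf lam mu i 0 k + mu * Wf lam mu i 1 k := by
  rw [Wf_zero, Wf_zero]
  unfold Wf bC
  rw [sC_succ, sC_succ]
  push_cast
  rw [show -(1 - (i : ℤ)) = i - 1 by ring, show (i : ℤ) - 1 + 1 = i by ring,
    show (i : ℤ) + 2 + 1 = i + 3 by ring, show (i : ℤ) + 2 - 1 = i + 1 by ring,
    show 1 + (i : ℤ) + 1 = i + 2 by ring, show 1 + (i : ℤ) + 2 = i + 3 by ring]
  field_simp
  ring

lemma Vc_init (lam mu : ℝ) (n : ℕ) : Vc lam mu n 0 = if n = 0 then 1 else 0 := by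
  unfold Vc sC
  rcases n with _ | n
  · simp
  · rw [if_neg (by push_cast; omega), if_neg (by push_cast; omega)]; simp

lemma bsum {lam mu : ℝ} (hl : 0 < lam) (hm : 0 < mu) (n : ℕ) {y : ℝ} (hy : 0 < y) :
    HasSum (fun k : ℕ => ((n : ℝ) + k + 1) * (besselI ((n : ℤ) + k + 1) (2 * Real.sqrt (lam * mu) * y)
      / Real.sqrt (lam / mu) ^ (n + k + 1)))
      (y * (mu * EG (fun k => sC lam mu k n - lam / mu * sC lam mu k (n + 2)) y)) := by
  have h1 := (q_sum hl hm (n : ℤ) hy).mul_left mu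
  have h2 := (q_sum hl hm ((n : ℤ) + 2) hy).mul_left lam
  have h3 := (h1.sub h2).mul_left y
  have e : y * (mu * EG (fun k => sC lam mu k n - lam / mu * sC lam mu k (n + 2)) y)
    = y * (mu * EG (fun k => sC lam mu k n) y - lam * EG (fun k => sC lam mu k ((n : ℤ) + 2)) y) := by
    rw [eg_sub (Bd_sC hl hm _) ((Bd_sC hl hm _).smul _), eg_smul]
    field_simp
  rw [e]
  refine h3.congr_fun fun k => ?_
  have q := bessel_q_neg hl hm (n + k + 1) y
  push_cast at q
  rw [q]
  have id := q_ident hl hm (-((n : ℤ) + k + 1)) y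
  push_cast at id
  rw [show -((n : ℤ) + k + 1) - 1 = -((n : ℤ) + 2 + k) by ring,
    show -((n : ℤ) + k + 1) + 1 = -((n : ℤ) + k) by ring] at id
  linear_combination -id

lemma bint {lam mu : ℝ} (hl : 0 < lam) (hm : 0 < mu) (c : ℝ) (n : ℕ) {y : ℝ} (hy : 0 < y) :
    y⁻¹ * rexp (-c * y) * ∑' k : ℕ, ((n : ℝ) + k + 1) * (besselI ((n : ℤ) + k + 1) (2 * Real.sqrt (lam * mu) * y)
      / Real.sqrt (lam / mu) ^ (n + k + 1))
    = mu * EG (tw c (fun k => sC lam mu k n - lam / mu * sC lam mu k (n + 2))) y := by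
  rw [(bsum hl hm n hy).tsum_eq, ← eg_tw ((Bd_sC hl hm _).sub ((Bd_sC hl hm _).smul _))]
  field_simp


lemma itg_smul (p : ℝ) (a : ℕ → ℝ) : itg (fun k => p * a k) = fun k => p * itg a k := by
  funext k
  rcases k with _ | k <;> simp [itg]

lemma ml_I2 {α lam mu : ℝ} (hα : α ∈ Set.Ioo (0:ℝ) 1) (hl : 0 < lam) (hm : 0 < mu) (c p : ℝ) (n : ℕ)
    {t : ℝ} (ht : 0 < t) (F betaf : ℝ → ℝ) (hbeta : ∀ x, betaf x = x⁻¹ * rexp (-c * x))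
    (hF : ∀ u, 0 < u → F u = p * ∑' k : ℕ, ((n : ℝ) + k + 1) *
      (besselI ((n : ℤ) + k + 1) (2 * Real.sqrt (lam * mu) * u) / Real.sqrt (lam / mu) ^ (n + k + 1))) :
    ∫ y in Set.Ioi (0:ℝ), subDensity α y t * ∫ u in (0:ℝ)..y, betaf u * F u
      = (p * mu) * ML α (itg (tw c (fun k => sC lam mu k n - lam / mu * sC lam mu k (n + 2)))) t := by
  have hB : Bd (tw c (fun k => sC lam mu k n - lam / mu * sC lam mu k (n + 2))) :=
    ((Bd_sC hl hm _).sub ((Bd_sC hl hm _).smul _)).tw c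
  rw [← ml_smul]
  refine ml_int hα (hB.itg.smul _) ht _ fun y hy => ?_
  rw [eg_itg (hB.smul (p * mu)) hy, itg_smul]
  intro u hu
  rw [hF u hu, hbeta, eg_smul, mul_assoc p, ← bint hl hm c n hu]
  ring

lemma tw_V (c lam mu : ℝ) (n : ℕ) : itg (tw c (Vc lam mu n)) = fun k => (lam / mu) ^ n *
    itg (tw c (fun k => sC lam mu k n - lam / mu * sC lam mu k (n + 2))) k := by
  rw [← itg_smul]
  congr 1
  funext k
  exact tw_smul c _ _ k

lemma ml_cf {α : ℝ} (hα : α ∈ Set.Ioo (0:ℝ) 1) {V W : ℕ → ℝ} (hV : Bd V) (hW : Bd W) (c xi : ℝ) {t : ℝ} (ht : 0 < t) :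
    ML α (cf c xi V W) t = xi * ML α (itg (tw c V)) t + ML α (tw c W) t := by
  rw [← ml_smul, ← ml_add hα ((hV.tw c).itg.smul xi) (hW.tw c) ht]
  rfl

lemma ml_comb {α : ℝ} (hα : α ∈ Set.Ioo (0:ℝ) 1) {a b d e : ℕ → ℝ} (ha : Bd a) (hb : Bd b) (hd : Bd d)
    (p q r s : ℝ) {t : ℝ} (ht : 0 < t)
    (he : ∀ k, e k = p * a k + q * b k + r * d k + s * (if k = 0 then 1 else 0)) :
    ML α e t = p * ML α a t + q * ML α b t + r * ML α d t + s := by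
  have h0 : Bd (fun k => if k = 0 then (1:ℝ) else 0) :=
    ⟨1, 1, zero_le_one, zero_le_one, fun k => by beta_reduce; split_ifs <;> simp⟩
  rw [show e = fun k => p * a k + q * b k + r * d k + s * (if k = 0 then 1 else 0) from funext he,
    ml_add hα (((ha.smul p).add (hb.smul q)).add (hd.smul r)) (h0.smul s) ht,
    ml_add hα ((ha.smul p).add (hb.smul q)) (hd.smul r) ht, ml_add hα (ha.smul p) (hb.smul q) ht,
    ml_smul, ml_smul, ml_smul, ml_smul, ml_one, mul_one]

theorem stmt3 (α lam mu xi : ℝ) (hα : α ∈ Set.Ioo (0:ℝ) 1) (hlam : 0 < lam)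
    (hmu : 0 < mu) (hxi : 0 ≤ xi) (i : ℕ)
    (betaf : ℝ → ℝ) (hbeta : ∀ x : ℝ, betaf x = x⁻¹ * Real.exp (-(lam + mu + xi) * x))
    (Pa : ℕ → ℝ → ℝ)
    (hPa0 : ∀ t > (0:ℝ),
      Pa 0 t
        = (1 / mu) * (∫ y in Set.Ioi (0:ℝ), subDensity α y t * betaf y *
              ∑' k : ℕ, ((i : ℝ) + k + 1)
                  * besselI ((i : ℤ) + k + 1) (2 * Real.sqrt (lam * mu) * y)
                  / Real.sqrt (lam / mu) ^ (i + k + 1))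
          + (xi / mu) * (∫ y in Set.Ioi (0:ℝ), subDensity α y t *
              ∫ u in (0:ℝ)..y, betaf u *
                ∑' k : ℕ, ((k : ℝ) + 1)
                    * besselI ((k : ℤ) + 1) (2 * Real.sqrt (lam * mu) * u)
                    / Real.sqrt (lam / mu) ^ (k + 1)))
    (hPan : ∀ n : ℕ, 1 ≤ n → ∀ t > (0:ℝ),
      Pa n t
        = xi * Real.sqrt (lam / mu) ^ (n + 1) / Real.sqrt (lam * mu)
              * (∫ y in Set.Ioi (0:ℝ), subDensity α y t *
                  ∫ u in (0:ℝ)..y, betaf u *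
                    ∑' k : ℕ, ((n : ℝ) + k + 1)
                        * besselI ((n : ℤ) + k + 1) (2 * Real.sqrt (lam * mu) * u)
                        / Real.sqrt (lam / mu) ^ (k + 1))
          + (∫ y in Set.Ioi (0:ℝ), Real.exp (-(lam + mu + xi) * y) * subDensity α y t *
              ∑' m : ℕ,
                (besselI ((m : ℤ) + n + i + 1) (2 * Real.sqrt (lam * mu) * y)
                    / Real.sqrt (lam / mu) ^ ((m : ℤ) - n + i + 1)
                  - besselI ((m : ℤ) + n + i + 2) (2 * Real.sqrt (lam * mu) * y)
                    / Real.sqrt (lam / mu) ^ ((m : ℤ) - n + i)))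
          + ∫ y in Set.Ioi (0:ℝ),
              Real.sqrt (lam / mu) ^ ((n : ℤ) - i)
                * besselI ((n : ℤ) - i) (2 * Real.sqrt (lam * mu) * y)
                * Real.exp (-(lam + mu + xi) * y) * subDensity α y t)
    (hPainit : ∀ n : ℕ, Pa n 0 = if i = n then 1 else 0) :
    (∀ t > (0:ℝ), caputoD α (Pa 0) t = -(lam + xi) * Pa 0 t + mu * Pa 1 t + xi) ∧
    (∀ n : ℕ, 1 ≤ n → ∀ t > (0:ℝ),
      caputoD α (Pa n) t
        = -(lam + mu + xi) * Pa n t + lam * Pa (n - 1) t + mu * Pa (n + 1) t) := by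
  set c := lam + mu + xi with hc
  obtain ⟨x, z, hx, hz, hlx, hmz, e1, e2⟩ := sqrt_facts hlam hmu
  have hρ : 0 < Real.sqrt (lam / mu) := by positivity
  have hρ2 : Real.sqrt (lam / mu) ^ 2 = lam / mu := Real.sq_sqrt (by positivity)
  have p1 : ∀ n : ℕ, (lam / mu) ^ n = Real.sqrt (lam / mu) ^ (2 * n) := fun n => by
    rw [pow_mul, hρ2]
  have e3 : Real.sqrt (lam * mu) = Real.sqrt (lam / mu) * mu := by
    rw [e1, e2, hmz]; field_simp
  have hP : ∀ n : ℕ, ∀ t > (0:ℝ), Pa n t = ML α (cf c xi (Vc lam mu n) (Wf lam mu i n)) t := by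
    intro n t ht
    rw [ml_cf hα (Bd_Vc hlam hmu n) (Bd_Wf hlam hmu i n) c xi ht, tw_V, ml_smul]
    rcases Nat.eq_zero_or_pos n with rfl | hn
    · rw [hPa0 t ht]
      rw [ml_I2 hα hlam hmu c 1 0 ht _ betaf hbeta (by
        intro u hu
        rw [one_mul]
        refine tsum_congr fun k => ?_
        rw [Nat.cast_zero, Nat.cast_zero, zero_add, zero_add, zero_add]
        ring)]
      have hB : Bd (tw c (Wf lam mu i 0)) := (Bd_Wf hlam hmu i 0).tw c
      rw [ml_int hα (hB.smul mu) ht _ (by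
        intro y hy
        rw [eg_smul, show Wf lam mu i 0 = fun k => sC lam mu k i - lam / mu * sC lam mu k (i + 2) from
          funext (Wf_zero lam mu i), ← bint hlam hmu c i hy, hbeta]
        rw [mul_assoc]
        congr 2
        refine tsum_congr fun k => ?_
        ring), ml_smul]
      field_simp
      ring
    · rw [hPan n hn t ht]
      rw [ml_I2 hα hlam hmu c (Real.sqrt (lam / mu) ^ n) n ht _ betaf hbeta (by
        intro u hu
        rw [← tsum_mul_left]
        refine tsum_congr fun k => ?_
        rw [add_assoc n k 1, pow_add _ n]
        field_simp)]
      have hQ : Bd (fun k => bC lam mu k ((n : ℤ) - i)) := Bd_bC hlam hmu _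
      have hU1 : Bd (fun k => (lam / mu) ^ n * sC lam mu k (n + i + 1)) := (Bd_sC hlam hmu _).smul _
      have hU2 : Bd (fun k => (lam / mu) ^ (n + 1) * sC lam mu k (n + i + 2)) := (Bd_sC hlam hmu _).smul _
      have hU := hU1.sub hU2
      rw [ml_int hα (hU.tw c) ht (fun y => rexp (-c * y) * subDensity α y t * _) (by
        intro y hy
        rw [← eg_tw hU, eg_sub hU1 hU2, eg_smul, eg_smul]
        have s1 := (q_sum hlam hmu ((n : ℤ) + i + 1) hy).mul_left ((lam / mu) ^ n)
        have s2 := (q_sum hlam hmu ((n : ℤ) + i + 2) hy).mul_left ((lam / mu) ^ (n + 1))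
        rw [← (s1.sub s2).tsum_eq, mul_comm (rexp _), mul_assoc]
        congr 2
        refine tsum_congr fun m => ?_
        have q1 := bessel_q_neg hlam hmu (m + n + i + 1) y
        have q2 := bessel_q_neg hlam hmu (m + n + i + 2) y
        push_cast at q1 q2
        rw [show -((n : ℤ) + i + 1 + m) = -((m : ℤ) + n + i + 1) by ring,
          show -((n : ℤ) + i + 2 + m) = -((m : ℤ) + n + i + 2) by ring, ← q1, ← q2, p1, p1,
          show (m : ℤ) - n + i + 1 = ((m + n + i + 1 : ℕ) : ℤ) - ((2 * n : ℕ) : ℤ) by push_cast; ring,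
          show (m : ℤ) - n + i = ((m + n + i + 2 : ℕ) : ℤ) - ((2 * (n + 1) : ℕ) : ℤ) by push_cast; ring,
          zpow_sub₀ hρ.ne', zpow_sub₀ hρ.ne']
        simp only [zpow_natCast]
        field_simp)]
      rw [ml_int hα (hQ.tw c) ht _ (by
        intro y hy
        rw [← eg_tw hQ, bessel_q_pos hlam hmu]
        ring)]
      have hW : ML α (tw c (Wf lam mu i n)) t = ML α (tw c (fun k => bC lam mu k ((n : ℤ) - i))) t
        + ML α (tw c (fun k => (lam / mu) ^ n * sC lam mu k (n + i + 1)
          - (lam / mu) ^ (n + 1) * sC lam mu k (n + i + 2))) t := by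
        rw [← ml_add hα (hQ.tw c) (hU.tw c) ht]
        congr 1
        funext k
        rw [← tw_add]
        rfl
      rw [hW]
      have pre : xi * Real.sqrt (lam / mu) ^ (n + 1) / Real.sqrt (lam * mu) * (Real.sqrt (lam / mu) ^ n * mu)
        = xi * (lam / mu) ^ n := by
        rw [p1, e3]
        field_simp
        ring
      rw [← mul_assoc, pre]
      ring
  have hBd : ∀ n, Bd (cf c xi (Vc lam mu n) (Wf lam mu i n)) := fun n =>
    (Bd_Vc hlam hmu n).cf (Bd_Wf hlam hmu i n) c xi
  constructor
  · intro t ht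
    rw [caputo_ml hα (hBd 0) (fun u hu => hP 0 u hu) ht, hP 0 t ht, hP 1 t ht]
    rw [ml_comb hα (hBd 0) (hBd 0) (hBd 1) (-c) mu mu (xi * Vc lam mu 0 0) ht
      (cf_succ c xi mu mu (Vc_rec0 hmu) (Wf_rec0 hmu i)), Vc_init]
    simp only [if_true, hc]
    ring
  · intro n hn t ht
    obtain ⟨n, rfl⟩ : ∃ m, n = m + 1 := ⟨n - 1, by omega⟩
    rw [caputo_ml hα (hBd (n + 1)) (fun u hu => hP (n + 1) u hu) ht, hP (n + 1) t ht, Nat.add_sub_cancel,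
      hP n t ht, hP (n + 1 + 1) t ht]
    rw [ml_comb hα (hBd (n + 1)) (hBd n) (hBd (n + 2)) (-c) lam mu (xi * Vc lam mu (n + 1) 0) ht
      (cf_succ c xi lam mu (Vc_rec hmu n) (Wf_rec hmu i n)), Vc_init]
    simp
end

section
/- For every α∈(0,1), every y ≥ 0 and every s > 0, the Laplace transform in t of the inverse α-stable subordinator density satisfies ∫_0^∞ e^{−st} t^{−α} M_α(y t^{−α}) dt = s^{α−1} e^{−y s^α}. -/
open MeasureTheory Real

open Filter Topology in
/-- Shifting a horizontal contour. -/
lemma strip_shift (F : ℂ → ℂ) (ψ : ℝ)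
    (hc : ContinuousOn F {z | z.im ∈ Set.uIcc 0 ψ})
    (hd : DifferentiableOn ℂ F {z | z.im ∈ Set.Ioo (min 0 ψ) (max 0 ψ)})
    (B : ℝ → ℝ) (hB : Tendsto B atTop (𝓝 0))
    (hB1 : ∀ᶠ R in atTop, ∀ φ ∈ Set.uIcc 0 ψ, ‖F ((R : ℝ) + φ * Complex.I)‖ ≤ B R)
    (B' : ℝ → ℝ) (hB' : Tendsto B' atTop (𝓝 0))
    (hB2 : ∀ᶠ R in atTop, ∀ φ ∈ Set.uIcc 0 ψ, ‖F (((-R : ℝ) : ℂ) + φ * Complex.I)‖ ≤ B' R) :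
    Tendsto (fun R : ℝ => (∫ x in (-R)..R, F (x : ℂ)) - ∫ x in (-R)..R, F (x + ψ * Complex.I))
      atTop (𝓝 0) := by
  have key : ∀ R : ℝ, (∫ x in (-R)..R, F (x : ℂ)) - (∫ x in (-R)..R, F (x + ψ * Complex.I))
      = Complex.I * (∫ φ in (0:ℝ)..ψ, F (((-R : ℝ) : ℂ) + φ * Complex.I))
        - Complex.I * (∫ φ in (0:ℝ)..ψ, F ((R : ℂ) + φ * Complex.I)) := by
    intro R
    have h := Complex.integral_boundary_rect_eq_zero_of_continuousOn_of_differentiableOn F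
      (⟨-R, 0⟩ : ℂ) (⟨R, ψ⟩ : ℂ) (hc.mono (fun z hz => (Complex.mem_reProdIm.1 hz).2))
      (hd.mono (fun z hz => (Complex.mem_reProdIm.1 hz).2))
    simp only [smul_eq_mul, Complex.ofReal_zero, zero_mul, add_zero] at h
    linear_combination h
  refine squeeze_zero_norm' (a := fun R => B' R * |ψ - 0| + B R * |ψ - 0|) ?_ ?_
  · filter_upwards [hB1, hB2] with R h1 h2
    rw [key R]
    refine (norm_sub_le _ _).trans ?_
    rw [norm_mul, norm_mul, Complex.norm_I, one_mul, one_mul]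
    refine add_le_add ?_ ?_
    · exact intervalIntegral.norm_integral_le_of_norm_le_const
        (fun φ hφ => h2 φ (Set.uIoc_subset_uIcc hφ))
    · exact intervalIntegral.norm_integral_le_of_norm_le_const
        (fun φ hφ => h1 φ (Set.uIoc_subset_uIcc hφ))
  · simpa using (hB'.mul_const |ψ - 0|).add (hB.mul_const |ψ - 0|)

lemma integral_Ioi_eq_exp (g : ℝ → ℂ) :
    ∫ r in Set.Ioi (0:ℝ), g r = ∫ x : ℝ, (Real.exp x : ℂ) * g (Real.exp x) := by
  have h := integral_image_eq_integral_abs_deriv_smul (s := Set.univ) (f := Real.exp)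
    (f' := Real.exp) MeasurableSet.univ (fun x _ => (Real.hasDerivAt_exp x).hasDerivWithinAt)
    Real.exp_injective.injOn g
  rw [Set.image_univ, Real.range_exp] at h
  simpa [abs_of_pos (Real.exp_pos _)] using h

lemma integrable_Ioi_iff_exp (g : ℝ → ℂ) :
    IntegrableOn g (Set.Ioi (0:ℝ)) ↔ Integrable (fun x : ℝ => (Real.exp x : ℂ) * g (Real.exp x)) := by
  have h := integrableOn_image_iff_integrableOn_abs_deriv_smul (s := Set.univ) (f := Real.exp)
    (f' := Real.exp) MeasurableSet.univ (fun x _ => (Real.hasDerivAt_exp x).hasDerivWithinAt)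
    Real.exp_injective.injOn g
  rw [Set.image_univ, Real.range_exp] at h
  simpa [abs_of_pos (Real.exp_pos _)] using h

lemma norm_cexp_ray (u φ : ℝ) :
    ‖Complex.exp (u * Complex.exp (φ * Complex.I))‖ = Real.exp (u * Real.cos φ) := by
  rw [Complex.norm_exp, Complex.re_ofReal_mul, Complex.exp_ofReal_mul_I_re]

lemma integrable_ray (a t c : ℝ) (ha : 0 < a) (htc : 0 < t * c) :
    IntegrableOn (fun r : ℝ => r ^ (a - 1) * Real.exp (-(t * c) * r)) (Set.Ioi 0) := by
  have := integrableOn_rpow_mul_exp_neg_mul_rpow (p := 1) (s := a - 1) (b := t * c)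
    (by linarith) one_pos htc
  simpa using this

open Filter Topology in
lemma gamma_ray (a t ψ : ℝ) (ha : 0 < a) (ht : 0 < t) (hψ : |ψ| < π / 2) :
    Complex.exp ((a * ψ : ℝ) * Complex.I) * ∫ r in Set.Ioi (0:ℝ), ((r ^ (a - 1) : ℝ) : ℂ) *
      Complex.exp ((-(t * r) : ℝ) * Complex.exp (ψ * Complex.I))
    = ((Real.Gamma a * t ^ (-a) : ℝ) : ℂ) := by
  have hcpos : 0 < Real.cos ψ := Real.cos_pos_of_mem_Ioo ⟨by linarith [neg_abs_le ψ], by linarith [le_abs_self ψ]⟩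
  have hint : ∀ φ : ℝ, 0 < Real.cos φ → IntegrableOn (fun r : ℝ => ((r ^ (a - 1) : ℝ) : ℂ) *
      Complex.exp ((-(t * r) : ℝ) * Complex.exp (φ * Complex.I))) (Set.Ioi 0) := by
    intro φ hφ
    refine Integrable.mono' (integrable_ray a t (Real.cos φ) ha (by positivity)) ?_ ?_
    · exact Measurable.aestronglyMeasurable (by fun_prop)
    · filter_upwards [ae_restrict_mem measurableSet_Ioi] with r hr
      rw [norm_mul, norm_cexp_ray, Complex.norm_real, Real.norm_eq_abs,
        abs_of_pos (Real.rpow_pos_of_pos hr _)]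
      apply le_of_eq; congr 2; ring
  set F : ℂ → ℂ := fun z => Complex.exp (a * z - t * Complex.exp z) with hF
  have hFx : ∀ x φ : ℝ, F (x + φ * Complex.I) = Complex.exp ((a * φ : ℝ) * Complex.I) *
      ((Real.exp x : ℂ) * ((((Real.exp x) ^ (a - 1) : ℝ) : ℂ) *
      Complex.exp ((-(t * Real.exp x) : ℝ) * Complex.exp (φ * Complex.I)))) := by
    intro x φ
    rw [← Real.exp_mul]
    simp only [hF, Complex.ofReal_exp, ← Complex.exp_add]
    congr 1
    rw [Complex.exp_add]
    push_cast
    ring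
  have hFn : ∀ x φ : ℝ, ‖F (x + φ * Complex.I)‖ = Real.exp (a * x) * Real.exp (-(t * Real.exp x) * Real.cos φ) := by
    intro x φ
    rw [hFx, norm_mul, Complex.norm_exp_ofReal_mul_I, norm_mul, norm_mul, norm_cexp_ray,
      Complex.norm_real, Complex.norm_real, Real.norm_of_nonneg (Real.exp_pos _).le,
      Real.norm_of_nonneg (by positivity), ← Real.exp_mul, one_mul]
    simp only [← Real.exp_add]
    congr 1; ring
  have hcos : ∀ φ ∈ Set.uIcc 0 ψ, Real.cos ψ ≤ Real.cos φ := by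
    intro φ hφ
    rw [← Real.cos_abs ψ, ← Real.cos_abs φ]
    have : |φ| ≤ |ψ| := by
      have := Set.abs_sub_left_of_mem_uIcc hφ
      simpa using this
    exact Real.cos_le_cos_of_nonneg_of_le_pi (abs_nonneg _) (by linarith [Real.pi_pos]) this
  have hFd : Differentiable ℂ F := by
    intro z; simp only [hF]; fun_prop
  have hsh := strip_shift F ψ hFd.continuous.continuousOn hFd.differentiableOn
    (fun R => Real.exp R ^ a * Real.exp (-(t * Real.cos ψ) * Real.exp R))
    ((tendsto_rpow_mul_exp_neg_mul_atTop_nhds_zero a (t * Real.cos ψ) (by positivity)).comp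
      Real.tendsto_exp_atTop)
    (by
      refine Eventually.of_forall (fun R φ hφ => ?_)
      rw [hFn, ← Real.exp_mul, mul_comm R a]
      have := hcos φ hφ
      gcongr ?_ * Real.exp ?_
      have : 0 < t * Real.exp R := by positivity
      nlinarith)
    (fun R => Real.exp (-(a * R)))
    (Real.tendsto_exp_neg_atTop_nhds_zero.comp (tendsto_id.const_mul_atTop ha))
    (by
      refine Eventually.of_forall (fun R φ hφ => ?_)
      rw [hFn, ← Real.exp_add]
      have := hcos φ hφ
      apply Real.exp_le_exp.2
      have : 0 < t * Real.exp (-R) := by positivity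
      nlinarith)
  have hi : ∀ φ : ℝ, 0 < Real.cos φ → Integrable (fun x : ℝ => F (x + φ * Complex.I)) := by
    intro φ hφ
    simp_rw [hFx]
    exact ((integrable_Ioi_iff_exp _).1 (hint φ hφ)).const_mul _
  have hv : ∀ φ : ℝ, ∫ x : ℝ, F (x + φ * Complex.I) = Complex.exp ((a * φ : ℝ) * Complex.I) *
     ∫ r in Set.Ioi (0:ℝ), ((r ^ (a - 1) : ℝ) : ℂ) *
      Complex.exp ((-(t * r) : ℝ) * Complex.exp (φ * Complex.I)) := by
    intro φ
    simp_rw [hFx]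
    rw [integral_const_mul, integral_Ioi_eq_exp]
  have hi0 := hi 0 (by simp)
  have hv0 := hv 0
  have h1 := (intervalIntegral_tendsto_integral hi0 tendsto_neg_atTop_atBot tendsto_id).sub
    (intervalIntegral_tendsto_integral (hi ψ hcpos) tendsto_neg_atTop_atBot tendsto_id)
  simp only [Complex.ofReal_zero, zero_mul, add_zero, id] at h1 hv0
  have h2 := tendsto_nhds_unique h1 hsh
  rw [← hv ψ, ← sub_eq_zero.1 h2, hv0]
  have h3 := Real.integral_rpow_mul_exp_neg_mul_Ioi ha ht
  rw [one_div, Real.inv_rpow ht.le, ← Real.rpow_neg ht.le, mul_comm] at h3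
  rw [← h3, ← integral_complex_ofReal]
  simp

lemma rpow_le_lin (α ε : ℝ) (h0 : 0 < α) (h1 : α < 1) (hε : 0 < ε) :
    ∃ C : ℝ, ∀ r : ℝ, 0 ≤ r → r ^ α ≤ C + ε * r := by
  refine ⟨(1 - α) * (ε⁻¹ ^ α) ^ (1 - α)⁻¹, fun r hr => ?_⟩
  have h := Real.geom_mean_le_arith_mean2_weighted (w₁ := 1 - α) (w₂ := α)
    (p₁ := (ε⁻¹ ^ α) ^ (1 - α)⁻¹) (p₂ := ε * r) (by linarith) h0.le (by positivity)
    (by positivity) (by ring)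
  rw [← Real.rpow_mul (by positivity), inv_mul_cancel₀ (by linarith), Real.rpow_one,
    ← Real.mul_rpow (by positivity) (by positivity), inv_mul_cancel_left₀ hε.ne'] at h
  have : α * (ε * r) ≤ ε * r := mul_le_of_le_one_left (by positivity) h1.le
  linarith

lemma gamma_refl (a : ℝ) (ha : 0 < a) :
    (Real.Gamma (1 - a))⁻¹ = Real.Gamma a * Real.sin (π * a) / π := by
  have h := Real.Gamma_mul_Gamma_one_sub a
  have hg := (Real.Gamma_pos_of_pos ha).ne'
  have : Real.Gamma (1 - a) = (π / Real.sin (π * a)) / Real.Gamma a := by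
    rw [← h]; field_simp
  rw [this, inv_div, div_div_eq_mul_div]

/-- Ray integral for every term. -/
lemma gamma_ray' (a t θ : ℝ) (ha : 0 < a) (ht : 0 < t) (hθ1 : π / 2 < θ) (hθ2 : θ < π) :
    ∫ r in Set.Ioi (0:ℝ), Complex.exp ((a * θ : ℝ) * Complex.I) * (((r ^ (a - 1) : ℝ) : ℂ) *
      Complex.exp ((t * r : ℝ) * Complex.exp (θ * Complex.I)))
    = ((Real.Gamma a * t ^ (-a) : ℝ) : ℂ) * Complex.exp ((π * a : ℝ) * Complex.I) := by
  have h := gamma_ray a t (θ - π) ha ht (by rw [abs_lt]; constructor <;> linarith)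
  rw [← h, integral_const_mul]
  have e1 : Complex.exp ((θ - π : ℝ) * Complex.I) = - Complex.exp (θ * Complex.I) := by
    rw [Complex.ofReal_sub, sub_mul, Complex.exp_sub, Complex.exp_pi_mul_I]; ring
  have e2 : Complex.exp ((a * θ : ℝ) * Complex.I) = Complex.exp ((a * (θ - π) : ℝ) * Complex.I)
      * Complex.exp ((π * a : ℝ) * Complex.I) := by
    rw [← Complex.exp_add]; congr 1; push_cast; ring
  rw [e1, e2]
  simp only [Complex.ofReal_neg, neg_mul_neg]
  ring

open Filter Topology in
lemma wright_repr (α θ y t : ℝ) (h0 : 0 < α) (h1 : α < 1) (hy : 0 ≤ y) (ht : 0 < t)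
    (hθ1 : π / 2 < θ) (hθ2 : θ < π) :
    t ^ (-α) * wrightM α (y * t ^ (-α)) = π⁻¹ * (∫ r in Set.Ioi (0:ℝ),
      Complex.exp ((α * θ : ℝ) * Complex.I) * ((r ^ (α - 1) : ℝ) : ℂ) *
      Complex.exp ((-(y * r ^ α) : ℝ) * Complex.exp ((α * θ : ℝ) * Complex.I)) *
      Complex.exp ((t * r : ℝ) * Complex.exp (θ * Complex.I))).im := by
  have hc : 0 < -Real.cos θ := by
    have := Real.cos_neg_of_pi_div_two_lt_of_lt hθ1 (by linarith [Real.pi_pos])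
    linarith
  set c := -Real.cos θ with hcdef
  set W := Complex.exp ((α * θ : ℝ) * Complex.I) with hW
  have hWn : ‖W‖ = 1 := Complex.norm_exp_ofReal_mul_I _
  have hsum := hasSum_integral_of_dominated_convergence (μ := volume.restrict (Set.Ioi (0:ℝ)))
    (F := fun (k : ℕ) (r : ℝ) => W * ((r ^ (α - 1) : ℝ) : ℂ) *
      (((-(y * r ^ α) : ℝ) * W) ^ k / k.factorial) *
      Complex.exp ((t * r : ℝ) * Complex.exp (θ * Complex.I)))
    (f := fun r : ℝ => W * ((r ^ (α - 1) : ℝ) : ℂ) * Complex.exp ((-(y * r ^ α) : ℝ) * W) *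
      Complex.exp ((t * r : ℝ) * Complex.exp (θ * Complex.I)))
    (fun (k : ℕ) (r : ℝ) => r ^ (α - 1) * ((y * r ^ α) ^ k / k.factorial) * Real.exp (-(t * c) * r))
    ?_ ?_ ?_ ?_ ?_
  · have him := Complex.imCLM.hasSum hsum
    have : ∀ k : ℕ, Complex.imCLM (∫ r in Set.Ioi (0:ℝ), W * ((r ^ (α - 1) : ℝ) : ℂ) *
      (((-(y * r ^ α) : ℝ) * W) ^ k / k.factorial) *
      Complex.exp ((t * r : ℝ) * Complex.exp (θ * Complex.I)))
      = π * (t ^ (-α) * ((-(y * t ^ (-α))) ^ k / (k.factorial * Real.Gamma (1 - α * (1 + k))))) := by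
      intro k
      have ha : 0 < α * (1 + k) := by positivity
      have e : ∫ r in Set.Ioi (0:ℝ), W * ((r ^ (α - 1) : ℝ) : ℂ) *
          (((-(y * r ^ α) : ℝ) * W) ^ k / k.factorial) *
          Complex.exp ((t * r : ℝ) * Complex.exp (θ * Complex.I))
          = ∫ r in Set.Ioi (0:ℝ), (((-y) ^ k / k.factorial : ℝ) : ℂ) *
            (Complex.exp ((α * (1 + k) * θ : ℝ) * Complex.I) * (((r ^ (α * (1 + k) - 1) : ℝ) : ℂ) *
            Complex.exp ((t * r : ℝ) * Complex.exp (θ * Complex.I)))) := by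
        refine setIntegral_congr_fun measurableSet_Ioi (fun r hr => ?_)
        have hr : 0 < r := hr
        have e3 : Complex.exp ((α * (1 + k) * θ : ℝ) * Complex.I) = W * W ^ k := by
          rw [hW, ← Complex.exp_nat_mul, ← Complex.exp_add]; congr 1; push_cast; ring
        have e4 : r ^ (α * (1 + k) - 1) = r ^ (α - 1) * (r ^ α) ^ k := by
          rw [← Real.rpow_natCast, ← Real.rpow_mul hr.le, ← Real.rpow_add hr]; congr 1; ring
        simp only [e3, e4]
        push_cast
        ring
      rw [e, integral_const_mul, gamma_ray' _ _ _ ha ht hθ1 hθ2]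
      simp only [Complex.imCLM_apply]
      rw [Complex.im_ofReal_mul, Complex.im_ofReal_mul, Complex.exp_ofReal_mul_I_im]
      have e5 : t ^ (-(α * (1 + k))) = t ^ (-α) * (t ^ (-α)) ^ k := by
        rw [← Real.rpow_natCast, ← Real.rpow_mul ht.le, ← Real.rpow_add ht]; congr 1; ring
      rw [e5, div_eq_mul_inv _ ((k.factorial : ℝ) * _), mul_inv, gamma_refl _ ha, ← neg_mul, mul_pow]
      field_simp
    simp only [this] at him
    have h3 := him.tsum_eq
    rw [tsum_mul_left, tsum_mul_left] at h3
    rw [wrightM, eq_inv_mul_iff_mul_eq₀ Real.pi_ne_zero, h3]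
    rfl
  · intro k
    exact Measurable.aestronglyMeasurable (by fun_prop)
  · intro k
    filter_upwards [ae_restrict_mem measurableSet_Ioi] with r hr
    have hr : 0 < r := hr
    simp only [norm_mul, norm_div, norm_pow, norm_cexp_ray, hWn, Complex.norm_real,
      Complex.norm_natCast, norm_neg]
    rw [Real.norm_of_nonneg (by positivity), Real.norm_of_nonneg (by positivity), 
      Real.norm_of_nonneg (by positivity)]
    apply le_of_eq
    rw [hcdef, one_mul, mul_one]
    congr 2
    ring
  · filter_upwards with r
    exact ((Real.summable_pow_div_factorial (y * r ^ α)).mul_left _).mul_right _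
  · obtain ⟨C, hC⟩ := rpow_le_lin α (t * c / (2 * (y + 1))) h0 h1 (by positivity)
    have hts : ∀ r : ℝ, ∑' k : ℕ, r ^ (α - 1) * ((y * r ^ α) ^ k / k.factorial) * Real.exp (-(t * c) * r)
        = r ^ (α - 1) * Real.exp (y * r ^ α) * Real.exp (-(t * c) * r) := by
      intro r
      rw [tsum_mul_right, tsum_mul_left, Real.exp_eq_exp_ℝ,
        (NormedSpace.expSeries_div_hasSum_exp (y * r ^ α)).tsum_eq]
    simp only [hts]
    refine Integrable.mono' ((integrable_ray α t (c / 2) h0 (by positivity)).const_mul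
      (Real.exp (y * C))) (Measurable.aestronglyMeasurable (by fun_prop)) ?_
    filter_upwards [ae_restrict_mem measurableSet_Ioi] with r hr
    have hr : 0 < r := hr
    rw [Real.norm_of_nonneg (by positivity), mul_left_comm, ← Real.exp_add, mul_assoc, ← Real.exp_add]
    refine mul_le_mul_of_nonneg_left (Real.exp_le_exp.2 ?_) (by positivity)
    have h5 := mul_le_mul_of_nonneg_left (hC r hr.le) hy
    have h6 : y * (t * c / (2 * (y + 1)) * r) ≤ t * c / 2 * r := by
      have : y * (t * c / (2 * (y + 1)) * r) = (y / (y + 1)) * (t * c / 2 * r) := by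
        field_simp
      rw [this]
      exact mul_le_of_le_one_left (by positivity) (div_le_one_of_le₀ (by linarith) (by linarith))
    linarith
  · filter_upwards with r
    have := NormedSpace.expSeries_div_hasSum_exp (((-(y * r ^ α) : ℝ) : ℂ) * W)
    rw [← Complex.exp_eq_exp_ℂ] at this
    exact (this.mul_left _).mul_right _

/-- The Stieltjes-type integrand on the ray. -/
noncomputable def rayK (α θ y s r : ℝ) : ℂ :=
  Complex.exp ((α * θ : ℝ) * Complex.I) * ((r ^ (α - 1) : ℝ) : ℂ) *
      Complex.exp ((-(y * r ^ α) : ℝ) * Complex.exp ((α * θ : ℝ) * Complex.I)) *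
      (s - r * Complex.exp (θ * Complex.I))⁻¹

lemma integrable_stieltjes (α s c : ℝ) (h0 : 0 < α) (h1 : α < 1) (hs : 0 < s) (hc : 0 < c) :
    IntegrableOn (fun r : ℝ => r ^ (α - 1) * (s + c * r)⁻¹) (Set.Ioi 0) := by
  rw [← Set.Ioc_union_Ioi_eq_Ioi (zero_le_one : (0:ℝ) ≤ 1)]
  refine IntegrableOn.union ?_ ?_
  · have h : IntegrableOn (fun r : ℝ => r ^ (α - 1)) (Set.Ioc 0 1) :=
      (intervalIntegrable_iff_integrableOn_Ioc_of_le zero_le_one).1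
        (intervalIntegral.intervalIntegrable_rpow' (by linarith))
    refine Integrable.mono' (h.mul_const s⁻¹) (Measurable.aestronglyMeasurable (by fun_prop)) ?_
    filter_upwards [ae_restrict_mem measurableSet_Ioc] with r hr
    have hr : 0 < r := hr.1
    rw [Real.norm_of_nonneg (by positivity)]
    gcongr
    nlinarith
  · have h : IntegrableOn (fun r : ℝ => r ^ (α - 2)) (Set.Ioi 1) :=
      integrableOn_Ioi_rpow_of_lt (by linarith) one_pos
    refine Integrable.mono' (h.mul_const c⁻¹) (Measurable.aestronglyMeasurable (by fun_prop)) ?_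
    filter_upwards [ae_restrict_mem measurableSet_Ioi] with r hr
    have hr : 0 < r := one_pos.trans hr
    rw [Real.norm_of_nonneg (by positivity)]
    have : r ^ (α - 2) * c⁻¹ = r ^ (α - 1) * (c * r)⁻¹ := by
      rw [show α - 2 = α - 1 - 1 by ring, Real.rpow_sub_one hr.ne', mul_inv]; ring
    rw [this]
    gcongr
    linarith

lemma norm_ray_le (u φ : ℝ) (hu : 0 ≤ u) (hφ : 0 ≤ Real.cos φ) :
    ‖Complex.exp ((-u : ℝ) * Complex.exp (φ * Complex.I))‖ ≤ 1 := by
  rw [norm_cexp_ray, Real.exp_le_one_iff]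
  nlinarith

lemma rayK_integrable (α θ y s : ℝ) (h0 : 0 < α) (h1 : α < 1) (hy : 0 ≤ y) (hs : 0 < s)
    (hc : 0 < -Real.cos θ) (hc2 : 0 ≤ Real.cos (α * θ)) :
    IntegrableOn (rayK α θ y s) (Set.Ioi 0) := by
  refine Integrable.mono' (integrable_stieltjes α s (-Real.cos θ) h0 h1 hs hc)
    (Measurable.aestronglyMeasurable (by unfold rayK; fun_prop)) ?_
  filter_upwards [ae_restrict_mem measurableSet_Ioi] with r hr
  have hr : 0 < r := hr
  have hn := norm_ray_le (y * r ^ α) (α * θ) (by positivity) hc2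
  rw [rayK, norm_mul, norm_mul, norm_mul, Complex.norm_exp_ofReal_mul_I, one_mul, Complex.norm_real,
    Real.norm_of_nonneg (by positivity), norm_inv]
  have h2 : s + -Real.cos θ * r ≤ ‖(s:ℂ) - r * Complex.exp (θ * Complex.I)‖ := by
    refine le_trans (le_of_eq ?_) (Complex.re_le_norm _)
    rw [Complex.sub_re, Complex.re_ofReal_mul, Complex.exp_ofReal_mul_I_re, Complex.ofReal_re]
    ring
  gcongr
  exact mul_le_of_le_one_right (by positivity) hn

lemma laplace_eq (α θ y s : ℝ) (h0 : 0 < α) (h1 : α < 1) (hy : 0 ≤ y) (hs : 0 < s)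
    (hθ1 : π / 2 < θ) (hθ2 : θ < π) (hc2 : 0 ≤ Real.cos (α * θ)) :
    (∫ t in Set.Ioi (0:ℝ), Real.exp (-s * t) * (t ^ (-α) * wrightM α (y * t ^ (-α))))
      = π⁻¹ * (∫ r in Set.Ioi (0:ℝ), rayK α θ y s r).im := by
  have hc : 0 < -Real.cos θ := by
    have := Real.cos_neg_of_pi_div_two_lt_of_lt hθ1 (by linarith [Real.pi_pos])
    linarith
  set P : ℝ → ℂ := fun r => Complex.exp ((α * θ : ℝ) * Complex.I) * ((r ^ (α - 1) : ℝ) : ℂ) *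
      Complex.exp ((-(y * r ^ α) : ℝ) * Complex.exp ((α * θ : ℝ) * Complex.I)) with hP
  have hPm : Measurable P := by rw [hP]; fun_prop
  have hPn : ∀ r : ℝ, 0 < r → ‖P r‖ ≤ r ^ (α - 1) := by
    intro r hr
    have hn := norm_ray_le (y * r ^ α) (α * θ) (by positivity) hc2
    simp only [hP]
    rw [norm_mul, norm_mul, Complex.norm_exp_ofReal_mul_I, one_mul, Complex.norm_real,
      Real.norm_of_nonneg (by positivity)]
    exact mul_le_of_le_one_right (by positivity) hn
  set w := Complex.exp (θ * Complex.I) with hw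
  set f : ℝ → ℝ → ℂ := fun t r => P r * Complex.exp ((-s + r * w) * t) with hf
  have hre : ∀ r : ℝ, (-(s:ℂ) + r * w).re = -(s + -Real.cos θ * r) := by
    intro r
    rw [Complex.add_re, Complex.re_ofReal_mul, hw, Complex.exp_ofReal_mul_I_re, Complex.neg_re,
      Complex.ofReal_re]
    ring
  have hfn : ∀ t r : ℝ, ‖f t r‖ = ‖P r‖ * Real.exp (-(s + -Real.cos θ * r) * t) := by
    intro t r
    simp only [hf]
    rw [norm_mul, Complex.norm_exp, Complex.re_mul_ofReal, hre]
  have hint : Integrable (Function.uncurry f)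
      ((volume.restrict (Set.Ioi (0:ℝ))).prod (volume.restrict (Set.Ioi (0:ℝ)))) := by
    have hm : Measurable (Function.uncurry f) := by
      simp only [hf, Function.uncurry_def]
      have : Measurable (fun p : ℝ × ℝ => P p.2) := hPm.comp measurable_snd
      exact this.mul (by fun_prop)
    rw [integrable_prod_iff' hm.aestronglyMeasurable]
    constructor
    · filter_upwards [ae_restrict_mem measurableSet_Ioi] with r hr
      have hr : 0 < r := hr
      have hneg : (-(s:ℂ) + r * w).re < 0 := by rw [hre]; nlinarith
      exact (integrableOn_exp_mul_complex_Ioi hneg 0).const_mul (P r)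
    · refine Integrable.mono' (integrable_stieltjes α s (-Real.cos θ) h0 h1 hs hc) ?_ ?_
      · exact hm.norm.stronglyMeasurable.integral_prod_left'.aestronglyMeasurable
      · filter_upwards [ae_restrict_mem measurableSet_Ioi] with r hr
        have hr : 0 < r := hr
        have hpos : 0 < s + -Real.cos θ * r := by positivity
        simp only [Function.uncurry_apply_pair, hfn]
        rw [integral_const_mul, integral_exp_mul_Ioi (by linarith)]
        simp only [mul_zero, Real.exp_zero, neg_div_neg_eq, one_div]
        rw [Real.norm_of_nonneg (by positivity)]
        gcongr
        exact hPn r hr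
  have hswap := integral_integral_swap hint
  have hL : ∫ t in Set.Ioi (0:ℝ), Real.exp (-s * t) * (t ^ (-α) * wrightM α (y * t ^ (-α)))
      = ∫ t in Set.Ioi (0:ℝ), π⁻¹ * (RCLike.im (∫ r in Set.Ioi (0:ℝ), f t r)) := by
    refine setIntegral_congr_fun measurableSet_Ioi (fun t ht => ?_)
    rw [wright_repr α θ y t h0 h1 hy ht hθ1 hθ2, mul_left_comm, ← Complex.im_ofReal_mul,
      ← integral_const_mul]
    simp only [RCLike.im_to_complex]
    congr 3
    ext r
    simp only [hf, hP, hw]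
    rw [add_mul, Complex.exp_add]
    push_cast
    ring_nf
  have hI := integral_im hint.integral_prod_left
  simp only [Function.uncurry_apply_pair] at hI
  rw [hL, integral_const_mul, hI, hswap, RCLike.im_to_complex]
  congr 2
  refine setIntegral_congr_fun measurableSet_Ioi (fun r hr => ?_)
  have hr : 0 < r := hr
  simp only [hf]
  rw [integral_const_mul, integral_exp_mul_complex_Ioi (by rw [hre]; nlinarith)]
  simp only [rayK, hP, Complex.ofReal_zero, mul_zero, Complex.exp_zero, ← hw]
  congr 1
  rw [neg_div, one_div, ← inv_neg]
  congr 1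
  ring

lemma laplace_zero (α s : ℝ) (h1 : α < 1) (hs : 0 < s) :
    (∫ t in Set.Ioi (0:ℝ), Real.exp (-s * t) * (t ^ (-α) * wrightM α (0 * t ^ (-α))))
      = s ^ (α - 1) := by
  have hw : wrightM α 0 = (Real.Gamma (1 - α))⁻¹ := by
    rw [wrightM, tsum_eq_single 0]
    · simp
    · intro k hk; simp [hk]
  have hg := (Real.Gamma_pos_of_pos (by linarith : 0 < 1 - α)).ne'
  have h := Real.integral_rpow_mul_exp_neg_mul_Ioi (by linarith : 0 < 1 - α) hs
  simp only [zero_mul, hw]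
  have : ∀ t : ℝ, Real.exp (-s * t) * (t ^ (-α) * (Real.Gamma (1 - α))⁻¹)
      = (Real.Gamma (1 - α))⁻¹ * (t ^ (1 - α - 1) * Real.exp (-(s * t))) := by
    intro t; rw [show 1 - α - 1 = -α by ring, neg_mul]; ring
  simp only [this]
  rw [integral_const_mul, h, one_div, Real.inv_rpow hs.le, ← Real.rpow_neg hs.le]
  rw [show -(1 - α) = α - 1 by ring]
  field_simp

open Filter Topology in
lemma rayK_residue (α θ y s : ℝ) (h0 : 0 < α) (h1 : α < 1) (hy : 0 ≤ y) (hs : 0 < s)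
    (hθ1 : π / 2 < θ) (hθ2 : θ < π) (hαθ : α * θ ≤ π / 2) :
    (∫ r in Set.Ioi (0:ℝ), rayK α θ y s r).im
      = Real.exp (-y * s ^ α) * (∫ r in Set.Ioi (0:ℝ), rayK α θ 0 s r).im := by
  have hθ0 : 0 < θ := by linarith [Real.pi_pos]
  have hc : 0 < -Real.cos θ := by
    have := Real.cos_neg_of_pi_div_two_lt_of_lt hθ1 (by linarith [Real.pi_pos])
    linarith
  have hcα : ∀ φ ∈ Set.uIcc 0 θ, 0 ≤ Real.cos (α * φ) := by
    intro φ hφ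
    rw [Set.uIcc_of_le hθ0.le] at hφ
    have : α * φ ≤ α * θ := by gcongr; exact hφ.2
    have : 0 ≤ α * φ := mul_nonneg h0.le hφ.1
    exact Real.cos_nonneg_of_mem_Icc ⟨by linarith, by linarith⟩
  have hi1 := rayK_integrable α θ y s h0 h1 hy hs hc (hcα θ Set.right_mem_uIcc)
  have hi0 := rayK_integrable α θ 0 s h0 h1 le_rfl hs hc (hcα θ Set.right_mem_uIcc)
  set z₀ : ℂ := ((Real.log s : ℝ) : ℂ) with hz₀
  have hez : Complex.exp z₀ = s := by rw [hz₀, ← Complex.ofReal_exp, Real.exp_log hs]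
  set n : ℂ → ℂ := fun z => Complex.exp (-y * Complex.exp (α * z)) with hn
  set E : ℝ := Real.exp (-y * s ^ α) with hE
  have hn0 : n z₀ = E := by
    simp only [hn, hz₀, hE]
    rw [Real.rpow_def_of_pos hs]
    push_cast
    ring_nf
  have hnd : Differentiable ℂ n := by
    intro z; simp only [hn]; fun_prop
  have hdn : Differentiable ℂ (dslope n z₀) := by
    rw [← differentiableOn_univ] at hnd ⊢
    exact (Complex.differentiableOn_dslope univ_mem).2 hnd
  have hde : Differentiable ℂ (dslope Complex.exp z₀) := by
    rw [← differentiableOn_univ]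
    exact (Complex.differentiableOn_dslope univ_mem).2 Complex.differentiable_exp.differentiableOn
  have hne : ∀ z : ℂ, z.im ∈ Set.uIcc 0 θ → z ≠ z₀ → Complex.exp z ≠ s := by
    intro z hz hzz h
    rw [← hez, Complex.exp_eq_exp_iff_exists_int] at h
    obtain ⟨k, hk⟩ := h
    have him : z.im = k * (2 * π) := by
      rw [hk, hz₀]; simp
    rw [Set.uIcc_of_le hθ0.le, him] at hz
    have hk1 : (k : ℝ) < 1 := by nlinarith [hz.2, Real.pi_pos]
    have hk2 : (-1 : ℝ) < k := by nlinarith [hz.1, Real.pi_pos]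
    have : k = 0 := by
      have a1 : k < 1 := by exact_mod_cast hk1
      have a2 : -1 < k := by exact_mod_cast hk2
      omega
    apply hzz
    rw [hk, this]; simp
  have hde0 : ∀ z : ℂ, z.im ∈ Set.uIcc 0 θ → dslope Complex.exp z₀ z ≠ 0 := by
    intro z hz
    by_cases h : z = z₀
    · rw [h, dslope_same, Complex.deriv_exp]; exact Complex.exp_ne_zero _
    · rw [dslope_of_ne _ h, slope_def_field, hez]
      exact div_ne_zero (sub_ne_zero.2 (hne z hz h)) (sub_ne_zero.2 h)
  set G : ℂ → ℂ := fun z => -(Complex.exp (α * z) * (dslope n z₀ z / dslope Complex.exp z₀ z)) with hG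
  have hGz : ∀ z : ℂ, z.im ∈ Set.uIcc 0 θ → z ≠ z₀ →
      G z = Complex.exp (α * z) * (n z - E) * (s - Complex.exp z)⁻¹ := by
    intro z hz h
    have q1 : z - z₀ ≠ 0 := sub_ne_zero.2 h
    have q2 : Complex.exp z - s ≠ 0 := sub_ne_zero.2 (hne z hz h)
    have q3 : (s : ℂ) - Complex.exp z ≠ 0 := sub_ne_zero.2 (hne z hz h).symm
    simp only [hG]
    rw [dslope_of_ne _ h, dslope_of_ne _ h, slope_def_field, slope_def_field, hez, hn0,
      div_div_div_cancel_right₀ q1]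
    rw [← neg_sub (s : ℂ) (Complex.exp z), div_neg, mul_neg, neg_neg, div_eq_mul_inv, mul_assoc]
  have hGd : ∀ z : ℂ, z.im ∈ Set.uIcc 0 θ → DifferentiableAt ℂ G z := by
    intro z hz
    simp only [hG]
    exact (((by fun_prop : DifferentiableAt ℂ (fun z => Complex.exp (α * z)) z)).mul
      ((hdn z).div (hde z) (hde0 z hz))).neg
  have him : ∀ x φ : ℝ, ((x : ℂ) + φ * Complex.I).im = φ := by intro x φ; simp
  have hnn : ∀ x φ : ℝ, φ ∈ Set.uIcc 0 θ → ‖n (x + φ * Complex.I)‖ ≤ 1 := by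
    intro x φ hφ
    have := norm_ray_le (y * Real.exp (α * x)) (α * φ) (by positivity) (hcα φ hφ)
    convert this using 3
    push_cast
    rw [mul_add, Complex.exp_add]
    ring_nf
  have hE0 : 0 < E := Real.exp_pos _
  have hE1 : E ≤ 1 := by
    rw [hE, Real.exp_le_one_iff]
    have : 0 ≤ y * s ^ α := by positivity
    linarith
  have hGn : ∀ x φ : ℝ, φ ∈ Set.uIcc 0 θ → ∀ d : ℝ, 0 < d → d ≤ |s - Real.exp x| →
      ‖G (x + φ * Complex.I)‖ ≤ 2 * Real.exp (α * x) * d⁻¹ := by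
    intro x φ hφ d hd hdx
    have hex : ‖Complex.exp (x + φ * Complex.I)‖ = Real.exp x := by
      rw [Complex.norm_exp]; simp
    have h3 : |s - Real.exp x| ≤ ‖(s : ℂ) - Complex.exp (x + φ * Complex.I)‖ := by
      have := abs_norm_sub_norm_le (s : ℂ) (Complex.exp (x + φ * Complex.I))
      rwa [hex, Complex.norm_real, Real.norm_of_nonneg hs.le] at this
    have hzne : (x : ℂ) + φ * Complex.I ≠ z₀ := by
      intro h
      rw [h, hez, sub_self, norm_zero] at h3
      linarith
    rw [hGz _ (by rw [him]; exact hφ) hzne, norm_mul, norm_mul, norm_inv]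
    have e1 : ‖Complex.exp (α * (x + φ * Complex.I))‖ = Real.exp (α * x) := by
      rw [Complex.norm_exp]; simp
    have e2 : ‖n (x + φ * Complex.I) - E‖ ≤ 2 := by
      refine (norm_sub_le _ _).trans ?_
      rw [Complex.norm_real, Real.norm_of_nonneg hE0.le]
      linarith [hnn x φ hφ]
    rw [e1, mul_comm 2]
    gcongr
    exact hdx.trans h3
  have hsh := strip_shift G θ (fun z hz => (hGd z hz).continuousAt.continuousWithinAt)
    (fun z hz => (hGd z ⟨hz.1.le, hz.2.le⟩).differentiableWithinAt)
    (fun R => 2 * Real.exp (α * R) * (Real.exp R / 2)⁻¹)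
    (by
      have : (fun R => 2 * Real.exp (α * R) * (Real.exp R / 2)⁻¹)
          = fun R : ℝ => 4 * Real.exp (-((1 - α) * R)) := by
        ext R
        rw [show -((1 - α) * R) = α * R - R by ring, Real.exp_sub]
        field_simp
        norm_num
      rw [this]
      simpa using (Real.tendsto_exp_neg_atTop_nhds_zero.comp
        (tendsto_id.const_mul_atTop (by linarith : 0 < 1 - α))).const_mul 4)
    (by
      filter_upwards [Real.tendsto_exp_atTop.eventually_ge_atTop (2 * s)] with R hR φ hφ
      refine hGn R φ hφ _ (by positivity) ?_
      rw [abs_sub_comm]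
      refine le_trans ?_ (le_abs_self _)
      linarith)
    (fun R => 2 * Real.exp (α * (-R)) * (s / 2)⁻¹)
    (by
      have : Tendsto (fun R : ℝ => Real.exp (-(α * R))) atTop (𝓝 0) :=
        Real.tendsto_exp_neg_atTop_nhds_zero.comp (tendsto_id.const_mul_atTop h0)
      simpa using (this.const_mul 2).mul_const (s / 2)⁻¹)
    (by
      filter_upwards [Real.tendsto_exp_neg_atTop_nhds_zero.eventually_le_const
        (by positivity : 0 < s / 2)] with R hR φ hφ
      refine hGn (-R) φ hφ _ (by positivity) ?_
      refine le_trans ?_ (le_abs_self _)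
      linarith)
  -- identification with the ray integrals
  have hGray : ∀ x : ℝ, G (x + θ * Complex.I) = (Real.exp x : ℂ) *
      (rayK α θ y s (Real.exp x) - E * rayK α θ 0 s (Real.exp x)) := by
    intro x
    have hzne : (x : ℂ) + θ * Complex.I ≠ z₀ := by
      intro h
      have := congrArg Complex.im h
      rw [him, hz₀, Complex.ofReal_im] at this
      linarith
    rw [hGz _ (by rw [him]; exact Set.right_mem_uIcc) hzne]
    have e1 : Complex.exp (α * (x + θ * Complex.I)) =
        (Real.exp x : ℂ) * (Complex.exp ((α * θ : ℝ) * Complex.I) * ((Real.exp x ^ (α - 1) : ℝ) : ℂ)) := by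
      rw [← Real.exp_mul]
      simp only [Complex.ofReal_exp, ← Complex.exp_add]
      congr 1; push_cast; ring
    have e2 : n (x + θ * Complex.I) = Complex.exp ((-(y * Real.exp x ^ α) : ℝ) *
        Complex.exp ((α * θ : ℝ) * Complex.I)) := by
      simp only [hn]
      rw [← Real.exp_mul, mul_add, Complex.exp_add]
      push_cast
      ring_nf
    have e3 : Complex.exp (x + θ * Complex.I) = (Real.exp x : ℂ) * Complex.exp (θ * Complex.I) := by
      rw [Complex.exp_add, Complex.ofReal_exp]
    rw [e1, e2, e3]
    simp only [rayK, zero_mul, neg_zero, Complex.ofReal_zero, Complex.exp_zero]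
    ring
  have hdiff : IntegrableOn (fun r => rayK α θ y s r - E * rayK α θ 0 s r) (Set.Ioi 0) :=
    hi1.sub (hi0.const_mul (E : ℂ))
  have hGi : Integrable (fun x : ℝ => G (x + θ * Complex.I)) := by
    simp only [hGray]
    exact (integrable_Ioi_iff_exp _).1 hdiff
  have hGv : ∫ x : ℝ, G (x + θ * Complex.I) = (∫ r in Set.Ioi (0:ℝ), rayK α θ y s r)
      - E * ∫ r in Set.Ioi (0:ℝ), rayK α θ 0 s r := by
    simp only [hGray]
    rw [← integral_Ioi_eq_exp (fun r => rayK α θ y s r - E * rayK α θ 0 s r),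
      integral_sub hi1 (hi0.const_mul (E : ℂ)), integral_const_mul]
  have hlim := intervalIntegral_tendsto_integral hGi tendsto_neg_atTop_atBot tendsto_id
  have hreal : ∀ R : ℝ, (∫ x in (-R)..R, G (x : ℂ)).im = 0 := by
    intro R
    have e : ∫ x in (-R)..R, G (x : ℂ) = ∫ x in (-R)..R, (((G (x : ℂ)).re : ℝ) : ℂ) := by
      refine intervalIntegral.integral_congr_ae ?_
      have : ∀ᵐ x : ℝ, x ≠ Real.log s := by
        simp [ae_iff, measure_singleton]
      filter_upwards [this] with x hx _
      have hzne : (x : ℂ) ≠ z₀ := by rw [hz₀]; exact_mod_cast hx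
      have hg : G (x : ℂ) = ((Real.exp (α * x) * (Real.exp (-y * Real.exp (α * x)) - E) *
          (s - Real.exp x)⁻¹ : ℝ) : ℂ) := by
        rw [hGz _ (by simp) hzne]
        simp only [hn]
        push_cast
        rfl
      rw [hg, Complex.ofReal_re]
    rw [e, intervalIntegral.integral_ofReal, Complex.ofReal_im]
  have hsum := (Complex.continuous_im.tendsto _).comp (hsh.add hlim)
  have hz : (fun R : ℝ => (0:ℝ)) = (Complex.im ∘ fun R : ℝ =>
      ((∫ x in (-R)..R, G (x : ℂ)) - ∫ x in (-R)..R, G (x + θ * Complex.I))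
        + ∫ x in (-R)..(id R), G (x + θ * Complex.I)) := by
    ext R
    simp [hreal R]
  rw [← hz, zero_add, hGv] at hsum
  have := tendsto_nhds_unique hsum tendsto_const_nhds
  rw [Complex.sub_im, Complex.im_ofReal_mul] at this
  linarith

theorem stmt10 (α y s : ℝ) (hα : α ∈ Set.Ioo (0:ℝ) 1) (hy : 0 ≤ y) (hs : 0 < s) :
    (∫ t in Set.Ioi (0:ℝ), Real.exp (-s * t) * (t ^ (-α) * wrightM α (y * t ^ (-α))))
      = s ^ (α - 1) * Real.exp (-y * s ^ α) := by
  obtain ⟨h0, h1⟩ := hα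
  have hπ := Real.pi_pos
  have hθ1 : π / 2 < π / (1 + α) := by gcongr; linarith
  have hθ2 : π / (1 + α) < π := div_lt_self hπ (by linarith)
  have hαθ : α * (π / (1 + α)) ≤ π / 2 := by
    rw [mul_div_assoc', div_le_div_iff₀ (by linarith) two_pos]
    nlinarith
  have hc2 : 0 ≤ Real.cos (α * (π / (1 + α))) := by
    have : 0 ≤ α * (π / (1 + α)) := by positivity
    exact Real.cos_nonneg_of_mem_Icc ⟨by linarith, hαθ⟩
  have hz := laplace_zero α s h1 hs
  rw [laplace_eq α _ 0 s h0 h1 le_rfl hs hθ1 hθ2 hc2] at hz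
  rw [laplace_eq α _ y s h0 h1 hy hs hθ1 hθ2 hc2,
    rayK_residue α _ y s h0 h1 hy hs hθ1 hθ2 hαθ, ← hz]
  ring
end

section
/- For every α∈(0,1] and θ > 0, the integral ∫_0^∞ (ln t)·θ t^{α−1} E_{α,α}(−θ t^α) dt converges absolutely and equals −(ln θ)/α − γ, where γ is the Euler–Mascheroni constant. (This is the mean of the logarithm of a Mittag-Leffler ML(α,θ) waiting time.) -/
open MeasureTheory Real

/-- Two-parameter Mittag-Leffler function `E_{β,γ}(w) = ∑ w^r / Γ(βr+γ)`. -/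
noncomputable def mittagLeffler (β γ w : ℝ) : ℝ :=
  ∑' r : ℕ, w ^ r / Real.Gamma (β * r + γ)

open Filter Topology Set

/-- Coefficient of `z^n` in `(1-z)^{-c}`. -/
noncomputable def mlA (c : ℝ) (n : ℕ) : ℝ := ∏ j ∈ Finset.range n, (c + j) / (j + 1)

lemma mlA_zero (c : ℝ) : mlA c 0 = 1 := by simp [mlA]

lemma mlA_succ (c : ℝ) (n : ℕ) : mlA c (n + 1) = mlA c n * ((c + n) / (n + 1)) := by
  rw [mlA, Finset.prod_range_succ, mlA]

lemma mlA_eq_choose (c : ℝ) (n : ℕ) : mlA c n = (-1) ^ n * Ring.choose (-c) n := by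
  rw [Ring.choose_eq_smul]
  induction n with
  | zero => simp [mlA]
  | succ n ih =>
    rw [mlA_succ, ih, descPochhammer_succ_right, Polynomial.smeval_mul]
    have : (n.factorial : ℝ) ≠ 0 := by positivity
    simp [Polynomial.smeval_sub, Nat.factorial_succ, Polynomial.smeval_natCast]
    field_simp
    ring

lemma mlA_add (c d : ℝ) (n : ℕ) :
    mlA (c + d) n = ∑ ij ∈ Finset.HasAntidiagonal.antidiagonal n, mlA c ij.1 * mlA d ij.2 := by
  simp only [mlA_eq_choose, neg_add, Ring.add_choose_eq n (Commute.all (-c) (-d)), Finset.mul_sum]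
  refine Finset.sum_congr rfl fun ij h => ?_
  rw [← Finset.HasAntidiagonal.mem_antidiagonal.mp h, pow_add]
  ring

lemma mlA_nonneg {c : ℝ} (hc : 0 ≤ c) (n : ℕ) : 0 ≤ mlA c n :=
  Finset.prod_nonneg fun j _ => by positivity

lemma mlA_pos {c : ℝ} (hc : 0 < c) (n : ℕ) : 0 < mlA c n :=
  Finset.prod_pos fun j _ => by positivity

lemma mlA_mono {c d : ℝ} (hc : 0 ≤ c) (hcd : c ≤ d) (n : ℕ) : mlA c n ≤ mlA d n :=
  Finset.prod_le_prod (fun j _ => by positivity) fun j _ => by gcongr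

lemma mlA_nat (r n : ℕ) : mlA (r + 1) n = ((r + n).choose n : ℝ) := by
  induction n with
  | zero => simp [mlA]
  | succ n ih =>
    rw [mlA_succ, ih]
    have h := Nat.add_one_mul_choose_eq (r + n) n
    have h' : ((r + n : ℝ) + 1) * ((r + n).choose n : ℝ)
        = ((r + (n + 1)).choose (n + 1) : ℝ) * (n + 1) := by
      exact_mod_cast h
    field_simp
    linarith

lemma mlA_neg_nonpos {α : ℝ} (h0 : 0 < α) (h1 : α ≤ 1) (n : ℕ) : mlA (-α) (n + 1) ≤ 0 := by
  rw [mlA, Finset.prod_range_succ']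
  apply mul_nonpos_of_nonneg_of_nonpos
  · refine Finset.prod_nonneg fun j _ => div_nonneg ?_ (by positivity)
    push_cast
    have : (0:ℝ) ≤ j := by positivity
    linarith
  · simp [h0.le]

lemma mlA_zero_left (n : ℕ) : 0 ≤ mlA 0 n := mlA_nonneg le_rfl n

lemma summable_mlA {α x : ℝ} (h0 : 0 < α) (h1 : α ≤ 1) (hx0 : 0 ≤ x) (hx1 : x < 1) (n : ℕ) :
    Summable fun r : ℕ => x ^ (r + 1) * mlA (α * (r + 1)) n := by
  have h := (summable_choose_mul_geometric_of_norm_lt_one (R := ℝ) n (r := x)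
    (by rwa [Real.norm_of_nonneg hx0])).mul_left x
  refine Summable.of_nonneg_of_le (fun r => mul_nonneg (by positivity)
    (mlA_nonneg (by positivity) n)) (fun r => ?_) h
  have : mlA (α * (r + 1)) n ≤ ((r + n).choose n : ℝ) := by
    rw [← mlA_nat]
    exact mlA_mono (by positivity) (mul_le_of_le_one_left (by positivity) h1) n
  calc x ^ (r + 1) * mlA (α * (r + 1)) n ≤ x ^ (r + 1) * ((r + n).choose n : ℝ) := by gcongr
    _ = _ := by ring

noncomputable def mlP (α x : ℝ) (n : ℕ) : ℝ :=
  ∑' r : ℕ, (-1) ^ r * x ^ (r + 1) * mlA (α * (r + 1)) n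

lemma summable_mlP {α x : ℝ} (h0 : 0 < α) (h1 : α ≤ 1) (hx0 : 0 ≤ x) (hx1 : x < 1) (n : ℕ) :
    Summable fun r : ℕ => (-1) ^ r * x ^ (r + 1) * mlA (α * (r + 1)) n := by
  refine Summable.of_norm ?_
  convert summable_mlA h0 h1 hx0 hx1 n using 2 with r
  rw [norm_mul, norm_mul, norm_pow, norm_neg, norm_one, one_pow, one_mul,
    Real.norm_of_nonneg (by positivity), Real.norm_of_nonneg (mlA_nonneg (by positivity) n)]

lemma mlP_conv {α x : ℝ} (h0 : 0 < α) (h1 : α ≤ 1) (hx0 : 0 ≤ x) (hx1 : x < 1) (d : ℝ) (n : ℕ) :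
    HasSum (fun r : ℕ => (-1) ^ r * x ^ (r + 1) * mlA (d + α * (r + 1)) n)
      (∑ ij ∈ Finset.HasAntidiagonal.antidiagonal n, mlA d ij.1 * mlP α x ij.2) := by
  have hP : ∀ j, HasSum (fun r : ℕ => (-1) ^ r * x ^ (r + 1) * mlA (α * (r + 1)) j) (mlP α x j) :=
    fun j => (summable_mlP h0 h1 hx0 hx1 j).hasSum
  have hsum : HasSum (fun r : ℕ => ∑ ij ∈ Finset.HasAntidiagonal.antidiagonal n,
      mlA d ij.1 * ((-1) ^ r * x ^ (r + 1) * mlA (α * (r + 1)) ij.2))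
      (∑ ij ∈ Finset.HasAntidiagonal.antidiagonal n, mlA d ij.1 * mlP α x ij.2) :=
    hasSum_sum fun ij _ => (hP ij.2).mul_left (mlA d ij.1)
  convert hsum using 2 with r
  rw [mlA_add, Finset.mul_sum]
  exact Finset.sum_congr rfl fun ij _ => by ring

lemma mlP_rec {α x : ℝ} (h0 : 0 < α) (h1 : α ≤ 1) (hx0 : 0 ≤ x) (hx1 : x < 1) (n : ℕ) :
    ∑ ij ∈ Finset.HasAntidiagonal.antidiagonal n, mlA (-α) ij.1 * mlP α x ij.2 = x * mlA 0 n - x * mlP α x n := by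
  have h := mlP_conv h0 h1 hx0 hx1 (-α) n
  rw [← h.tsum_eq, h.summable.tsum_eq_zero_add]
  rw [sub_eq_add_neg, mlP, ← tsum_mul_left, ← tsum_neg]
  congr 1
  · simp
  · refine tsum_congr fun r => ?_
    rw [show -α + α * (((r + 1 : ℕ) : ℝ) + 1) = α * (r + 1) by push_cast; ring]
    ring

lemma mlP_rec' {α x : ℝ} (h0 : 0 < α) (h1 : α ≤ 1) (hx0 : 0 ≤ x) (hx1 : x < 1) (n : ℕ) :
    mlP α x n = x * mlA α n - x * ∑ ij ∈ Finset.HasAntidiagonal.antidiagonal n, mlA α ij.1 * mlP α x ij.2 := by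
  have h := mlP_conv h0 h1 hx0 hx1 α n
  rw [← h.tsum_eq, mlP, (summable_mlP h0 h1 hx0 hx1 n).tsum_eq_zero_add]
  rw [sub_eq_add_neg, ← tsum_mul_left, ← tsum_neg]
  congr 1
  · simp
  · refine tsum_congr fun r => ?_
    rw [show α + α * ((r : ℝ) + 1) = α * (((r + 1 : ℕ) : ℝ) + 1) by push_cast; ring]
    ring

lemma mlP_nonneg {α x : ℝ} (h0 : 0 < α) (h1 : α ≤ 1) (hx0 : 0 ≤ x) (hx1 : x < 1) (n : ℕ) :
    0 ≤ mlP α x n := by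
  induction n using Nat.strong_induction_on with
  | _ n ih =>
    have h := mlP_rec h0 h1 hx0 hx1 n
    have hz := mul_nonneg hx0 (mlA_zero_left n)
    rcases n with _ | n
    · simp [mlA_zero] at h
      nlinarith
    · rw [Finset.Nat.antidiagonal_succ, Finset.sum_cons, Finset.sum_map] at h
      simp only [mlA_zero, one_mul] at h
      have : ∑ ij ∈ Finset.HasAntidiagonal.antidiagonal n, mlA (-α) (ij.1 + 1) * mlP α x ij.2 ≤ 0 := by
        refine Finset.sum_nonpos fun ij hij => mul_nonpos_of_nonpos_of_nonneg
          (mlA_neg_nonpos h0 h1 _) (ih _ ?_)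
        have := Finset.HasAntidiagonal.mem_antidiagonal.mp hij
        omega
      simp at h
      nlinarith

lemma mlP_le {α x : ℝ} (h0 : 0 < α) (h1 : α ≤ 1) (hx0 : 0 ≤ x) (hx1 : x < 1) (n : ℕ) :
    mlP α x n ≤ x * mlA α n := by
  rw [mlP_rec' h0 h1 hx0 hx1]
  have : 0 ≤ ∑ ij ∈ Finset.HasAntidiagonal.antidiagonal n, mlA α ij.1 * mlP α x ij.2 :=
    Finset.sum_nonneg fun ij _ => mul_nonneg (mlA_nonneg h0.le _) (mlP_nonneg h0 h1 hx0 hx1 _)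
  nlinarith [mul_nonneg hx0 this]

/-- Normalised coefficient. -/
noncomputable def mlB (c : ℝ) (n : ℕ) : ℝ := n * mlA c n / (n : ℝ) ^ c

lemma mlB_nonneg {c : ℝ} (hc : 0 < c) (n : ℕ) : 0 ≤ mlB c n := by
  have := mlA_nonneg hc.le n
  unfold mlB; positivity

lemma mlB_tendsto {c : ℝ} (hc : 0 < c) : Tendsto (mlB c) atTop (𝓝 (1 / Gamma c)) := by
  have hg := Real.GammaSeq_tendsto_Gamma c
  have h1 : Tendsto (fun n : ℕ => (n : ℝ) / (n + c)) atTop (𝓝 1) := by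
    have h := tendsto_natCast_div_add_atTop (𝕜 := ℝ) c
    exact h
  have := h1.div hg (Gamma_pos_of_pos hc).ne'
  refine this.congr' ?_
  filter_upwards [eventually_gt_atTop 0] with n hn
  have hn' : (0:ℝ) < n := by exact_mod_cast hn
  have hA : mlA c n = (∏ j ∈ Finset.range n, (c + j)) / n.factorial := by
    rw [mlA, Finset.prod_div_distrib]
    congr 1
    rw [← Finset.prod_range_add_one_eq_factorial]; push_cast; rfl
  have hP : 0 < ∏ j ∈ Finset.range n, (c + j) := Finset.prod_pos fun j _ => by positivity
  have hr : 0 < (n:ℝ) ^ c := by positivity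
  have hf : (0:ℝ) < n.factorial := by positivity
  rw [Pi.div_apply, Real.GammaSeq, mlB, hA, Finset.prod_range_succ]
  field_simp
  ring

lemma mlB_succ {c : ℝ} (hc : 0 < c) {n : ℕ} (hn : 0 < n) :
    mlB c (n + 1) * (1 + 1 / (n:ℝ)) ^ c = mlB c n * (1 + c * (1 / n)) := by
  have hn' : (0:ℝ) < n := by exact_mod_cast hn
  have h1 : (0:ℝ) < (n:ℝ) ^ c := by positivity
  have h2 : (0:ℝ) < ((n:ℝ) + 1) ^ c := by positivity
  rw [show 1 + 1 / (n:ℝ) = ((n:ℝ) + 1) / n by field_simp, div_rpow (by positivity) hn'.le,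
    mlB, mlB, mlA_succ]
  push_cast
  field_simp
  ring

lemma mlB_anti {c : ℝ} (hc : 1 ≤ c) {N n : ℕ} (hN : 0 < N) (hn : N ≤ n) : mlB c n ≤ mlB c N := by
  induction n, hn using Nat.le_induction with
  | base => exact le_rfl
  | succ n hn ih =>
    refine le_trans ?_ ih
    have h := mlB_succ (zero_lt_one.trans_le hc) (hN.trans_le hn)
    have hn' : (0:ℝ) < n := by exact_mod_cast (hN.trans_le hn)
    have hb := one_add_mul_self_le_rpow_one_add (s := 1 / (n:ℝ))
      (by have : 0 < 1 / (n:ℝ) := by positivity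
          linarith) hc
    have hB := mlB_nonneg (zero_lt_one.trans_le hc) n
    have hp : 0 < (1 + 1 / (n:ℝ)) ^ c := by positivity
    refine le_of_mul_le_mul_right ?_ hp
    rw [h]
    gcongr

lemma mlB_mono {c : ℝ} (hc0 : 0 < c) (hc : c ≤ 1) {N n : ℕ} (hN : 0 < N) (hn : N ≤ n) :
    mlB c N ≤ mlB c n := by
  induction n, hn using Nat.le_induction with
  | base => exact le_rfl
  | succ n hn ih =>
    refine le_trans ih ?_
    have h := mlB_succ hc0 (hN.trans_le hn)
    have hn' : (0:ℝ) < n := by exact_mod_cast (hN.trans_le hn)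
    have hb := rpow_one_add_le_one_add_mul_self (s := 1 / (n:ℝ))
      (by have : 0 < 1 / (n:ℝ) := by positivity
          linarith) hc0.le hc
    have hB := mlB_nonneg hc0 n
    have hp : 0 < (1 + 1 / (n:ℝ)) ^ c := by positivity
    refine le_of_mul_le_mul_right ?_ hp
    rw [h]
    gcongr

lemma inv_Gamma_le_mlB {c : ℝ} (hc : 1 ≤ c) {N : ℕ} (hN : 0 < N) : 1 / Gamma c ≤ mlB c N := by
  refine le_of_tendsto (mlB_tendsto (zero_lt_one.trans_le hc)) ?_
  filter_upwards [eventually_ge_atTop N] with n hn using mlB_anti hc hN hn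

lemma mlB_le {c : ℝ} (hc : 0 < c) {N n : ℕ} (hN : 0 < N) (hn : N ≤ n) :
    mlB c n ≤ 1 / Gamma c + mlB c N := by
  have hg : 0 < 1 / Gamma c := by have := Gamma_pos_of_pos hc; positivity
  rcases le_total 1 c with h | h
  · linarith [mlB_anti h hN hn]
  · have : mlB c n ≤ 1 / Gamma c := by
      refine ge_of_tendsto (mlB_tendsto hc) ?_
      filter_upwards [eventually_ge_atTop n] with m hm using mlB_mono hc h (hN.trans_le hn) hm
    linarith [mlB_nonneg hc N]

/-- rewriting of the terms -/
lemma mlB_term {α y : ℝ} {n : ℕ} (hn : 0 < n) (r : ℕ) :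
    y ^ (r + 1) * mlB (α * (r + 1)) n
      = n * ((y / (n:ℝ) ^ α) ^ (r + 1) * mlA (α * (r + 1)) n) := by
  have hn' : (0:ℝ) < n := by exact_mod_cast hn
  have : (n:ℝ) ^ (α * (r + 1)) = ((n:ℝ) ^ α) ^ (r + 1) := by
    rw [rpow_mul hn'.le]; exact_mod_cast rpow_natCast _ _
  have h2 : (0:ℝ) < (n:ℝ) ^ α := by positivity
  rw [mlB, this, div_pow]
  field_simp

lemma exists_N {α : ℝ} (h0 : 0 < α) (y : ℝ) :
    ∀ᶠ n : ℕ in atTop, 0 < n ∧ y / (n:ℝ) ^ α < 1 := by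
  have h : Tendsto (fun n : ℕ => (n:ℝ) ^ α) atTop atTop :=
    (tendsto_rpow_atTop h0).comp tendsto_natCast_atTop_atTop
  filter_upwards [eventually_gt_atTop 0, h.eventually_gt_atTop y] with n hn hy
  refine ⟨hn, ?_⟩
  have hn' : (0:ℝ) < n := by exact_mod_cast hn
  rw [div_lt_one (by positivity)]
  exact hy

lemma summable_mlB {α y : ℝ} (h0 : 0 < α) (h1 : α ≤ 1) (hy : 0 ≤ y) {n : ℕ} (hn : 0 < n)
    (hyn : y / (n:ℝ) ^ α < 1) : Summable fun r : ℕ => y ^ (r + 1) * mlB (α * (r + 1)) n := by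
  simp only [mlB_term hn]
  exact (summable_mlA h0 h1 (by positivity) hyn n).mul_left _

lemma summable_invGamma {α y : ℝ} (h0 : 0 < α) (h1 : α ≤ 1) (hy : 0 ≤ y) :
    Summable fun r : ℕ => y ^ (r + 1) * (1 / Gamma (α * (r + 1))) := by
  obtain ⟨N, hN, hyN⟩ := (exists_N h0 y).exists
  have hs := summable_mlB h0 h1 hy hN hyN
  refine Summable.of_norm_bounded_eventually_nat hs ?_
  have ht : Tendsto (fun r : ℕ => α * ((r:ℝ) + 1)) atTop atTop :=
    (tendsto_atTop_add_const_right _ _ tendsto_natCast_atTop_atTop).const_mul_atTop h0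
  filter_upwards [ht.eventually_ge_atTop 1] with r hr
  have := Gamma_pos_of_pos (zero_lt_one.trans_le hr)
  rw [Real.norm_of_nonneg (by positivity)]
  gcongr
  exact inv_Gamma_le_mlB hr hN

/-- The Mittag-Leffler density. -/
noncomputable def mlf (α θ t : ℝ) : ℝ := θ * t ^ (α - 1) * mittagLeffler α α (-θ * t ^ α)

lemma mlf_eq {α θ t : ℝ} (ht : 0 < t) :
    mlf α θ t = ∑' r : ℕ, (-1) ^ r * θ ^ (r + 1) * (t ^ (α * (r + 1) - 1) / Gamma (α * (r + 1))) := by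
  rw [mlf, mittagLeffler, ← tsum_mul_left]
  refine tsum_congr fun r => ?_
  have : t ^ (α * (r + 1) - 1) = t ^ (α - 1) * (t ^ α) ^ r := by
    rw [← rpow_natCast, ← rpow_mul ht.le, ← rpow_add ht]; congr 1; ring
  rw [this, show α * (r:ℝ) + α = α * (r + 1) by ring, mul_pow, neg_pow]
  ring

lemma mul_mlf_eq {α θ t : ℝ} (ht : 0 < t) :
    t * mlf α θ t = ∑' r : ℕ, (-1) ^ r * ((θ * t ^ α) ^ (r + 1) * (1 / Gamma (α * (r + 1)))) := by
  rw [mlf_eq ht, ← tsum_mul_left]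
  refine tsum_congr fun r => ?_
  have : t * t ^ (α * (r + 1) - 1) = (t ^ α) ^ (r + 1) := by
    rw [← rpow_natCast, ← rpow_mul ht.le, mul_comm t, ← rpow_add_one ht.ne']; congr 1; push_cast; ring
  rw [mul_pow, ← this]
  ring

lemma mlf_lim {α θ t : ℝ} (h0 : 0 < α) (h1 : α ≤ 1) (hθ : 0 < θ) (ht : 0 < t) :
    Tendsto (fun n : ℕ => (n:ℝ) * mlP α (θ * t ^ α / (n:ℝ) ^ α) n) atTop (𝓝 (t * mlf α θ t)) := by
  rw [mul_mlf_eq ht]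
  set y := θ * t ^ α with hy
  have hy0 : 0 < y := by positivity
  obtain ⟨N, hN, hyN⟩ := (exists_N h0 y).exists
  have hs := (summable_invGamma h0 h1 hy0.le).add (summable_mlB h0 h1 hy0.le hN hyN)
  have := tendsto_tsum_of_dominated_convergence (𝓕 := atTop)
    (f := fun (n : ℕ) (r : ℕ) => (-1) ^ r * (y ^ (r + 1) * mlB (α * (r + 1)) n))
    (g := fun r : ℕ => (-1) ^ r * (y ^ (r + 1) * (1 / Gamma (α * (r + 1))))) hs
    (fun r => ((mlB_tendsto (by positivity)).const_mul _).const_mul _) ?_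
  · refine this.congr' ?_
    filter_upwards [eventually_gt_atTop 0] with n hn
    rw [mlP, ← tsum_mul_left]
    refine tsum_congr fun r => ?_
    rw [mlB_term hn]
    ring
  · filter_upwards [eventually_ge_atTop N] with n hn r
    rw [norm_mul, norm_pow, norm_neg, norm_one, one_pow, one_mul, Real.norm_of_nonneg
      (mul_nonneg (by positivity) (mlB_nonneg (by positivity) _)), ← mul_add]
    gcongr
    exact mlB_le (by positivity) hN hn

lemma mlf_nonneg {α θ t : ℝ} (h0 : 0 < α) (h1 : α ≤ 1) (hθ : 0 < θ) (ht : 0 < t) :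
    0 ≤ mlf α θ t := by
  have : 0 ≤ t * mlf α θ t := by
    refine ge_of_tendsto (mlf_lim h0 h1 hθ ht) ?_
    filter_upwards [exists_N h0 (θ * t ^ α)] with n hn
    exact mul_nonneg (by positivity) (mlP_nonneg h0 h1 (by positivity) hn.2 n)
  exact nonneg_of_mul_nonneg_right this ht

lemma mlf_le {α θ t : ℝ} (h0 : 0 < α) (h1 : α ≤ 1) (hθ : 0 < θ) (ht : 0 < t) :
    mlf α θ t ≤ θ / Gamma α * t ^ (α - 1) := by
  have h : t * mlf α θ t ≤ θ * t ^ α * (1 / Gamma α) := by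
    refine le_of_tendsto_of_tendsto (mlf_lim h0 h1 hθ ht)
      ((mlB_tendsto h0).const_mul (θ * t ^ α)) ?_
    filter_upwards [exists_N h0 (θ * t ^ α)] with n hn
    have h := mlP_le h0 h1 (x := θ * t ^ α / (n:ℝ) ^ α) (by positivity) hn.2 n
    calc (n:ℝ) * mlP α (θ * t ^ α / (n:ℝ) ^ α) n
        ≤ n * (θ * t ^ α / (n:ℝ) ^ α * mlA α n) := by gcongr
      _ = _ := by rw [mlB]; ring
  refine le_of_mul_le_mul_left (h.trans_eq ?_) ht
  rw [rpow_sub_one ht.ne']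
  field_simp

lemma ae_Ioi_of {P : ℝ → Prop} (h : ∀ t, 0 < t → P t) : ∀ᵐ t ∂(volume.restrict (Ioi (0:ℝ))), P t := by
  filter_upwards [ae_restrict_mem measurableSet_Ioi] with t ht using h t ht

lemma integrableOn_gammaKernel {c s : ℝ} (hc : 0 < c) (hs : 0 < s) :
    IntegrableOn (fun t : ℝ => t ^ (c - 1) * exp (-(s * t))) (Ioi 0) := by
  have := integrableOn_rpow_mul_exp_neg_mul_rpow (p := 1) (s := c - 1) (b := s)
    (by linarith) one_pos hs
  simpa using this

lemma mlf_aesm {α θ : ℝ} (h0 : 0 < α) (h1 : α ≤ 1) (hθ : 0 < θ) :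
    AEStronglyMeasurable (mlf α θ) (volume.restrict (Ioi 0)) := by
  refine aestronglyMeasurable_of_tendsto_ae (u := atTop)
    (f := fun (n : ℕ) (t : ℝ) => ∑ r ∈ Finset.range n,
      (-1) ^ r * θ ^ (r + 1) * (t ^ (α * (r + 1) - 1) / Gamma (α * (r + 1)))) ?_ ?_
  · intro n
    refine Measurable.aestronglyMeasurable ?_
    fun_prop
  · refine ae_Ioi_of fun t ht => ?_
    rw [mlf_eq ht]
    refine (Summable.hasSum ?_).tendsto_sum_nat
    have h := (summable_invGamma h0 h1 (y := θ * t ^ α) (by positivity)).mul_left (1 / t)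
    refine Summable.of_norm ?_
    refine h.congr fun r => ?_
    have hg : 0 < Gamma (α * (r + 1)) := Gamma_pos_of_pos (by positivity)
    rw [norm_mul, norm_mul, norm_pow, norm_neg, norm_one, one_pow, one_mul,
      Real.norm_of_nonneg (by positivity), Real.norm_of_nonneg (by positivity)]
    have : t ^ (α * (r + 1) - 1) = (t ^ α) ^ (r + 1) / t := by
      rw [← rpow_natCast, ← rpow_mul ht.le, rpow_sub_one ht.ne']; push_cast; rfl
    rw [this, mul_pow]
    ring

lemma mlf_exp_integrable {α θ s : ℝ} (h0 : 0 < α) (h1 : α ≤ 1) (hθ : 0 < θ) (hs : 0 < s) :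
    IntegrableOn (fun t => mlf α θ t * exp (-(s * t))) (Ioi 0) := by
  refine Integrable.mono' ((integrableOn_gammaKernel h0 hs).const_mul (θ / Gamma α)) ?_ ?_
  · exact (mlf_aesm h0 h1 hθ).mul (by fun_prop)
  · refine ae_Ioi_of fun t ht => ?_
    have := mlf_nonneg h0 h1 hθ ht
    rw [Real.norm_of_nonneg (by positivity), ← mul_assoc]
    gcongr
    exact mlf_le h0 h1 hθ ht

lemma laplace_large {α θ s : ℝ} (h0 : 0 < α) (hθ : 0 < θ) (hs : 0 < s)
    (hsθ : θ < s ^ α) :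
    ∫ t in Ioi (0:ℝ), mlf α θ t * exp (-(s * t)) = θ / (s ^ α + θ) := by
  let F : ℕ → ℝ → ℝ := fun r t =>
    ((-1) ^ r * θ ^ (r + 1) / Gamma (α * (r + 1))) * (t ^ (α * (r + 1) - 1) * exp (-(s * t)))
  have hsα : 0 < s ^ α := by positivity
  have hq0 : 0 ≤ θ / s ^ α := by positivity
  have hq1 : θ / s ^ α < 1 := (div_lt_one hsα).mpr hsθ
  have hc : ∀ r : ℕ, 0 < α * ((r:ℝ) + 1) := fun r => by positivity
  have hgk : ∀ r : ℕ, ∫ t in Ioi (0:ℝ), t ^ (α * (r + 1) - 1) * exp (-(s * t))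
      = Gamma (α * (r + 1)) / (s ^ α) ^ (r + 1) := fun r => by
    rw [integral_rpow_mul_exp_neg_mul_Ioi (hc r) hs, one_div, inv_rpow hs.le, rpow_mul hs.le]
    rw [show (s ^ α) ^ ((r:ℝ) + 1) = (s ^ α) ^ (r + 1) by exact_mod_cast rpow_natCast _ _]
    ring
  have hFi : ∀ r, Integrable (F r) (volume.restrict (Ioi 0)) := fun r =>
    (integrableOn_gammaKernel (hc r) hs).const_mul _
  have hFint : ∀ r, ∫ t in Ioi (0:ℝ), F r t = (θ / s ^ α) * (-(θ / s ^ α)) ^ r := fun r => by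
    have := Gamma_pos_of_pos (hc r)
    simp only [F]
    rw [integral_const_mul, hgk, neg_pow (θ / s ^ α), div_pow]
    field_simp
    try ring
  have hFn : ∀ r, ∫ t in Ioi (0:ℝ), ‖F r t‖ = (θ / s ^ α) * (θ / s ^ α) ^ r := fun r => by
    have := Gamma_pos_of_pos (hc r)
    have e : ∫ t in Ioi (0:ℝ), ‖F r t‖ = ∫ t in Ioi (0:ℝ), (θ ^ (r + 1) / Gamma (α * (r + 1))) *
        (t ^ (α * (r + 1) - 1) * exp (-(s * t))) := by
      refine setIntegral_congr_fun measurableSet_Ioi fun t ht => ?_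
      have ht' : 0 < t := ht
      simp only [F]
      rw [norm_mul, norm_div, norm_mul, norm_pow, norm_neg, norm_one, one_pow, one_mul,
        Real.norm_of_nonneg (by positivity), Real.norm_of_nonneg (by positivity),
        Real.norm_of_nonneg (by positivity)]
    rw [e, integral_const_mul, hgk, div_pow]
    field_simp
    ring
  have hS := hasSum_integral_of_summable_integral_norm hFi (by
    simp only [hFn]
    exact (summable_geometric_of_lt_one hq0 hq1).mul_left _)
  have hg : HasSum (fun r : ℕ => (-(θ / s ^ α)) ^ r) (1 - -(θ / s ^ α))⁻¹ :=
    hasSum_geometric_of_norm_lt_one (by rwa [norm_neg, Real.norm_of_nonneg hq0])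
  have hS2 := hg.mul_left (θ / s ^ α)
  have hFint' : (fun r => ∫ t in Ioi (0:ℝ), F r t)
    = fun r : ℕ => (θ / s ^ α) * (-(θ / s ^ α)) ^ r := funext hFint
  rw [hFint'] at hS
  have := hS.unique hS2
  have e : ∫ t in Ioi (0:ℝ), mlf α θ t * exp (-(s * t)) = ∫ t in Ioi (0:ℝ), ∑' r, F r t := by
    refine setIntegral_congr_fun measurableSet_Ioi fun t ht => ?_
    have ht' : 0 < t := ht
    simp only [F]
    rw [mlf_eq ht', ← tsum_mul_right]
    refine tsum_congr fun r => by ring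
  rw [e, this]
  have : 1 - -(θ / s ^ α) = (s ^ α + θ) / s ^ α := by field_simp; ring
  rw [this]
  field_simp

lemma laplace_all {α θ s : ℝ} (h0 : 0 < α) (h1 : α ≤ 1) (hθ : 0 < θ) (hs : 0 < s) :
    ∫ t in Ioi (0:ℝ), mlf α θ t * exp (-(s * t)) = θ / (s ^ α + θ) := by
  set μ : Measure ℝ := (volume.restrict (Ioi (0:ℝ))).withDensity
    (fun t => ENNReal.ofReal (mlf α θ t)) with hμ
  have hmeas : AEMeasurable (fun t => ENNReal.ofReal (mlf α θ t)) (volume.restrict (Ioi (0:ℝ))) :=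
    (mlf_aesm h0 h1 hθ).aemeasurable.ennreal_ofReal
  have hlt : ∀ᵐ t ∂(volume.restrict (Ioi (0:ℝ))), ENNReal.ofReal (mlf α θ t) < ⊤ :=
    ae_of_all _ fun t => ENNReal.ofReal_lt_top
  have hmgf : ∀ u, ProbabilityTheory.mgf id μ u
      = ∫ t in Ioi (0:ℝ), mlf α θ t * exp (-(-u * t)) := fun u => by
    rw [ProbabilityTheory.mgf, hμ, integral_withDensity_eq_integral_toReal_smul₀ hmeas hlt]
    refine setIntegral_congr_fun measurableSet_Ioi fun t ht => ?_
    simp [ENNReal.toReal_ofReal (mlf_nonneg h0 h1 hθ ht)]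
  have hsub : Iio (0:ℝ) ⊆ ProbabilityTheory.integrableExpSet id μ := fun u hu => by
    rw [ProbabilityTheory.integrableExpSet, mem_ofPred_eq, hμ,
      integrable_withDensity_iff_integrable_smul₀' hmeas hlt]
    have hu' : 0 < -u := neg_pos.mpr hu
    refine (mlf_exp_integrable h0 h1 hθ hu').congr (ae_Ioi_of fun t ht => ?_)
    simp [ENNReal.toReal_ofReal (mlf_nonneg h0 h1 hθ ht)]
  have hA : AnalyticOnNhd ℝ (ProbabilityTheory.mgf id μ) (Iio 0) :=
    ProbabilityTheory.analyticOnNhd_mgf.mono (interior_maximal hsub isOpen_Iio)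
  have hB : AnalyticOnNhd ℝ (fun u : ℝ => θ / (exp (log (-u) * α) + θ)) (Iio 0) := fun u hu => by
    have hu' : 0 < -u := neg_pos.mpr hu
    refine analyticAt_const.div ?_ (by positivity)
    refine AnalyticAt.add ?_ analyticAt_const
    refine AnalyticAt.rexp ?_
    exact (AnalyticAt.log analyticAt_id.neg hu').mul analyticAt_const
  obtain ⟨s0, hs0, hs0θ⟩ : ∃ s0 : ℝ, 0 < s0 ∧ θ < s0 ^ α :=
    ((eventually_gt_atTop 0).and ((tendsto_rpow_atTop h0).eventually_gt_atTop θ)).exists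
  have hev : ProbabilityTheory.mgf id μ =ᶠ[𝓝 (-s0)]
      (fun u : ℝ => θ / (exp (log (-u) * α) + θ)) := by
    have hlt : ∀ᶠ u in 𝓝 (-s0), -s0 - 1 < u ∧ u < 0 ∧ θ < (-u) ^ α := by
      have hc : ContinuousAt (fun u : ℝ => (-u) ^ α) (-s0) :=
        continuous_neg.continuousAt.rpow_const (Or.inr h0.le)
      have h2 : ∀ᶠ u in 𝓝 (-s0), θ < (-u) ^ α :=
        hc.eventually (lt_mem_nhds (by simpa using hs0θ))
      filter_upwards [h2, Iio_mem_nhds (show -s0 < 0 by linarith),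
        Ioi_mem_nhds (show -s0 - 1 < -s0 by linarith)] with u a b c using ⟨c, b, a⟩
    filter_upwards [hlt] with u hu
    have hu' : 0 < -u := neg_pos.mpr hu.2.1
    rw [hmgf, laplace_large h0 hθ hu' hu.2.2, rpow_def_of_pos hu']
  have := hA.eqOn_of_preconnected_of_eventuallyEq hB isPreconnected_Iio
    (show -s0 ∈ Iio (0:ℝ) by simpa using hs0) hev (show -s ∈ Iio (0:ℝ) by simpa using hs)
  rw [hmgf] at this
  simp only [neg_neg] at this
  rw [this, rpow_def_of_pos hs]

lemma fub {h : ℝ → ℝ → ℝ} (hm : AEStronglyMeasurable (Function.uncurry h)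
      ((volume.restrict (Ioi (0:ℝ))).prod (volume.restrict (Ioi (0:ℝ)))))
    (hn : ∀ s, 0 < s → ∀ t, 0 < t → 0 ≤ h s t) (hi : ∀ s, 0 < s → IntegrableOn (h s) (Ioi 0))
    {H K : ℝ → ℝ} (hH : ∀ s, 0 < s → ∫ t in Ioi 0, h s t = H s) (hHi : IntegrableOn H (Ioi 0))
    (hK : ∀ t, 0 < t → ∫ s in Ioi 0, h s t = K t) :
    IntegrableOn K (Ioi 0) ∧ ∫ t in Ioi 0, K t = ∫ s in Ioi 0, H s := by
  have hI : Integrable (Function.uncurry h)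
      ((volume.restrict (Ioi (0:ℝ))).prod (volume.restrict (Ioi (0:ℝ)))) := by
    rw [integrable_prod_iff hm]
    refine ⟨ae_Ioi_of fun s hs => hi s hs, hHi.congr (ae_Ioi_of fun s hs => ?_)⟩
    rw [← hH s hs]
    exact setIntegral_congr_fun measurableSet_Ioi fun t ht =>
      (Real.norm_of_nonneg (hn s hs t ht)).symm
  constructor
  · exact hI.integral_prod_right.congr (ae_Ioi_of fun t ht => hK t ht)
  · have := integral_integral_swap hI
    rw [setIntegral_congr_fun measurableSet_Ioi (fun t ht => (hK t ht).symm), ← this]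
    exact setIntegral_congr_fun measurableSet_Ioi fun t ht => hH t ht

lemma stieltjes {α θ p : ℝ} (h0 : 0 < α) (hθ : 0 < θ) (hp : 0 < p) (hpα : p < α) :
    IntegrableOn (fun s : ℝ => s ^ (p - 1) * (θ / (s ^ α + θ))) (Ioi 0) ∧
    ∫ s in Ioi (0:ℝ), s ^ (p - 1) * (θ / (s ^ α + θ))
      = θ ^ (p / α) * (1 / α) * Gamma (p / α) * Gamma (1 - p / α) := by
  have hq : 0 < 1 - p / α := by
    have : p / α < 1 := (div_lt_one h0).mpr hpα
    linarith
  have key := fub (h := fun v s => s ^ (p - 1) * (θ * exp (-(v * (s ^ α + θ)))))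
    (H := fun v => (θ * (1 / α) * Gamma (p / α)) * (v ^ (1 - p / α - 1) * exp (-(θ * v))))
    (K := fun s => s ^ (p - 1) * (θ / (s ^ α + θ))) ?_ ?_ ?_ ?_ ?_ ?_
  · refine ⟨key.1, key.2.trans ?_⟩
    rw [integral_const_mul, integral_rpow_mul_exp_neg_mul_Ioi hq hθ, one_div θ, inv_rpow hθ.le,
      rpow_sub hθ, rpow_one]
    have : 0 < θ ^ (p / α) := by positivity
    field_simp
  · refine Measurable.aestronglyMeasurable ?_
    unfold Function.uncurry
    fun_prop
  · intro v hv s hs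
    positivity
  · intro v hv
    have := (integrableOn_rpow_mul_exp_neg_mul_rpow (p := α) (s := p - 1) (b := v)
      (by linarith) h0 hv).const_mul (θ * exp (-(v * θ)))
    refine this.congr (ae_Ioi_of fun s hs => ?_)
    simp only
    rw [show -(v * (s ^ α + θ)) = -(v * θ) + -v * s ^ α by ring, exp_add]
    ring
  · intro v hv
    have := integral_rpow_mul_exp_neg_mul_rpow (p := α) (q := p - 1) (b := v) h0 (by linarith) hv
    have e : ∀ s : ℝ, s ^ (p - 1) * (θ * exp (-(v * (s ^ α + θ))))
        = (θ * exp (-(v * θ))) * (s ^ (p - 1) * exp (-v * s ^ α)) := fun s => by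
      rw [show -(v * (s ^ α + θ)) = -(v * θ) + -v * s ^ α by ring, exp_add]
      ring
    simp only [e]
    rw [integral_const_mul, this, sub_add_cancel, show 1 - p / α - 1 = -p / α by ring,
      mul_comm v θ]
    ring
  · exact (integrableOn_gammaKernel hq hθ).const_mul _
  · intro s hs
    have hb : 0 < s ^ α + θ := by positivity
    have := integral_rpow_mul_exp_neg_mul_Ioi one_pos hb
    simp only [sub_self, rpow_zero, one_mul, rpow_one, Gamma_one, mul_one] at this
    rw [integral_const_mul, integral_const_mul]
    simp only [mul_comm _ (s ^ α + θ)]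
    rw [this]
    ring

lemma moment {α θ p : ℝ} (h0 : 0 < α) (h1 : α ≤ 1) (hθ : 0 < θ) (hp : 0 < p) (hpα : p < α) :
    IntegrableOn (fun t : ℝ => t ^ (-p) * mlf α θ t) (Ioi 0) ∧
    ∫ t in Ioi (0:ℝ), t ^ (-p) * mlf α θ t
      = θ ^ (p / α) * Gamma (1 + p / α) * Gamma (1 - p / α) / Gamma (1 + p) := by
  have hgp := Gamma_pos_of_pos hp
  obtain ⟨hi, hv⟩ := stieltjes h0 hθ hp hpα
  have key := fub (h := fun s t => s ^ (p - 1) * (mlf α θ t * exp (-(s * t))))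
    (H := fun s => s ^ (p - 1) * (θ / (s ^ α + θ)))
    (K := fun t => Gamma p * (t ^ (-p) * mlf α θ t)) ?_ ?_ ?_ ?_ hi ?_
  · rw [hv, integral_const_mul] at key
    constructor
    · refine (key.1.const_mul (1 / Gamma p)).congr (ae_of_all _ fun t => ?_)
      simp only
      field_simp
    · have hpa : p / α ≠ 0 := by positivity
      rw [add_comm 1 (p / α), Gamma_add_one hpa, add_comm 1 p, Gamma_add_one hp.ne',
        eq_div_iff (by positivity)]
      linear_combination p * key.2
  · refine AEStronglyMeasurable.mul (f := fun x : ℝ × ℝ => x.1 ^ (p - 1)) (by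
      refine Measurable.aestronglyMeasurable ?_
      fun_prop) ?_
    refine AEStronglyMeasurable.mul (f := fun x : ℝ × ℝ => mlf α θ x.2) ?_ (by
      refine Measurable.aestronglyMeasurable ?_
      fun_prop)
    exact (mlf_aesm h0 h1 hθ).comp_snd
  · intro s hs t ht
    have := mlf_nonneg h0 h1 hθ ht
    positivity
  · intro s hs
    exact (mlf_exp_integrable h0 h1 hθ hs).const_mul _
  · intro s hs
    rw [integral_const_mul, laplace_all h0 h1 hθ hs]
  · intro t ht
    have e : ∀ s : ℝ, s ^ (p - 1) * (mlf α θ t * exp (-(s * t)))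
        = mlf α θ t * (s ^ (p - 1) * exp (-(t * s))) := fun s => by rw [mul_comm s t]; ring
    simp only [e]
    rw [integral_const_mul, integral_rpow_mul_exp_neg_mul_Ioi hp ht, one_div, inv_rpow ht.le,
      rpow_neg ht.le]
    ring

lemma fatou_integrable {G : ℕ → ℝ → ℝ} {f : ℝ → ℝ} {μ : Measure ℝ} {C : ℝ}
    (hGf : ∀ᵐ x ∂μ, Tendsto (fun (n : ℕ) ↦ G n x) atTop (𝓝 (f x)))
    (hG : ∀ n, Integrable (G n) μ) (hC : ∀ n, ∫ x, ‖G n x‖ ∂μ ≤ C) : Integrable f μ := by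
  refine integrable_of_tendsto hGf (fun n => (hG n).1) (ne_top_of_le_ne_top
    (ENNReal.ofReal_ne_top (r := C)) ?_)
  refine liminf_le_of_frequently_le' (Frequently.of_forall fun n => ?_)
  rw [← ofReal_integral_norm_eq_lintegral_enorm (hG n)]
  exact ENNReal.ofReal_le_ofReal (hC n)

lemma tendsto_one_div_succ : Tendsto (fun n : ℕ => 1 / ((n:ℝ) + 1)) atTop (𝓝 0) :=
  tendsto_one_div_add_atTop_nhds_zero_nat

lemma mlf_total {α θ : ℝ} (h0 : 0 < α) (h1 : α ≤ 1) (hθ : 0 < θ) :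
    IntegrableOn (mlf α θ) (Ioi 0) ∧ ∫ t in Ioi (0:ℝ), mlf α θ t = 1 := by
  have hs : ∀ n : ℕ, 0 < 1 / ((n:ℝ) + 1) := fun n => by positivity
  have hlim : ∀ t : ℝ, Tendsto (fun n : ℕ => mlf α θ t * exp (-(1 / ((n:ℝ) + 1) * t))) atTop
      (𝓝 (mlf α θ t)) := fun t => by
    have : Tendsto (fun n : ℕ => mlf α θ t * exp (-(1 / ((n:ℝ) + 1) * t))) atTop
      (𝓝 (mlf α θ t * exp (-(0 * t)))) :=
      ((continuous_exp.tendsto _).comp (tendsto_one_div_succ.mul_const t).neg).const_mul _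
    simpa using this
  have hi : IntegrableOn (mlf α θ) (Ioi 0) := by
    refine fatou_integrable (C := 1) (ae_of_all _ hlim)
      (fun n => mlf_exp_integrable h0 h1 hθ (hs n)) fun n => ?_
    rw [setIntegral_congr_fun (g := fun t => mlf α θ t * exp (-(1 / ((n:ℝ) + 1) * t)))
      measurableSet_Ioi, laplace_all h0 h1 hθ (hs n)]
    · have : 0 < (1 / ((n:ℝ) + 1)) ^ α := by positivity
      rw [div_le_one (by positivity)]
      linarith
    · intro t ht
      have := mlf_nonneg h0 h1 hθ ht
      exact Real.norm_of_nonneg (by positivity)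
  refine ⟨hi, ?_⟩
  have hd := tendsto_integral_of_dominated_convergence (μ := volume.restrict (Ioi (0:ℝ)))
    (F := fun (n : ℕ) t => mlf α θ t * exp (-(1 / ((n:ℝ) + 1) * t))) (f := mlf α θ) (mlf α θ)
    (fun n => (mlf_exp_integrable h0 h1 hθ (hs n)).1) hi ?_ (ae_of_all _ hlim)
  · refine tendsto_nhds_unique hd ?_
    simp only [fun n : ℕ => laplace_all h0 h1 hθ (hs n)]
    have hr : Tendsto (fun n : ℕ => (1 / ((n:ℝ) + 1)) ^ α) atTop (𝓝 0) := by
      have := tendsto_one_div_succ.rpow_const (p := α) (Or.inr h0.le)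
      rwa [zero_rpow h0.ne'] at this
    have := (tendsto_const_nhds (x := θ)).div (hr.add_const θ) (by simpa using hθ.ne')
    rw [zero_add, div_self hθ.ne'] at this
    exact this
  · intro n
    refine ae_Ioi_of fun t ht => ?_
    have := mlf_nonneg h0 h1 hθ ht
    rw [Real.norm_of_nonneg (by positivity)]
    refine mul_le_of_le_one_right this (exp_le_one_iff.mpr ?_)
    have : 0 < 1 / ((n:ℝ) + 1) * t := by positivity
    linarith

noncomputable def mlM (α θ p : ℝ) : ℝ :=
  θ ^ (p / α) * Gamma (1 + p / α) * Gamma (1 - p / α) / Gamma (1 + p)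

lemma mlM_deriv {α θ : ℝ} (hθ : 0 < θ) :
    HasDerivAt (mlM α θ) (log θ / α + eulerMascheroniConstant) 0 := by
  have hG : HasDerivAt Gamma (-eulerMascheroniConstant) 1 := by
    have := hasDerivAt_Gamma_nat 0
    simpa using this
  have hd : HasDerivAt (fun p : ℝ => p / α) (1 / α) 0 := (hasDerivAt_id 0).div_const α
  have e1 : HasDerivAt (fun p : ℝ => θ ^ (p / α)) (log θ * (1 / α)) 0 := by
    have := hd.const_rpow hθ
    simpa using this
  have e2 : HasDerivAt (fun p : ℝ => Gamma (1 + p / α)) (-eulerMascheroniConstant * (1 / α)) 0 :=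
    HasDerivAt.comp (h₂ := Gamma) (h := fun p : ℝ => 1 + p / α) 0 (by simpa using hG)
      (hd.const_add 1)
  have e3 : HasDerivAt (fun p : ℝ => Gamma (1 - p / α)) (-eulerMascheroniConstant * -(1 / α)) 0 :=
    HasDerivAt.comp (h₂ := Gamma) (h := fun p : ℝ => 1 - p / α) 0 (by simpa using hG)
      (hd.const_sub 1)
  have e4 : HasDerivAt (fun p : ℝ => Gamma (1 + p)) (-eulerMascheroniConstant * 1) 0 :=
    HasDerivAt.comp (h₂ := Gamma) (h := fun p : ℝ => 1 + p) 0 (by simpa using hG)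
      ((hasDerivAt_id 0).const_add 1)
  have := ((e1.mul e2).mul e3).div e4 (by simp)
  refine HasDerivAt.congr_deriv (f := mlM α θ) this ?_
  simp
  ring

lemma phi_le {p : ℝ} (hp : 0 < p) {t : ℝ} (ht : 0 < t) : (1 - t ^ (-p)) / p ≤ log t := by
  rw [div_le_iff₀ hp, rpow_def_of_pos ht]
  have := add_one_le_exp (log t * -p)
  linarith

lemma neg_phi_le {p p0 : ℝ} (hp : 0 < p) (hpp : p ≤ p0) {t : ℝ} (ht : 0 < t) :
    -((1 - t ^ (-p)) / p) ≤ t ^ (-p0) / p0 := by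
  have hp0 : 0 < p0 := hp.trans_le hpp
  have hx : 0 < t ^ (-p0) := by positivity
  have hb := rpow_one_add_le_one_add_mul_self (s := t ^ (-p0) - 1) (p := p / p0) (by linarith)
    (by positivity) ((div_le_one hp0).mpr hpp)
  rw [add_sub_cancel, ← rpow_mul ht.le, show -p0 * (p / p0) = -p by field_simp] at hb
  have : t ^ (-p) - 1 ≤ p / p0 * t ^ (-p0) := by
    have : 0 < p / p0 := by positivity
    linarith
  rw [← neg_div, neg_sub, div_le_iff₀ hp]
  refine this.trans_eq ?_
  ring

lemma phi_tendsto {p : ℕ → ℝ} (hp : ∀ n, 0 < p n) (hlim : Tendsto p atTop (𝓝 0)) {t : ℝ}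
    (ht : 0 < t) : Tendsto (fun n => (1 - t ^ (-p n)) / p n) atTop (𝓝 (log t)) := by
  have h : HasDerivAt (fun q : ℝ => t ^ (-q)) (-log t) 0 := by
    have := (hasDerivAt_neg (0:ℝ)).const_rpow ht
    simpa using this
  have hl : Tendsto p atTop (𝓝[≠] 0) :=
    tendsto_nhdsWithin_iff.mpr ⟨hlim, Eventually.of_forall fun n => (hp n).ne'⟩
  have := ((hasDerivAt_iff_tendsto_slope.mp h).comp hl).neg
  rw [neg_neg] at this
  refine this.congr fun n => ?_
  simp [slope_def_field]
  rw [← neg_div, neg_sub]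

lemma mlM_tendsto {α θ : ℝ} (hθ : 0 < θ) {p : ℕ → ℝ} (hp : ∀ n, 0 < p n)
    (hlim : Tendsto p atTop (𝓝 0)) : Tendsto (fun n => (1 - mlM α θ (p n)) / p n) atTop
      (𝓝 (-(log θ / α + eulerMascheroniConstant))) := by
  have hl : Tendsto p atTop (𝓝[≠] 0) :=
    tendsto_nhdsWithin_iff.mpr ⟨hlim, Eventually.of_forall fun n => (hp n).ne'⟩
  have := ((hasDerivAt_iff_tendsto_slope.mp (mlM_deriv (α := α) hθ)).comp hl).neg
  refine this.congr fun n => ?_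
  have h0 : mlM α θ 0 = 1 := by simp [mlM]
  simp [slope_def_field, h0]
  rw [← neg_div, neg_sub]

lemma log_mlf {α θ : ℝ} (h0 : 0 < α) (h1 : α ≤ 1) (hθ : 0 < θ) :
    IntegrableOn (fun t => log t * mlf α θ t) (Ioi 0) ∧
    ∫ t in Ioi (0:ℝ), log t * mlf α θ t = -(log θ / α + eulerMascheroniConstant) := by
  obtain ⟨hfi, hf1⟩ := mlf_total h0 h1 hθ
  let p0 := α / 2
  let p : ℕ → ℝ := fun n => p0 * (1 / ((n:ℝ) + 1))
  have hp0 : 0 < p0 := half_pos h0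
  have hp0α : p0 < α := half_lt_self h0
  have hp : ∀ n, 0 < p n := fun n => by positivity
  have hple : ∀ n, p n ≤ p0 := fun n => by
    refine mul_le_of_le_one_right hp0.le ?_
    rw [div_le_one (by positivity)]
    have : (0:ℝ) ≤ n := by positivity
    linarith
  have hplim : Tendsto p atTop (𝓝 0) := by
    have := tendsto_one_div_succ.const_mul p0
    rwa [mul_zero] at this
  let G : ℕ → ℝ → ℝ := fun n t => (1 - t ^ (-p n)) / p n * mlf α θ t
  have hm := fun n => moment h0 h1 hθ (hp n) ((hple n).trans_lt hp0α)
  have hm0 := moment h0 h1 hθ hp0 hp0α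
  have hGe : ∀ n, G n = fun t => (1 / p n) * (mlf α θ t - t ^ (-p n) * mlf α θ t) := fun n => by
    funext t
    simp only [G]
    ring
  have hGi : ∀ n, Integrable (G n) (volume.restrict (Ioi 0)) := fun n => by
    rw [hGe]
    exact (hfi.sub (hm n).1).const_mul _
  have hGint : ∀ n, ∫ t in Ioi (0:ℝ), G n t = (1 - mlM α θ (p n)) / p n := fun n => by
    rw [hGe, integral_const_mul, integral_sub hfi (hm n).1, hf1, (hm n).2, mlM]
    ring
  have hGlim : ∀ᵐ t ∂(volume.restrict (Ioi (0:ℝ))),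
      Tendsto (fun n => G n t) atTop (𝓝 (log t * mlf α θ t)) :=
    ae_Ioi_of fun t ht => (phi_tendsto hp hplim ht).mul_const _
  have hMt := mlM_tendsto (α := α) hθ hp hplim
  let D : ℝ → ℝ := fun t => (1 / p0) * (t ^ (-p0) * mlf α θ t)
  have hD : Integrable D (volume.restrict (Ioi 0)) := hm0.1.const_mul _
  have hDn : ∀ t, 0 < t → 0 ≤ D t := fun t ht => by
    have := mlf_nonneg h0 h1 hθ ht
    simp only [D]; positivity
  have hGlow : ∀ n t, 0 < t → -G n t ≤ D t := fun n t ht => by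
    have h := mul_le_mul_of_nonneg_right (neg_phi_le (hp n) (hple n) ht) (mlf_nonneg h0 h1 hθ ht)
    calc -G n t = -((1 - t ^ (-p n)) / p n) * mlf α θ t := by simp only [G]; ring
      _ ≤ _ := h
      _ = D t := by simp only [D]; ring
  obtain ⟨C, hC⟩ := hMt.bddAbove_range
  have hint : IntegrableOn (fun t => log t * mlf α θ t) (Ioi 0) := by
    refine fatou_integrable (C := C + 2 * ∫ t in Ioi (0:ℝ), D t) hGlim hGi fun n => ?_
    calc ∫ t in Ioi (0:ℝ), ‖G n t‖ ≤ ∫ t in Ioi (0:ℝ), (G n t + 2 * D t) := by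
          refine integral_mono_ae (hGi n).norm ((hGi n).add (hD.const_mul 2))
            (ae_Ioi_of fun t ht => ?_)
          simp only
          rw [Real.norm_eq_abs, abs_le']
          constructor <;> linarith [hGlow n t ht, hDn t ht]
      _ = (1 - mlM α θ (p n)) / p n + 2 * ∫ t in Ioi (0:ℝ), D t := by
          rw [integral_add (hGi n) (hD.const_mul 2), hGint, integral_const_mul]
      _ ≤ _ := by
          gcongr
          exact hC ⟨n, rfl⟩
  refine ⟨hint, ?_⟩
  have hd := tendsto_integral_of_dominated_convergence (μ := volume.restrict (Ioi (0:ℝ)))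
    (F := G) (f := fun t => log t * mlf α θ t) (fun t => ‖log t * mlf α θ t‖ + D t)
    (fun n => (hGi n).1) (hint.norm.add hD) ?_ hGlim
  · refine tendsto_nhds_unique hd ?_
    simp only [hGint]
    exact hMt
  · intro n
    refine ae_Ioi_of fun t ht => ?_
    have hup : G n t ≤ log t * mlf α θ t :=
      mul_le_mul_of_nonneg_right (phi_le (hp n) ht) (mlf_nonneg h0 h1 hθ ht)
    have h2 := le_abs_self (log t * mlf α θ t)
    have h3 := abs_nonneg (log t * mlf α θ t)
    rw [Real.norm_eq_abs, Real.norm_eq_abs, abs_le']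
    constructor <;> linarith [hGlow n t ht, hDn t ht]

theorem stmt13 (α θ : ℝ) (hα : α ∈ Set.Ioc (0:ℝ) 1) (hθ : 0 < θ) :
    IntegrableOn
      (fun t : ℝ => Real.log t * (θ * t ^ (α - 1) * mittagLeffler α α (-θ * t ^ α)))
      (Set.Ioi 0) ∧
    (∫ t in Set.Ioi (0:ℝ),
        Real.log t * (θ * t ^ (α - 1) * mittagLeffler α α (-θ * t ^ α)))
      = -Real.log θ / α - Real.eulerMascheroniConstant := by
  obtain ⟨h1, h2⟩ := log_mlf hα.1 hα.2 hθ
  refine ⟨h1, h2.trans ?_⟩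
  ring
end
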